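/- Let w ∈ F_2. Suppose that for every prime p there exists n_0 such that for all n ≥ n_0 the image of the word map P_{w,p^n}: SL(2,p^n) × SL(2,p^n) → SL(2,p^n) contains every noncentral semisimple element of SL(2,p^n), i.e., every matrix g ∈ SL(2,p^n) with tr(g) ∉ {2, −2}. Then the family of word maps P_{w,q}, with q ranging over all prime powers, is equidistributed. -/

import Mathlib

open Matrix Polynomial

abbrev SL2 (K : Type) [CommRing K] : Type := Matrix.SpecialLinearGroup (Fin 2) K

abbrev PSL2 (K : Type) [CommRing K] : Type := SL2 K ⧸ Subgroup.center (SL2 K)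

/-- Evaluation of a word `w ∈ F₂` at a pair of group elements. -/
def wordEval {G : Type*} [Group G] (w : FreeGroup (Fin 2)) (g₁ g₂ : G) : G :=
  (FreeGroup.lift ![g₁, g₂]) w

/-- The word map `P_{w,G} : G × G → G` for `G = SL(2,K)`. -/
def wordMap (w : FreeGroup (Fin 2)) (K : Type) [CommRing K] :
    SL2 K × SL2 K → SL2 K := fun g => wordEval w g.1 g.2

/-- The point `(tr x, tr xy, tr y)`. -/
def trPoint {K : Type} [CommRing K] (x y : SL2 K) : Fin 3 → K :=
  ![Matrix.trace (x : Matrix (Fin 2) (Fin 2) K),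
    Matrix.trace ((x * y : SL2 K) : Matrix (Fin 2) (Fin 2) K),
    Matrix.trace (y : Matrix (Fin 2) (Fin 2) K)]

/-- `f ∈ ℤ[s,u,t]` is the trace polynomial of the word `w`. -/
def IsTracePolynomial (w : FreeGroup (Fin 2)) (f : MvPolynomial (Fin 3) ℤ) : Prop :=
  ∀ (K : Type) [CommRing K], ∀ x y : SL2 K,
    Matrix.trace ((wordEval w x y : SL2 K) : Matrix (Fin 2) (Fin 2) K) =
      MvPolynomial.eval (trPoint x y) (MvPolynomial.map (Int.castRingHom K) f)

/-- `f : X → Y` is `ε`-equidistributed. -/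
def IsEquidistributed {X Y : Type*} (f : X → Y) (ε : ℝ) : Prop :=
  ∃ Y' : Set Y,
    (1 - ε) * (Nat.card Y) < (Nat.card Y' : ℝ) ∧
    ∀ y ∈ Y',
      |(Nat.card {x : X // f x = y} : ℝ) - (Nat.card X : ℝ) / (Nat.card Y)| <
        ε * (Nat.card X) / (Nat.card Y)

/-- The family of word maps on `SL(2,p^n)` is `p`-equidistributed. -/
def IsPEquidistributed (w : FreeGroup (Fin 2)) (p : ℕ) (hp : p.Prime) : Prop :=
  letI : Fact p.Prime := ⟨hp⟩
  ∃ ε : ℕ → ℝ,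
    Filter.Tendsto (fun n : ℕ => ε (p ^ n)) Filter.atTop (nhds 0) ∧
    ∀ᶠ n : ℕ in Filter.atTop,
      IsEquidistributed (wordMap w (GaloisField p n)) (ε (p ^ n))

/-- The family of word maps on `SL(2,q)`, `q` ranging over all prime powers,
is equidistributed. -/
def IsEquidistributedFamily (w : FreeGroup (Fin 2)) : Prop :=
  ∃ ε : ℕ → ℝ,
    Filter.Tendsto ε Filter.atTop (nhds 0) ∧
    ∀ (p : ℕ) (hp : p.Prime),
      letI : Fact p.Prime := ⟨hp⟩
      ∀ᶠ n : ℕ in Filter.atTop,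
        IsEquidistributed (wordMap w (GaloisField p n)) (ε (p ^ n))

/-- Reduction of an integral polynomial mod `p`. -/
noncomputable def reduceMod (p : ℕ) (P : MvPolynomial (Fin 3) ℤ) : MvPolynomial (Fin 3) (ZMod p) :=
  MvPolynomial.map (Int.castRingHom (ZMod p)) P

/-- `P = h ∘ Q` with `deg Q ≥ 1`, `deg h ≥ 2`. -/
def IsCompositePoly (F : Type) [CommRing F] (P : MvPolynomial (Fin 3) F) : Prop :=
  ∃ (Q : MvPolynomial (Fin 3) F) (h : Polynomial F),
    1 ≤ Q.totalDegree ∧ 2 ≤ h.natDegree ∧ P = Polynomial.aeval Q h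

def IsPComposite (p : ℕ) (P : MvPolynomial (Fin 3) ℤ) : Prop :=
  IsCompositePoly (ZMod p) (reduceMod p P)

/-- `h` is a permutation polynomial of every finite extension of `F_p`. -/
def IsPermAllExt (p : ℕ) (h : Polynomial (ZMod p)) : Prop :=
  ∀ (K : Type) [Field K] [Algebra (ZMod p) K] [Finite K],
    Function.Bijective fun z : K => Polynomial.aeval z h

def IsPSpecial (p : ℕ) (P : MvPolynomial (Fin 3) ℤ) : Prop :=
  IsPComposite p P ∧
    ∃ (Q : MvPolynomial (Fin 3) (ZMod p)) (h : Polynomial (ZMod p)),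
      1 ≤ Q.totalDegree ∧ 2 ≤ h.natDegree ∧
      reduceMod p P = Polynomial.aeval Q h ∧ IsPermAllExt p h

def AlmostNoncomposite (P : MvPolynomial (Fin 3) ℤ) : Prop :=
  ∀ p : ℕ, p.Prime → ¬ IsPComposite p P ∨ IsPSpecial p P

/-- The reduced word `x^{a₁}y^{b₁} ⋯ x^{a_r}y^{b_r}`. -/
def wordOf {r : ℕ} (a b : Fin r → ℤ) : FreeGroup (Fin 2) :=
  (List.ofFn fun i : Fin r =>
    FreeGroup.of (0 : Fin 2) ^ a i * FreeGroup.of (1 : Fin 2) ^ b i).prod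


section Stepanov
open Module

theorem stp_rank {K : Type*} [Field K] {R : Type*} [CommRing R] [IsDomain R] [Algebra K R]
    (F : ℕ → Submodule K R) (hmono : Monotone F)
    (hmul : ∀ a b x y, x ∈ F a → y ∈ F b → x * y ∈ F (a + b))
    (hex : ∀ r, ∃ m, r ∈ F m) (hfin : ∀ m, FiniteDimensional K (F m)) (e c : ℕ)
    (hlow : ∀ m, e * (m + 1) ≤ finrank K (F m) + c)
    (hup : ∀ m, finrank K (F m) ≤ e * (m + 1))
    (m : ℕ) (g : R) (hg : g ≠ 0) (hgm : g ∈ F m) (ν : Type*) [Fintype ν]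
    (ψ : R →ₗ[K] (ν → K)) (hψ : Function.Surjective ψ) (hk : ∀ r, ψ (g * r) = 0) :
    Fintype.card ν ≤ e * m + c := by
  classical
  choose r hr using fun i : ν => hψ (Pi.single i 1)
  choose M0 hM0 using hex
  obtain ⟨M, hM⟩ : ∃ M, ∀ i, M0 (r i) ≤ M :=
    ⟨Finset.univ.sup fun i => M0 (r i), fun i => Finset.le_sup (f := fun i => M0 (r i)) (Finset.mem_univ i)⟩
  have hrM : ∀ i, r i ∈ F (M + m) := fun i => hmono ((hM i).trans (Nat.le_add_right _ _)) (hM0 _)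
  let ψ' : F (M + m) →ₗ[K] (ν → K) := ψ.comp (F (M+m)).subtype
  have hsurj : LinearMap.range ψ' = ⊤ := by
    rw [LinearMap.range_eq_top]
    intro v
    refine ⟨∑ i, v i • ⟨r i, hrM i⟩, ?_⟩
    simp only [ψ', map_sum, map_smul, LinearMap.comp_apply, Submodule.subtype_apply, hr]
    ext j
    simp [Pi.single_apply]
  have h1 := LinearMap.finrank_range_add_finrank_ker ψ'
  rw [hsurj, finrank_top, Module.finrank_fintype_fun_eq_card] at h1
  let μ : F M →ₗ[K] LinearMap.ker ψ' :=
    { toFun := fun x => ⟨⟨g * x, by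
          rw [add_comm]; exact hmul _ _ _ _ hgm x.2⟩, by
          simp [ψ', hk]⟩
      map_add' := fun x y => by ext; simp [mul_add]
      map_smul' := fun a x => by ext; simp }
  have hμ : Function.Injective μ := by
    intro x y hxy
    have : g * x = g * y := congrArg (fun z : LinearMap.ker ψ' => ((z : F (M+m)) : R)) hxy
    exact Subtype.ext (mul_left_cancel₀ hg this)
  have h2 := LinearMap.finrank_le_finrank_of_injective hμ
  have h3 := hlow M
  have h4 := hup (M + m)
  have : e * (M + m + 1) = e * (M + 1) + e * m := by ring
  omega

theorem stp_order {K : Type*} [Field K] {R : Type*} [CommRing R] [IsDomain R] [Algebra K R]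
    (ι : R →ₐ[K] PowerSeries K) (t : R) (ht : ι t = PowerSeries.X)
    (F : ℕ → Submodule K R) (hmono : Monotone F)
    (hmul : ∀ a b x y, x ∈ F a → y ∈ F b → x * y ∈ F (a + b))
    (hex : ∀ r, ∃ m, r ∈ F m) (hfin : ∀ m, FiniteDimensional K (F m)) (e c : ℕ)
    (hlow : ∀ m, e * (m + 1) ≤ finrank K (F m) + c)
    (hup : ∀ m, finrank K (F m) ≤ e * (m + 1))
    (m : ℕ) (g : R) (hg : g ≠ 0) (hgm : g ∈ F m) (N : ℕ)
    (hN : PowerSeries.X ^ N ∣ ι g) : N ≤ e * m + c := by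
  let ψ : R →ₗ[K] (Fin N → K) := LinearMap.pi fun i => (PowerSeries.coeff (i:ℕ)).comp ι.toLinearMap
  have := stp_rank F hmono hmul hex hfin e c hlow hup m g hg hgm (Fin N) ψ ?_ ?_
  · simpa using this
  · intro v
    refine ⟨∑ i, v i • t ^ (i:ℕ), ?_⟩
    ext j
    simp [ψ, ht, PowerSeries.coeff_X_pow, Fin.val_inj]
  · intro r
    ext j
    simp only [ψ, LinearMap.pi_apply, LinearMap.comp_apply, AlgHom.toLinearMap_apply, map_mul, Pi.zero_apply]
    exact (PowerSeries.X_pow_dvd_iff.1 (hN.mul_right _)) _ j.2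

theorem stp_point {K : Type*} [Field K] {R : Type*} [CommRing R] [IsDomain R] [Algebra K R]
    (F : ℕ → Submodule K R) (hmono : Monotone F)
    (hmul : ∀ a b x y, x ∈ F a → y ∈ F b → x * y ∈ F (a + b))
    (hex : ∀ r, ∃ m, r ∈ F m) (hfin : ∀ m, FiniteDimensional K (F m)) (e c : ℕ)
    (hlow : ∀ m, e * (m + 1) ≤ finrank K (F m) + c)
    (hup : ∀ m, finrank K (F m) ≤ e * (m + 1))
    (m : ℕ) (g : R) (hg : g ≠ 0) (hgm : g ∈ F m) (ν : Type*) [Fintype ν]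
    (φ : ν → (R →ₐ[K] K)) (hφ : Function.Injective φ)
    (hN : ∀ i, φ i g = 0) : Fintype.card ν ≤ e * m + c := by
  let ψ : R →ₗ[K] (ν → K) := LinearMap.pi fun i => (φ i).toLinearMap
  refine stp_rank F hmono hmul hex hfin e c hlow hup m g hg hgm ν ψ ?_ ?_
  · have hli : LinearIndependent K (fun i => (φ i).toLinearMap) :=
      (linearIndependent_algHom_toLinearMap K R K).comp φ hφ
    rw [← LinearMap.range_eq_top]
    by_contra hne
    obtain ⟨f, hf, hf2⟩ := Submodule.exists_le_ker_of_lt_top _ (lt_top_iff_ne_top.2 hne)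
    classical
    apply hf
    have key : ∀ v, f v = ∑ i, v i * f (Pi.single i 1) := by
      intro v
      conv_lhs => rw [← Finset.univ_sum_single v]
      rw [map_sum]
      refine Finset.sum_congr rfl fun i _ => ?_
      rw [← smul_eq_mul, ← map_smul, ← Pi.single_smul]; simp
    have h0 := Fintype.linearIndependent_iff.1 hli (fun i => f (Pi.single i 1)) ?_
    · ext i
      simpa using h0 i
    · ext r
      have : f (ψ r) = 0 := hf2 ⟨r, rfl⟩
      rw [key] at this
      simpa [ψ, mul_comm] using this
  · intro r
    ext j
    simp [ψ, hN]

end Stepanov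

section Stepanov2
open Module

theorem stp_orders {K : Type*} [Field K] {R : Type*} [CommRing R] [Algebra K R]
    (ι : R →ₐ[K] PowerSeries K) (hι : Function.Injective ι) (V : Submodule K R)
    (B : ℕ) (hB : ∀ g ∈ V, g ≠ 0 → ∀ N, PowerSeries.X ^ N ∣ ι g → N ≤ B) :
    ∃ O : Finset ℕ, finrank K V ≤ O.card ∧ ∀ o ∈ O, ∃ s ∈ V, (ι s).order = (o : ℕ∞) := by
  classical
  refine ⟨(Finset.range (B+1)).filter fun o : ℕ => ∃ s ∈ V, (ι s).order = (o : ℕ∞), ?_, ?_⟩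
  · set O := (Finset.range (B+1)).filter fun o : ℕ => ∃ s ∈ V, (ι s).order = (o : ℕ∞) with hO
    let ψ : V →ₗ[K] (O → K) :=
      (LinearMap.pi fun i : O => (PowerSeries.coeff (i:ℕ)).comp ι.toLinearMap).comp V.subtype
    have hψ : Function.Injective ψ := by
      rw [← LinearMap.ker_eq_bot, LinearMap.ker_eq_bot']
      intro v hv
      by_contra hne
      have hv0 : (v : R) ≠ 0 := fun h => hne (Subtype.ext h)
      have hi0 : ι v ≠ 0 := fun h => hv0 (hι (by rw [h, map_zero]))
      have hord : ((ι v).order.toNat : ℕ∞) = (ι v).order :=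
        ENat.natCast_toNat (by rwa [Ne, PowerSeries.order_eq_top])
      have hmem : (ι v).order.toNat ∈ O := by
        rw [hO, Finset.mem_filter, Finset.mem_range]
        refine ⟨Nat.lt_succ_of_le (hB v v.2 hv0 _ ?_), v, v.2, hord.symm⟩
        exact PowerSeries.X_pow_order_dvd
      have := congrFun hv ⟨_, hmem⟩
      exact PowerSeries.coeff_order hi0 this
    have := LinearMap.finrank_le_finrank_of_injective hψ
    simpa using this
  · intro o ho
    exact (Finset.mem_filter.1 ho).2

theorem stp_main {K : Type*} [Field K] [Fintype K] {R : Type*} [CommRing R] [IsDomain R] [Algebra K R]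
    (ι : R →ₐ[K] PowerSeries K) (hι : Function.Injective ι) (t : R) (ht : ι t = PowerSeries.X)
    (F : ℕ → Submodule K R) (hmono : Monotone F) (hone : (1:R) ∈ F 0)
    (hmul : ∀ a b x y, x ∈ F a → y ∈ F b → x * y ∈ F (a + b))
    (hex : ∀ r, ∃ m, r ∈ F m) (hfin : ∀ m, FiniteDimensional K (F m)) (e c : ℕ)
    (hlow : ∀ m, e * (m + 1) ≤ finrank K (F m) + c)
    (hup : ∀ m, finrank K (F m) ≤ e * (m + 1))
    (p : ℕ) [Fact p.Prime] [CharP K p] (a b : ℕ) (hq : Fintype.card K = p ^ a * p ^ b)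
    (l m : ℕ) (hl : e * l + c < p ^ b)
    (hpig : e * (l * p ^ a + m + 1) + c * finrank K (F l) < e * (m+1) * finrank K (F l))
    (ν : Type*) [Fintype ν]
    (φ : ν → (R →ₐ[K] K)) (hφ : Function.Injective φ) :
    Fintype.card ν ≤ e * (l + m * p ^ b) + c := by
  classical
  have : CharP R p := charP_of_injective_algebraMap (algebraMap K R).injective p
  have hpow : ∀ i x n, x ∈ F i → x ^ n ∈ F (i * n) := by
    intro i x n hx
    induction n with
    | zero => simpa using hone
    | succ n ih => rw [pow_succ, Nat.mul_succ]; exact hmul _ _ _ _ ih hx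
  obtain ⟨O, hOc, hO⟩ := stp_orders ι hι (F m) (e * m + c) (fun g hg hg0 N hN =>
    stp_order ι t ht F hmono hmul hex hfin e c hlow hup m g hg0 hg N hN)
  choose s hsF hso using fun o : O => hO o o.2
  let Φ : (O → F l) →+ F (l * p ^ a + m) :=
    { toFun := fun d => ∑ o, ⟨(d o : R) ^ p ^ a * s o, hmul _ _ _ _ (hpow _ _ _ (d o).2) (hsF o)⟩
      map_zero' := by
        refine Finset.sum_eq_zero fun o _ => Subtype.ext ?_
        simp [(Fact.out : p.Prime).ne_zero]
      map_add' := fun x y => by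
        rw [← Finset.sum_add_distrib]
        refine Finset.sum_congr rfl fun o _ => Subtype.ext ?_
        simp [add_pow_char_pow, add_mul] }
  have : ∀ i, Finite (F i) := fun i => Module.finite_of_finite K
  let _inst : ∀ i, Fintype (F i) := fun i => Fintype.ofFinite _
  have hnot : ¬ Function.Injective Φ := by
    intro hinj
    have h1 := Fintype.card_le_of_injective Φ hinj
    rw [Fintype.card_fun, Module.card_eq_pow_finrank (K := K), Module.card_eq_pow_finrank (K := K) (V := F (l * p ^ a + m)),
      ← pow_mul, Fintype.card_coe] at h1
    have h2 := (Nat.pow_le_pow_iff_right (Fintype.one_lt_card (α := K))).1 h1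
    have h3 := hup (l * p ^ a + m)
    have h4 : finrank K (F l) * (finrank K (F m)) ≤ finrank K (F l) * O.card := Nat.mul_le_mul_left _ hOc
    have h5 := Nat.mul_le_mul_left (finrank K (F l)) (hlow m)
    nlinarith
  rw [injective_iff_map_eq_zero] at hnot
  push Not at hnot
  obtain ⟨d, hd, hd0⟩ := hnot
  have hd' : ∑ o, (d o : R) ^ p ^ a * s o = 0 := by
    have := congrArg (fun z : F (l * p ^ a + m) => (z : R)) hd
    simpa [Φ] using this
  set h : R := ∑ o, (d o : R) * s o ^ p ^ b with hh
  have hhF : h ∈ F (l + m * p ^ b) := Submodule.sum_mem _ fun o _ =>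
    hmul _ _ _ _ (d o).2 (hpow _ _ _ (hsF o))
  have hh0 : h ≠ 0 := by
    intro h0
    have hex : ∃ o, d o ≠ 0 := by
      by_contra hcon
      push Not at hcon
      exact hd0 (funext hcon)
    obtain ⟨o, ho, hmin⟩ := Finset.exists_min_image (Finset.univ.filter fun o => d o ≠ 0) (fun o : O => (o:ℕ))
      (by obtain ⟨o, ho⟩ := hex; exact ⟨o, by simpa using ho⟩)
    simp only [Finset.mem_filter, Finset.mem_univ, true_and] at ho hmin
    have hdo : (d o : R) ≠ 0 := fun h => ho (Subtype.ext h)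
    obtain ⟨u, hu⟩ : PowerSeries.X ^ (o:ℕ) ∣ ι (s o) := by
      have := PowerSeries.X_pow_order_dvd (φ := ι (s o))
      rwa [hso o] at this
    have hu0 : PowerSeries.coeff 0 u ≠ 0 := by
      have h1 : ι (s o) ≠ 0 := by
        rw [Ne, ← PowerSeries.order_eq_top, hso]; simp
      have h2 := PowerSeries.coeff_order h1
      rw [hso, ENat.toNat_natCast, hu] at h2
      have := PowerSeries.coeff_X_pow_mul u (o:ℕ) 0
      rw [zero_add] at this
      rwa [this] at h2
    have hdvd : PowerSeries.X ^ (p ^ b * ((o:ℕ) + 1)) ∣ ι (d o) * ι (s o) ^ p ^ b := by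
      have h1 : ι (d o) * ι (s o) ^ p ^ b = - ∑ o' ∈ Finset.univ.erase o, ι (d o') * ι (s o') ^ p ^ b := by
        have : ι h = 0 := by rw [h0, map_zero]
        rw [hh, map_sum, ← Finset.add_sum_erase _ _ (Finset.mem_univ o)] at this
        simp only [map_mul, map_pow] at this
        exact eq_neg_of_add_eq_zero_left this
      rw [h1, dvd_neg]
      refine Finset.dvd_sum fun o' ho' => ?_
      by_cases hz : d o' = 0
      · simp [hz]
      have hlt : (o:ℕ) + 1 ≤ o' := Nat.lt_of_le_of_ne (hmin o' hz) (fun h => (Finset.ne_of_mem_erase ho') (Subtype.ext h.symm))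
      have h3 : PowerSeries.X ^ (o':ℕ) ∣ ι (s o') := by
        have := PowerSeries.X_pow_order_dvd (φ := ι (s o'))
        rwa [hso o'] at this
      refine Dvd.dvd.mul_left ?_ _
      refine dvd_trans ?_ (pow_dvd_pow_of_dvd h3 _)
      rw [← pow_mul]
      exact pow_dvd_pow _ (by rw [mul_comm]; exact Nat.mul_le_mul_right _ hlt)
    rw [hu, mul_pow, ← pow_mul, mul_add, mul_one, pow_add, mul_left_comm, mul_comm (o:ℕ)] at hdvd
    have h4 := (mul_dvd_mul_iff_left (pow_ne_zero _ PowerSeries.X_ne_zero)).1 hdvd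
    have hun : IsUnit (u ^ p ^ b) := by
      apply IsUnit.pow
      rw [PowerSeries.isUnit_iff_constantCoeff]
      rw [PowerSeries.coeff_zero_eq_constantCoeff_apply] at hu0
      exact hu0.isUnit
    have h5 := (hun.dvd_mul_right).1 h4
    have := stp_order ι t ht F hmono hmul ‹_› hfin e c hlow hup l (d o) hdo (d o).2 _ h5
    omega
  refine stp_point F hmono hmul hex hfin e c hlow hup _ h hh0 hhF ν φ hφ ?_
  intro i
  have hz : (φ i h) ^ p ^ a = 0 := by
    rw [hh, map_sum, sum_pow_char_pow]
    have : φ i (∑ o, (d o : R) ^ p ^ a * s o) = 0 := by rw [hd', map_zero]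
    rw [map_sum] at this
    rw [← this]
    refine Finset.sum_congr rfl fun o _ => ?_
    rw [map_mul, map_mul, map_pow, mul_pow, map_pow, ← pow_mul, mul_comm (p^b), ← hq, FiniteField.pow_card]
  exact pow_eq_zero_iff (pow_ne_zero _ (Fact.out : p.Prime).ne_zero) |>.1 hz

end Stepanov2

section Stepanov3
open Module

theorem stp_final {K : Type*} [Field K] [Fintype K] {R : Type*} [CommRing R] [IsDomain R] [Algebra K R]
    (ι : R →ₐ[K] PowerSeries K) (hι : Function.Injective ι) (t : R) (ht : ι t = PowerSeries.X)
    (F : ℕ → Submodule K R) (hmono : Monotone F) (hone : (1:R) ∈ F 0)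
    (hmul : ∀ a b x y, x ∈ F a → y ∈ F b → x * y ∈ F (a + b))
    (hex : ∀ r, ∃ m, r ∈ F m) (hfin : ∀ m, FiniteDimensional K (F m)) (e c : ℕ) (he : 1 ≤ e)
    (hlow : ∀ m, e * (m + 1) ≤ finrank K (F m) + c)
    (hup : ∀ m, finrank K (F m) ≤ e * (m + 1))
    (p : ℕ) [Fact p.Prime] [CharP K p] (a b : ℕ) (hq : Fintype.card K = p ^ a * p ^ b)
    (hab : p ^ a ≤ p ^ b) (ha : (2 * c + 1) * (e * (2 * c + 4)) + c + e + 1 ≤ p ^ a)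
    (ν : Type*) [Fintype ν]
    (φ : ν → (R →ₐ[K] K)) (hφ : Function.Injective φ) :
    Fintype.card ν ≤ Fintype.card K + p ^ b * (1 + e * (2 * c + 4)) := by
  have hcP : c + 1 ≤ p ^ a := le_trans (by generalize (2 * c + 1) * (e * (2 * c + 4)) = z; omega) ha
  have main := stp_main ι hι t ht F hmono hone hmul hex hfin e c hlow hup p a b hq
    ((p ^ b - c - 1) / e) (p ^ a / e + (2 * c + 3)) ?_ ?_ ν φ hφ
  · refine main.trans ?_
    rw [hq]
    have h1 : e * ((p ^ b - c - 1) / e) ≤ p ^ b - c - 1 := Nat.mul_div_le _ _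
    have h2 : e * (p ^ a / e) ≤ p ^ a := Nat.mul_div_le _ _
    have h3 : c + 1 ≤ p ^ b := hcP.trans hab
    have h4 : e * ((p ^ b - c - 1) / e) + c + 1 ≤ p ^ b := by omega
    have h5 := Nat.mul_le_mul_right (p ^ b) h2
    nlinarith
  · have h1 : e * ((p ^ b - c - 1) / e) ≤ p ^ b - c - 1 := Nat.mul_div_le _ _
    have h3 : c + 1 ≤ p ^ b := hcP.trans hab
    omega
  · set l := (p ^ b - c - 1) / e with hl
    set P := p ^ a
    set d := finrank K (F l)
    have h1 : e * (l + 1) ≤ d + c := hlow l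
    have h2 : e * (P / e) ≤ P := Nat.mul_div_le _ _
    have h3 : P < e * (P / e + 1) := Nat.lt_mul_div_succ P (by omega)
    have h4 : p ^ b - c - 1 < e * (l + 1) := Nat.lt_mul_div_succ _ (by omega)
    have h5 : c + 1 ≤ P := hcP
    have h6 : P ≤ e * (l + 1) + c := by omega
    set u := P / e
    zify at *
    generalize (d:ℤ) = d at *
    generalize (l:ℤ) = l at *
    generalize (u:ℤ) = u at *
    generalize (P:ℤ) = P at *
    have hc : (0:ℤ) ≤ c := by positivity
    generalize (c:ℤ) = c at *
    generalize (e:ℤ) = e at *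
    -- set A
    have k1 : P + 1 + (e * (2 * c + 4) - e - c) ≤ e * (u + (2 * c + 3) + 1) - c := by nlinarith
    have k2 : e * (u + (2*c+3) + 1) ≤ P + e * (2*c+4) := by nlinarith
    have k3 : c + 1 ≤ e * (2 * c + 4) - e - c + 1 := by nlinarith
    set A := e * (2 * c + 4) - e - c + 1 with hA
    have k4 : 0 ≤ e * (l + 1) - c := by
      have : 2 * c ≤ P := by nlinarith
      linarith
    have k5 : (P + A) * (e * (l + 1) - c) ≤ (e * (u + (2 * c + 3) + 1) - c) * d :=
      mul_le_mul (by linarith) (by linarith) k4 (by nlinarith)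
    have k6 : A * (P - 2 * c) ≤ A * (e * (l + 1) - c) := 
      mul_le_mul_of_nonneg_left (by linarith) (by linarith)
    have k7 : (c + 1) * P ≤ A * P := mul_le_mul_of_nonneg_right k3 (by linarith)
    have k8 : A * (2 * c) ≤ (e * (2*c+4)) * (2*c) := mul_le_mul_of_nonneg_right (by nlinarith) (by linarith)
    have k9 : P ≤ P * e := by nlinarith
    nlinarith
end Stepanov3

section Curve

theorem branch_minpoly {K : Type*} [Field K] (α : PowerSeries K) (s : K[X][X]) (hs : s.Monic)
    (hα : eval₂ coeToPowerSeries.ringHom α s = 0) :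
    ∃ π : K[X][X], π.Monic ∧ eval₂ coeToPowerSeries.ringHom α π = 0 ∧
      (∀ g, eval₂ coeToPowerSeries.ringHom α g = 0 → π ∣ g) := by
  have hmap : (algebraMap K[X] (PowerSeries K)) = coeToPowerSeries.ringHom := by
    ext x <;> simp [PowerSeries.algebraMap_apply']
  have hint : IsIntegral K[X] α := ⟨s, hs, by rw [hmap]; exact hα⟩
  have : Module.IsTorsionFree K[X] (PowerSeries K) := by
    rw [Module.isTorsionFree_iff_algebraMap_injective, hmap]
    exact coe_injective K
  refine ⟨minpoly K[X] α, minpoly.monic hint, ?_, ?_⟩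
  · have := minpoly.aeval K[X] α
    rwa [aeval_def, hmap] at this
  · intro g hg
    apply minpoly.isIntegrallyClosed_dvd hint
    rwa [aeval_def, hmap]

theorem biv_coeff_swap {A : Type*} [CommRing A] (s : A[X][X]) (i j : ℕ) :
    ((Bivariate.swap s).coeff i).coeff j = (s.coeff j).coeff i := by
  induction s using Polynomial.induction_on' with
  | add a b ha hb => simp [ha, hb]
  | monomial n f =>
    induction f using Polynomial.induction_on' with
    | add a b ha hb => simp [ha, hb]
    | monomial m r =>
      rw [Bivariate.swap_monomial_monomial]
      simp only [coeff_monomial]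
      split_ifs <;> simp_all [coeff_monomial]

theorem biv_deg {A : Type*} [CommRing A] (s : A[X][X]) (D : ℕ) :
    (Bivariate.swap s).natDegree ≤ D ↔ ∀ j, (s.coeff j).natDegree ≤ D := by
  simp only [natDegree_le_iff_coeff_eq_zero]
  constructor
  · intro h j N hN
    rw [← biv_coeff_swap, h N hN, coeff_zero]
  · intro h N hN
    ext j
    rw [biv_coeff_swap, h j N hN, coeff_zero]

theorem biv_deg_factor {A : Type*} [CommRing A] [IsDomain A] (s π : A[X][X]) (hs : s ≠ 0) (h : π ∣ s) (D : ℕ)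
    (hD : ∀ j, (s.coeff j).natDegree ≤ D) (j : ℕ) : (π.coeff j).natDegree ≤ D := by
  obtain ⟨r, rfl⟩ := h
  refine (biv_deg π D).1 ?_ j
  have h1 := (biv_deg _ D).2 hD
  have hs' : Bivariate.swap π * Bivariate.swap r ≠ 0 := by
    rw [← map_mul]; exact (map_ne_zero_iff _ (Bivariate.swap (R := A)).injective).2 hs
  rw [map_mul, natDegree_mul (left_ne_zero_of_mul hs') (right_ne_zero_of_mul hs')] at h1
  omega

theorem branch_dvd {K : Type*} [Field K] (α : PowerSeries K) (s : K[X][X]) (hs : s.Monic)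
    (hα : eval₂ coeToPowerSeries.ringHom α s = 0) (D : ℕ) (hD : ∀ j, (s.coeff j).natDegree ≤ D)
    (hind : ∀ g : K[X][X], g.natDegree < s.natDegree → (∀ j, (g.coeff j).natDegree ≤ D) →
      eval₂ coeToPowerSeries.ringHom α g = 0 → g = 0)
    (g : K[X][X]) (hg : eval₂ coeToPowerSeries.ringHom α g = 0) : s ∣ g := by
  obtain ⟨π, hπ, h0, hdvd⟩ := branch_minpoly α s hs hα
  have h1 := hdvd s hα
  have h2 : s.natDegree ≤ π.natDegree := by
    by_contra hlt
    push Not at hlt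
    exact hπ.ne_zero (hind π hlt (biv_deg_factor s π hs.ne_zero h1 D hD) h0)
  have := eq_of_monic_of_dvd_of_natDegree_le hπ hs h1 h2
  rw [this]; exact hdvd g hg

end Curve

section Curve2
open Module

variable {K : Type*} [Field K] (s : K[X][X]) (D : ℕ)

/-- weight filtration set -/
noncomputable def crvMon (i j : ℕ) : AdjoinRoot s := AdjoinRoot.mk s (C (X ^ i) * X ^ j)

noncomputable def crvF (m : ℕ) : Submodule K (AdjoinRoot s) :=
  Submodule.span K {r | ∃ i j, i + D * j ≤ m ∧ r = crvMon s i j}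

theorem crvMon_mul (i j i' j' : ℕ) : crvMon s i j * crvMon s i' j' = crvMon s (i+i') (j+j') := by
  unfold crvMon
  have : (C (X ^ (i + i')) * X ^ (j + j') : K[X][X]) = (C (X ^ i) * X ^ j) * (C (X ^ i') * X ^ j') := by
    rw [pow_add, pow_add, map_mul]; ring
  rw [this]; exact (map_mul (AdjoinRoot.mk s) _ _).symm

theorem crvF_mono : Monotone (crvF s D) := by
  intro m n h
  apply Submodule.span_mono
  rintro r ⟨i, j, hij, rfl⟩
  exact ⟨i, j, hij.trans h, rfl⟩

theorem crvMon_mem {i j m : ℕ} (h : i + D * j ≤ m) : crvMon s i j ∈ crvF s D m :=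
  Submodule.subset_span ⟨i, j, h, rfl⟩

theorem crvF_one : (1 : AdjoinRoot s) ∈ crvF s D 0 := by
  have := crvMon_mem s D (i := 0) (j := 0) (m := 0) (by simp)
  simpa [crvMon] using this

theorem crvF_mul (a b : ℕ) (x y : AdjoinRoot s) (hx : x ∈ crvF s D a) (hy : y ∈ crvF s D b) :
    x * y ∈ crvF s D (a + b) := by
  have h := Submodule.mul_mem_mul hx hy
  unfold crvF at h
  rw [Submodule.span_mul_span] at h
  refine Submodule.span_mono ?_ h
  rintro r ⟨_, ⟨i, j, h1, rfl⟩, _, ⟨i', j', h2, rfl⟩, rfl⟩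
  exact ⟨i+i', j+j', by rw [mul_add]; omega, crvMon_mul s _ _ _ _⟩

theorem crv_mk_eq (g : K[X][X]) :
    AdjoinRoot.mk s g = g.sum fun j a => a.sum fun i c => c • crvMon s i j := by
  conv_lhs => rw [g.as_sum_support_C_mul_X_pow]
  rw [map_sum, Polynomial.sum]
  refine Finset.sum_congr rfl fun j _ => ?_
  conv_lhs => rw [(g.coeff j).as_sum_support_C_mul_X_pow]
  rw [map_sum, Finset.sum_mul, map_sum, Polynomial.sum]
  refine Finset.sum_congr rfl fun i _ => ?_
  rw [crvMon, map_mul C, mul_assoc, map_mul (AdjoinRoot.mk s), Algebra.smul_def]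
  rfl

theorem crvF_ex (r : AdjoinRoot s) : ∃ m, r ∈ crvF s D m := by
  obtain ⟨g, rfl⟩ := AdjoinRoot.mk_surjective r
  rw [crv_mk_eq]
  refine ⟨g.support.sup fun j => (g.coeff j).natDegree + D * j, ?_⟩
  refine Submodule.sum_mem _ fun j hj => Submodule.sum_mem _ fun i hi => Submodule.smul_mem _ _ ?_
  apply crvMon_mem
  refine le_trans ?_ (Finset.le_sup (f := fun j => (g.coeff j).natDegree + D * j) hj)
  have := le_natDegree_of_mem_supp i hi
  simpa using this

/-- index set of the basis -/
def crvIdx (e m : ℕ) : Finset (ℕ × ℕ) :=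
  ((Finset.range (m+1)) ×ˢ (Finset.range e)).filter fun z => z.1 + D * z.2 ≤ m

theorem crvIdx_le (e m : ℕ) : (crvIdx D e m).card ≤ e * (m + 1) := by
  refine (Finset.card_filter_le _ _).trans ?_
  simp [mul_comm]

theorem crvIdx_ge (e m : ℕ) : e * (m + 1) ≤ (crvIdx D e m).card + D * e ^ 2 := by
  have : (Finset.range (m+1)) ×ˢ (Finset.range e) ⊆ crvIdx D e m ∪
      ((Finset.Ico (m + 1 - D * e) (m+1)) ×ˢ (Finset.range e)) := by
    rintro ⟨i, j⟩ h
    simp only [Finset.mem_product, Finset.mem_range, Finset.mem_union, crvIdx, Finset.mem_filter, Finset.mem_Ico] at h ⊢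
    by_cases hh : i + D * j ≤ m
    · left; exact ⟨h, hh⟩
    · right
      have : D * j ≤ D * e := Nat.mul_le_mul_left _ h.2.le
      omega
  have h2 := (Finset.card_le_card this).trans (Finset.card_union_le _ _)
  simp only [Finset.card_product, Finset.card_range, Nat.card_Ico] at h2
  have h3 : (m + 1 - (m + 1 - D * e)) * e ≤ D * e * e := Nat.mul_le_mul_right _ (by omega)
  nlinarith

variable {s D}

theorem crvF_eq (hs : s.Monic) (he : 1 ≤ s.natDegree) (hD : ∀ j, (s.coeff j).natDegree ≤ D) (m : ℕ) :
    crvF s D m = Submodule.span K (Set.range fun z : crvIdx D s.natDegree m => crvMon s z.1.1 z.1.2) := by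
  apply le_antisymm
  · refine Submodule.span_le.2 ?_
    rintro r ⟨i, j, hij, rfl⟩
    induction j using Nat.strong_induction_on generalizing i with
    | _ j ih =>
      by_cases hj : j < s.natDegree
      · refine Submodule.subset_span ⟨⟨(i, j), ?_⟩, rfl⟩
        simp only [crvIdx, Finset.mem_filter, Finset.mem_product, Finset.mem_range]
        exact ⟨⟨by omega, hj⟩, hij⟩
      · push Not at hj
        obtain ⟨k, rfl⟩ := Nat.exists_eq_add_of_le hj
        have h1 : crvMon s i (s.natDegree + k) = - AdjoinRoot.mk s (C (X ^ i) * X ^ k * ∑ l ∈ Finset.range s.natDegree, C (s.coeff l) * X ^ l) := by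
          rw [crvMon, eq_neg_iff_add_eq_zero, ← map_add, AdjoinRoot.mk_eq_zero]
          refine ⟨C (X ^ i) * X ^ k, ?_⟩
          conv_rhs => rw [hs.as_sum]
          rw [pow_add]; ring
        rw [h1, Finset.mul_sum, map_sum]
        refine Submodule.neg_mem _ (Submodule.sum_mem _ fun l hl => ?_)
        have hl' := Finset.mem_range.1 hl
        rw [(s.coeff l).as_sum_support_C_mul_X_pow]
        rw [map_sum, Finset.sum_mul, Finset.mul_sum, map_sum]
        refine Submodule.sum_mem _ fun u hu => ?_
        have hu' := (le_natDegree_of_mem_supp u hu).trans (hD l)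
        have h2 : AdjoinRoot.mk s (C (X ^ i) * X ^ k * (C (C ((s.coeff l).coeff u) * X ^ u) * X ^ l)) =
            (s.coeff l).coeff u • crvMon s (i + u) (k + l) := by
          have : C (X ^ i) * X ^ k * (C (C ((s.coeff l).coeff u) * X ^ u) * X ^ l) =
            C (C ((s.coeff l).coeff u)) * (C (X ^ (i+u)) * X ^ (k + l)) := by
            simp only [map_mul, pow_add]; ring
          rw [this, map_mul, Algebra.smul_def]; rfl
        rw [h2]
        refine Submodule.smul_mem _ _ (ih (k + l) (by omega) _ ?_)
        obtain ⟨n, hn⟩ := Nat.exists_eq_add_of_lt hl'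
        rw [hn] at hij
        nlinarith
  · refine Submodule.span_le.2 ?_
    rintro r ⟨⟨z, hz⟩, rfl⟩
    exact crvMon_mem s D (Finset.mem_filter.1 hz).2

theorem crvF_indep (hs : s.Monic) (m : ℕ) :
    LinearIndependent K fun z : crvIdx D s.natDegree m => crvMon s z.1.1 z.1.2 := by
  rw [Fintype.linearIndependent_iff]
  intro c hc z
  let g : K[X][X] := ∑ z : crvIdx D s.natDegree m, C (C (c z)) * (C (X ^ z.1.1) * X ^ z.1.2)
  have h1 : AdjoinRoot.mk s g = 0 := by
    rw [← hc, map_sum]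
    refine Finset.sum_congr rfl fun z _ => ?_
    rw [map_mul, Algebra.smul_def]; rfl
  rw [AdjoinRoot.mk_eq_zero] at h1
  have h2 : g = 0 := by
    refine Polynomial.eq_zero_of_dvd_of_degree_lt h1 ?_
    rw [degree_eq_natDegree hs.ne_zero]
    refine lt_of_le_of_lt (degree_sum_le _ _) ?_
    rw [Finset.sup_lt_iff (WithBot.bot_lt_coe _)]
    intro z _
    refine lt_of_le_of_lt (b := ((z.1.2 : ℕ) : WithBot ℕ)) ?_ ?_
    · rw [← mul_assoc, ← map_mul]; exact degree_C_mul_X_pow_le _ _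
    · have := (Finset.mem_product.1 (Finset.mem_filter.1 z.2).1).2
      exact_mod_cast Finset.mem_range.1 this
  have h3 : (g.coeff z.1.2).coeff z.1.1 = c z := by
    simp only [g, finsetSum_coeff, coeff_C_mul, coeff_X_pow]
    rw [Finset.sum_eq_single z]
    · simp
    · intro z' _ hne
      by_cases h5 : z.1.2 = z'.1.2
      · have : z.1.1 ≠ z'.1.1 := fun h => hne (Subtype.ext (Prod.ext h.symm h5.symm))
        simp [h5, coeff_X_pow, this]
      · simp [h5]
    · simp
  rw [← h3, h2]; simp

theorem curve_bound [Fintype K] (hs : s.Monic) (he : 1 ≤ s.natDegree) (hD : ∀ j, (s.coeff j).natDegree ≤ D)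
    (α : PowerSeries K) (hα : eval₂ coeToPowerSeries.ringHom α s = 0)
    (hind : ∀ g : K[X][X], g.natDegree < s.natDegree → (∀ j, (g.coeff j).natDegree ≤ D) →
      eval₂ coeToPowerSeries.ringHom α g = 0 → g = 0)
    (p : ℕ) [Fact p.Prime] [CharP K p] (a b : ℕ) (hq : Fintype.card K = p ^ a * p ^ b)
    (hab : p ^ a ≤ p ^ b)
    (ha : (2 * (D * s.natDegree ^ 2) + 1) * (s.natDegree * (2 * (D * s.natDegree ^ 2) + 4)) + (D * s.natDegree ^ 2) + s.natDegree + 1 ≤ p ^ a) :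
    Nat.card {z : K × K // (s.eval (C z.1)).eval z.2 = 0} ≤
      Fintype.card K + p ^ b * (1 + s.natDegree * (2 * (D * s.natDegree ^ 2) + 4)) := by
  classical
  have hdvd := branch_dvd α s hs hα D hD hind
  let ι : AdjoinRoot s →ₐ[K] PowerSeries K :=
    AdjoinRoot.liftAlgHom s (coeToPowerSeries.algHom K) α (by
      have : ((coeToPowerSeries.algHom K : K[X] →ₐ[K] PowerSeries K) : K[X] →+* PowerSeries K) = coeToPowerSeries.ringHom := by
        ext x <;> simp
      rw [this]; exact hα)
  have hιmk : ∀ g, ι (AdjoinRoot.mk s g) = eval₂ coeToPowerSeries.ringHom α g := by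
    intro g
    have : ((coeToPowerSeries.algHom K : K[X] →ₐ[K] PowerSeries K) : K[X] →+* PowerSeries K) = coeToPowerSeries.ringHom := by
      ext x <;> simp
    rw [← this]
    exact AdjoinRoot.liftAlgHom_mk ..
  have hι : Function.Injective ι := by
    rw [injective_iff_map_eq_zero]
    intro r hr
    obtain ⟨g, rfl⟩ := AdjoinRoot.mk_surjective r
    rw [hιmk] at hr
    exact AdjoinRoot.mk_eq_zero.2 (hdvd g hr)
  have : IsDomain (AdjoinRoot s) := hι.isDomain ι.toRingHom
  let φ : {z : K × K // (s.eval (C z.1)).eval z.2 = 0} → (AdjoinRoot s →ₐ[K] K) := fun z =>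
    AdjoinRoot.liftAlgHom s (aeval z.1.2) z.1.1 (by
      have h := z.2
      rw [← coe_evalRingHom, ← eval₂_at_apply] at h
      simp at h
      have h2 : ((aeval z.1.2 : K[X] →ₐ[K] K) : K[X] →+* K) = evalRingHom z.1.2 := by
        ext x <;> simp
      rw [h2]; exact h)
  have hφ : Function.Injective φ := by
    intro z w hzw
    have h1 := congrArg (fun f : AdjoinRoot s →ₐ[K] K => f (AdjoinRoot.root s)) hzw
    have h2 := congrArg (fun f : AdjoinRoot s →ₐ[K] K => f (AdjoinRoot.of s X)) hzw
    simp only [φ, AdjoinRoot.liftAlgHom_root, AdjoinRoot.liftAlgHom_of, aeval_X] at h1 h2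
    exact Subtype.ext (Prod.ext h1 h2)
  rw [Nat.card_eq_fintype_card]
  have hfr : ∀ m, finrank K (crvF s D m) = (crvIdx D s.natDegree m).card := by
    intro m
    rw [crvF_eq hs he hD, finrank_span_eq_card (crvF_indep hs m), Fintype.card_coe]
  refine stp_final ι hι (AdjoinRoot.mk s (C X)) (by rw [hιmk]; simp) (crvF s D) (crvF_mono s D) (crvF_one s D)
    (crvF_mul s D) (crvF_ex s D) ?_ s.natDegree (D * s.natDegree ^ 2) he ?_ ?_ p a b hq hab ha _ φ hφ
  · intro m
    rw [crvF_eq hs he hD]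
    exact FiniteDimensional.span_of_finite K (Set.finite_range _)
  · intro m; rw [hfr]; exact crvIdx_ge D _ _
  · intro m; rw [hfr]; exact crvIdx_le D _ _

end Curve2

section Hensel

theorem ps_hensel {A : Type*} [CommRing A] (S : (PowerSeries A)[X]) (x : A)
    (h0 : PowerSeries.constantCoeff (S.eval (PowerSeries.C x)) = 0)
    (h1 : IsUnit (PowerSeries.constantCoeff (S.derivative.eval (PowerSeries.C x)))) :
    ∃ α : PowerSeries A, PowerSeries.constantCoeff α = x ∧ S.eval α = 0 := by
  obtain ⟨δ, hδ⟩ := h1.exists_left_inv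
  let f : PowerSeries A → PowerSeries A := fun a => a - PowerSeries.C δ * S.eval a
  let a : ℕ → PowerSeries A := fun n => f^[n] (PowerSeries.C x)
  have ha : ∀ n, a (n+1) = a n - PowerSeries.C δ * S.eval (a n) := fun n =>
    Function.iterate_succ_apply' f n _
  have hd : ∀ b c : PowerSeries A, PowerSeries.X ∣ b - c → ∀ T : (PowerSeries A)[X],
      PowerSeries.X ∣ T.eval b - T.eval c := fun b c hbc T => hbc.trans (sub_dvd_eval_sub b c T)
  have key : ∀ n, PowerSeries.X ∣ a n - PowerSeries.C x ∧ PowerSeries.X ^ (n+1) ∣ S.eval (a n) := by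
    intro n
    induction n with
    | zero => 
      refine ⟨by simp [a], ?_⟩
      rw [zero_add, pow_one, PowerSeries.X_dvd_iff]; exact h0
    | succ n ih =>
      obtain ⟨i1, i2⟩ := ih
      constructor
      · rw [ha, sub_right_comm]
        exact dvd_sub i1 (Dvd.dvd.mul_left ((dvd_pow_self _ (by omega)).trans i2) _)
      · obtain ⟨k, hk⟩ := S.binomExpansion (a n) (-(PowerSeries.C δ * S.eval (a n)))
        rw [ha, sub_eq_add_neg, hk]
        have h3 : PowerSeries.X ∣ 1 - PowerSeries.C δ * S.derivative.eval (a n) := by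
          have h4 := hd _ _ i1 S.derivative
          have h5 : PowerSeries.X ∣ 1 - PowerSeries.C δ * S.derivative.eval (PowerSeries.C x) := by
            rw [PowerSeries.X_dvd_iff]; simp [hδ]
          have : 1 - PowerSeries.C δ * S.derivative.eval (a n) = (1 - PowerSeries.C δ * S.derivative.eval (PowerSeries.C x))
            - PowerSeries.C δ * (S.derivative.eval (a n) - S.derivative.eval (PowerSeries.C x)) := by ring
          rw [this]
          exact dvd_sub h5 (h4.mul_left _)
        have h6 : S.eval (a n) + S.derivative.eval (a n) * -(PowerSeries.C δ * S.eval (a n)) + k * (-(PowerSeries.C δ * S.eval (a n))) ^ 2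
          = S.eval (a n) * (1 - PowerSeries.C δ * S.derivative.eval (a n)) + k * (PowerSeries.C δ)^2 * (S.eval (a n) * S.eval (a n)) := by ring
        rw [h6]
        refine dvd_add ?_ (Dvd.dvd.mul_left ?_ _)
        · rw [pow_succ]; exact mul_dvd_mul i2 h3
        · refine (pow_dvd_pow _ (by omega : n + 1 + 1 ≤ (n+1) + (n+1))).trans ?_
          rw [pow_add]; exact mul_dvd_mul i2 i2
  have hst : ∀ n m, n ≤ m → PowerSeries.X ^ (n+1) ∣ a m - a n := by
    intro n m hnm
    induction m, hnm using Nat.le_induction with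
    | base => simp
    | succ m hm ih =>
      rw [ha, sub_right_comm]
      exact dvd_sub ih (((pow_dvd_pow _ (by omega)).trans (key m).2).mul_left _)
  let α : PowerSeries A := PowerSeries.mk fun n => PowerSeries.coeff n (a n)
  have hα : ∀ n, PowerSeries.X ^ (n+1) ∣ α - a n := by
    intro n
    rw [PowerSeries.X_pow_dvd_iff]
    intro i hi
    have := PowerSeries.X_pow_dvd_iff.1 (hst i n (by omega)) i (by omega)
    rw [map_sub, sub_eq_zero] at this ⊢
    rw [this]; simp [α]
  refine ⟨α, ?_, ?_⟩
  · have := hα 0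
    rw [zero_add, pow_one, PowerSeries.X_dvd_iff, map_sub, sub_eq_zero] at this
    rw [this]; simp [a]
  · ext n
    have h2 : PowerSeries.X ^ (n+1) ∣ S.eval α := by
      have h3 := (hα n).trans (sub_dvd_eval_sub α (a n) S)
      have := dvd_add h3 (key n).2
      simpa using this
    simpa using PowerSeries.X_pow_dvd_iff.1 h2 n (by omega)

end Hensel

section Generic

abbrev MM (σ k : Type*) [CommRing k] := MvPolynomial (σ ⊕ σ) k
abbrev LL (σ k : Type*) [CommRing k] := (MvPolynomial (σ ⊕ σ) k)[X]

variable {σ k : Type*} [Field k]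

noncomputable def slM : MM σ k →+* (LL σ k)[X] :=
  MvPolynomial.eval₂Hom (((C : LL σ k →+* (LL σ k)[X]).comp (C : MM σ k →+* LL σ k)).comp MvPolynomial.C)
    (Sum.elim (fun i => C (C (MvPolynomial.X (Sum.inl i))))
      (fun i => C (C (MvPolynomial.X (Sum.inl i))) +
        X * C (C (MvPolynomial.X (Sum.inr i) - MvPolynomial.X (Sum.inl i)))))

noncomputable def slL : LL σ k →+* (LL σ k)[X] := eval₂RingHom (slM (σ := σ) (k := k)) (C (X : LL σ k))

noncomputable def dgM : MM σ k →+* MM σ k :=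
  (MvPolynomial.rename (Sum.elim Sum.inl Sum.inl)).toRingHom

noncomputable def dgL : LL σ k →+* LL σ k := mapRingHom dgM

noncomputable def Dg : (LL σ k)[X] →+* LL σ k := eval₂RingHom dgL X

theorem slL_one : (evalRingHom (1 : LL σ k)).comp slL = RingHom.id _ := by
  apply Polynomial.ringHom_ext'
  · apply MvPolynomial.ringHom_ext
    · intro r; simp [slL, slM]
    · rintro (i | i) <;> simp [slL, slM]
  · simp [slL]

theorem slL_zero : (evalRingHom (0 : LL σ k)).comp slL = dgL := by
  apply Polynomial.ringHom_ext'
  · apply MvPolynomial.ringHom_ext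
    · intro r; simp [slL, slM, dgL, dgM]
    · rintro (i | i) <;> simp [slL, slM, dgL, dgM]
  · simp [slL, dgL]

theorem slL_eval_zero (P : (LL σ k)[X]) : ((P.map slL).eval (C X)).eval 0 = Dg P := by
  rw [← coe_evalRingHom (R := LL σ k) 0, ← eval₂_at_apply, eval₂_map, slL_zero]
  simp [Dg]

/-- the branch, over any ring in which the discriminant is a unit -/
theorem gen_branch (P : (LL σ k)[X]) (hP : Dg P = 0) {A : Type*} [CommRing A] (ρ : LL σ k →+* A)
    (hu : IsUnit (ρ (Dg (derivative P)))) :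
    ∃ α : PowerSeries A, PowerSeries.constantCoeff α = ρ X ∧
      eval₂ coeToPowerSeries.ringHom α ((P.map slL).map (mapRingHom ρ)) = 0 := by
  set S : (PowerSeries A)[X] := ((P.map slL).map (mapRingHom ρ)).map coeToPowerSeries.ringHom with hS
  have key : ∀ T : (LL σ k)[X], PowerSeries.constantCoeff
      ((((T.map slL).map (mapRingHom ρ)).map coeToPowerSeries.ringHom).eval (PowerSeries.C (ρ X)))
        = ρ (Dg T) := by
    intro T
    rw [← slL_eval_zero]
    have h1 : PowerSeries.C (ρ X) = (coeToPowerSeries.ringHom : A[X] →+* _) (C (ρ X)) := by simp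
    have h3 : ∀ f : A[X], PowerSeries.constantCoeff ((coeToPowerSeries.ringHom : A[X] →+* _) f) = f.eval 0 := by
      intro f; simp [coeff_zero_eq_eval_zero]
    have h4 : (C (ρ X) : A[X]) = mapRingHom ρ (C X) := by simp
    rw [h1, eval_map, eval₂_at_apply, h3, h4, eval_map, eval₂_at_apply, coe_mapRingHom, eval_map,
      ← eval₂_at_apply, map_zero]
  obtain ⟨α, h1, h2⟩ := ps_hensel S (ρ X) (by rw [key, hP, map_zero]) (by
    rw [hS, derivative_map, derivative_map, derivative_map, key]; exact hu)
  exact ⟨α, h1, by rw [hS, eval_map] at h2; exact h2⟩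

theorem gen_dvd (P : (LL σ k)[X]) (hm : P.Monic) (hirr : Irreducible P)
    {E : Type*} [Field E] [Algebra (LL σ k) E] [IsFractionRing (LL σ k) E]
    (α : PowerSeries E)
    (hα : eval₂ coeToPowerSeries.ringHom α ((P.map slL).map (mapRingHom (algebraMap (LL σ k) E))) = 0)
    (g : E[X][X]) (hg : eval₂ coeToPowerSeries.ringHom α g = 0) :
    (P.map slL).map (mapRingHom (algebraMap (LL σ k) E)) ∣ g := by
  set s := (P.map slL).map (mapRingHom (algebraMap (LL σ k) E)) with hs
  have hsm : s.Monic := (hm.map _).map _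
  obtain ⟨π, hπ, h0, hdvd⟩ := branch_minpoly α s hsm hα
  have h1 : s.map (evalRingHom 1) = P.map (algebraMap (LL σ k) E) := by
    rw [hs, Polynomial.map_map, Polynomial.map_map]
    congr 1
    have h2 : (evalRingHom (1:E)).comp (mapRingHom (algebraMap (LL σ k) E)) =
        (algebraMap (LL σ k) E).comp (evalRingHom 1) := by
      ext x <;> simp
    rw [h2, RingHom.comp_assoc, slL_one, RingHom.comp_id]
  have hirr' : Irreducible (P.map (algebraMap (LL σ k) E)) :=
    (hm.irreducible_iff_irreducible_map_fraction_map).1 hirr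
  have h2 : π.map (evalRingHom 1) ∣ P.map (algebraMap (LL σ k) E) := by
    rw [← h1]; exact Polynomial.map_dvd _ (hdvd s hα)
  have h3 : s.natDegree = P.natDegree := by
    rw [hs, (hm.map _).natDegree_map, hm.natDegree_map]
  have hle : s.natDegree ≤ π.natDegree := by
    rcases hirr'.dvd_iff.1 h2 with h | h
    · exfalso
      have h5 := (hπ.map (evalRingHom (1:E))).eq_one_of_isUnit h
      have h6 : π.natDegree = 0 := by
        rw [← hπ.natDegree_map (evalRingHom (1:E)), h5, natDegree_one]
      rw [hπ.natDegree_eq_zero.1 h6] at h0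
      simp at h0
    · have h5 := natDegree_le_of_dvd h.dvd (hπ.map _).ne_zero
      rwa [hm.natDegree_map, hπ.natDegree_map, ← h3] at h5
  have := eq_of_monic_of_dvd_of_natDegree_le hπ hsm (hdvd s hα) hle
  rw [this]; exact hdvd g hg

end Generic

section Spec

theorem indep_spec {A : Type*} [CommRing A] [IsDomain A] (E : Type*) [Field E] [Algebra A E] [IsFractionRing A E]
    {I : Type*} [Fintype I] (w : I → ℕ → A)
    (h : ∀ c : I → E, (∀ n, ∑ i, c i * algebraMap A E (w i n) = 0) → c = 0) :
    ∃ d : A, d ≠ 0 ∧ ∀ (K : Type) [Field K] (ρ : A →+* K), ρ d ≠ 0 →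
      ∀ c : I → K, (∀ n, ∑ i, c i * ρ (w i n) = 0) → c = 0 := by
  classical
  let r : ℕ → (I → E) := fun n i => algebraMap A E (w i n)
  have hspan : Submodule.span E (Set.range r) = ⊤ := by
    by_contra hne
    obtain ⟨f, hf, hf2⟩ := Submodule.exists_le_ker_of_lt_top _ (lt_top_iff_ne_top.2 hne)
    apply hf
    have key : ∀ v, f v = ∑ i, f (Pi.single i 1) * v i := by
      intro v
      conv_lhs => rw [← Finset.univ_sum_single v]
      rw [map_sum]
      refine Finset.sum_congr rfl fun i _ => ?_
      rw [mul_comm, ← smul_eq_mul, ← map_smul, ← Pi.single_smul]; simp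
    have h0 := h (fun i => f (Pi.single i 1)) (fun n => by
      have : f (r n) = 0 := hf2 (Submodule.subset_span ⟨n, rfl⟩)
      rw [key] at this
      exact this)
    apply LinearMap.ext
    intro v
    rw [key]
    refine Finset.sum_eq_zero fun i _ => ?_
    have := congrFun h0 i
    simp only [Pi.zero_apply] at this
    rw [this, zero_mul]
  have hone : ∀ a : I, ∃ d : A, d ≠ 0 ∧ ∃ (s : Finset ℕ) (c : ℕ → A), ∀ b,
      ∑ n ∈ s, c n * w b n = if b = a then d else 0 := by
    intro a
    have : (Pi.single a 1 : I → E) ∈ Submodule.span E (Set.range r) := by rw [hspan]; trivial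
    rw [Finsupp.mem_span_range_iff_exists_finsupp] at this
    obtain ⟨c, hc⟩ := this
    obtain ⟨d, hd⟩ := IsLocalization.exist_integer_multiples (nonZeroDivisors A) c.support c
    choose! c' hc' using hd
    refine ⟨d, nonZeroDivisors.ne_zero d.2, c.support, c', fun b => ?_⟩
    apply IsFractionRing.injective A E
    have h1 := congrFun hc b
    rw [Finsupp.sum, Finset.sum_apply] at h1
    simp only [Pi.smul_apply, smul_eq_mul, r] at h1
    have h2 : algebraMap A E (∑ n ∈ c.support, c' n * w b n) = algebraMap A E d * (∑ n ∈ c.support, c n * algebraMap A E (w b n)) := by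
      rw [map_sum, Finset.mul_sum]
      refine Finset.sum_congr rfl fun n hn => ?_
      rw [map_mul, hc' n hn, Algebra.smul_def, mul_assoc]
    rw [h2, h1]
    by_cases hba : b = a
    · subst hba; simp
    · simp [hba]
  choose d hd s c hc using hone
  refine ⟨∏ a, d a, Finset.prod_ne_zero_iff.2 fun a _ => hd a, ?_⟩
  intro K _ ρ hρ x hx
  rw [map_prod, Finset.prod_ne_zero_iff] at hρ
  funext a
  have h1 : ∑ n ∈ s a, ρ (c a n) * ∑ i, x i * ρ (w i n) = 0 :=
    Finset.sum_eq_zero fun n _ => by rw [hx, mul_zero]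
  have h2 : ∑ n ∈ s a, ρ (c a n) * ∑ i, x i * ρ (w i n) = ∑ i, x i * ρ (∑ n ∈ s a, c a n * w i n) := by
    simp only [Finset.mul_sum, map_sum, map_mul]
    rw [Finset.sum_comm]
    refine Finset.sum_congr rfl fun i _ => Finset.sum_congr rfl fun n _ => ?_
    ring
  rw [h2] at h1
  simp only [hc] at h1
  rw [Finset.sum_eq_single a (fun b _ hb => by simp [hb]) (by simp)] at h1
  simp only [if_true] at h1
  exact (mul_eq_zero.1 h1).resolve_right (hρ a (Finset.mem_univ a))

theorem biv_as_sum {A : Type*} [CommRing A] (g : A[X][X]) (D e : ℕ) (hg : g.natDegree < e)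
    (hD : ∀ j, (g.coeff j).natDegree ≤ D) :
    g = ∑ z : Fin (D+1) × Fin e, C (C ((g.coeff z.2).coeff z.1)) * (C (X ^ (z.1:ℕ)) * X ^ (z.2:ℕ)) := by
  rw [Fintype.sum_prod_type_right]
  conv_lhs => rw [g.as_sum_range' e hg]
  rw [Finset.sum_range]
  refine Finset.sum_congr rfl fun j _ => ?_
  rw [← C_mul_X_pow_eq_monomial]
  conv_lhs => rw [(g.coeff j).as_sum_range' (D+1) (Nat.lt_succ_of_le (hD j))]
  rw [Finset.sum_range, map_sum, Finset.sum_mul]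
  refine Finset.sum_congr rfl fun i _ => ?_
  rw [← C_mul_X_pow_eq_monomial, map_mul, mul_assoc]

theorem biv_coeff_sum {A : Type*} [CommRing A] (D e : ℕ) (c : Fin (D+1) × Fin e → A) (z : Fin (D+1) × Fin e) :
    ((∑ z : Fin (D+1) × Fin e, C (C (c z)) * (C (X ^ (z.1:ℕ)) * X ^ (z.2:ℕ)) : A[X][X]).coeff z.2).coeff z.1 = c z := by
  simp only [finsetSum_coeff, coeff_C_mul, coeff_X_pow]
  rw [Finset.sum_eq_single z]
  · simp
  · intro z' _ hne
    by_cases h5 : (z.2:ℕ) = z'.2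
    · have : (z.1:ℕ) ≠ z'.1 := fun h => hne (Prod.ext (Fin.ext h.symm) (Fin.ext h5.symm))
      simp [h5, coeff_X_pow, this]
    · simp [h5]
  · simp

theorem biv_eval_sum {A : Type*} [CommRing A] (D e : ℕ) (c : Fin (D+1) × Fin e → A) (α : PowerSeries A) (n : ℕ) :
    PowerSeries.coeff n (eval₂ coeToPowerSeries.ringHom α
      (∑ z : Fin (D+1) × Fin e, C (C (c z)) * (C (X ^ (z.1:ℕ)) * X ^ (z.2:ℕ)) : A[X][X])) =
    ∑ z, c z * PowerSeries.coeff n (PowerSeries.X ^ (z.1:ℕ) * α ^ (z.2:ℕ)) := by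
  rw [eval₂_finsetSum, map_sum]
  refine Finset.sum_congr rfl fun z _ => ?_
  simp only [eval₂_mul, eval₂_C, eval₂_X_pow, coeToPowerSeries.ringHom_apply, Polynomial.coe_C, Polynomial.coe_pow, Polynomial.coe_X]
  rw [PowerSeries.coeff_C_mul]

theorem branch_map {A B : Type*} [CommRing A] [CommRing B] (α : PowerSeries A) (S : A[X][X])
    (hα : eval₂ coeToPowerSeries.ringHom α S = 0) (τ : A →+* B) :
    eval₂ coeToPowerSeries.ringHom (PowerSeries.map τ α) (S.map (mapRingHom τ)) = 0 := by
  have h1 := congrArg (PowerSeries.map τ) hα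
  rw [map_zero, Polynomial.hom_eval₂] at h1
  have h2 : (PowerSeries.map τ).comp (coeToPowerSeries.ringHom : A[X] →+* _) =
      (coeToPowerSeries.ringHom).comp (mapRingHom τ) := by
    apply Polynomial.ringHom_ext'
    · ext x; simp
    · simp
  rw [h2, ← eval₂_map] at h1
  exact h1

variable {σ k : Type*} [Field k]

theorem gen_spec (P : (LL σ k)[X]) (hm : P.Monic) (hirr : Irreducible P) (hP : Dg P = 0)
    (hP' : Dg (derivative P) ≠ 0) (D : ℕ) :
    ∃ W : LL σ k, W ≠ 0 ∧ ∀ (K : Type) [Field K] (ρ : LL σ k →+* K), ρ W ≠ 0 →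
      ∃ α : PowerSeries K, eval₂ coeToPowerSeries.ringHom α ((P.map slL).map (mapRingHom ρ)) = 0 ∧
        ∀ g : K[X][X], g.natDegree < P.natDegree → (∀ j, (g.coeff j).natDegree ≤ D) →
          eval₂ coeToPowerSeries.ringHom α g = 0 → g = 0 := by
  classical
  set δ := Dg (derivative P) with hδ
  let A := Localization.Away δ
  let E := FractionRing (LL σ k)
  have hδE : IsUnit (algebraMap (LL σ k) E δ) := by
    rw [isUnit_iff_ne_zero]
    exact (map_ne_zero_iff _ (IsFractionRing.injective (LL σ k) E)).2 hP'
  have : IsDomain A := IsLocalization.isDomain_localization (powers_le_nonZeroDivisors_of_noZeroDivisors hP')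
  let θ : A →+* E := IsLocalization.Away.lift δ hδE
  let _ : Algebra A E := θ.toAlgebra
  have hθ : θ.comp (algebraMap (LL σ k) A) = algebraMap (LL σ k) E := IsLocalization.Away.lift_comp δ hδE
  have : IsScalarTower (LL σ k) A E := IsScalarTower.of_algebraMap_eq' hθ.symm
  have : IsFractionRing A E := IsFractionRing.isFractionRing_of_isDomain_of_isLocalization (Submonoid.powers δ) A E
  obtain ⟨α, -, hα⟩ := gen_branch P hP (algebraMap (LL σ k) A) (IsLocalization.Away.algebraMap_isUnit δ)
  let I := Fin (D+1) × Fin P.natDegree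
  obtain ⟨d, hd, hspec⟩ := indep_spec E (I := I) (fun z n => PowerSeries.coeff n (PowerSeries.X ^ (z.1:ℕ) * α ^ (z.2:ℕ) : PowerSeries A)) (by
    intro c hc
    have hα' := branch_map α _ hα θ
    rw [Polynomial.map_map, mapRingHom_comp, hθ] at hα'
    set g : E[X][X] := ∑ z : I, C (C (c z)) * (C (X ^ (z.1:ℕ)) * X ^ (z.2:ℕ)) with hg
    have hg0 : eval₂ coeToPowerSeries.ringHom (PowerSeries.map θ α) g = 0 := by
      ext n
      rw [hg, biv_eval_sum, map_zero, ← hc n]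
      refine Finset.sum_congr rfl fun z _ => ?_
      rw [RingHom.algebraMap_toAlgebra, ← PowerSeries.coeff_map]
      simp
    have h1 := gen_dvd P hm hirr (PowerSeries.map θ α) hα' g hg0
    have h2 : g = 0 := by
      refine Polynomial.eq_zero_of_dvd_of_degree_lt h1 ?_
      rw [((hm.map slL).degree_map _), hm.degree_map, degree_eq_natDegree hm.ne_zero]
      refine lt_of_le_of_lt (degree_sum_le _ _) ?_
      rw [Finset.sup_lt_iff (WithBot.bot_lt_coe _)]
      intro z _
      refine lt_of_le_of_lt (b := ((z.2 : ℕ) : WithBot ℕ)) ?_ ?_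
      · rw [← mul_assoc, ← map_mul]; exact degree_C_mul_X_pow_le _ _
      · exact_mod_cast z.2.2
    funext z
    rw [← biv_coeff_sum D P.natDegree c z]
    rw [← hg, h2]; simp)
  obtain ⟨⟨W0, u⟩, hW0⟩ := IsLocalization.surj (Submonoid.powers δ) d
  have hinj : Function.Injective (algebraMap (LL σ k) A) :=
    IsLocalization.injective _ (powers_le_nonZeroDivisors_of_noZeroDivisors hP')
  refine ⟨W0 * δ, mul_ne_zero ?_ hP', ?_⟩
  · rintro rfl
    rw [map_zero] at hW0
    have hu : algebraMap (LL σ k) A u ≠ 0 := (IsLocalization.map_units A u).ne_zero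
    exact hd ((mul_eq_zero.1 hW0).resolve_right hu)
  intro K _ ρ hρ
  rw [map_mul] at hρ
  have hδK : IsUnit (ρ δ) := (right_ne_zero_of_mul hρ).isUnit
  let τ : A →+* K := IsLocalization.Away.lift δ hδK
  have hτ : τ.comp (algebraMap (LL σ k) A) = ρ := IsLocalization.Away.lift_comp δ hδK
  have hτ' : ∀ x, τ (algebraMap (LL σ k) A x) = ρ x := fun x => by rw [← hτ]; rfl
  refine ⟨PowerSeries.map τ α, ?_, ?_⟩
  · have hα' := branch_map α _ hα τ
    rwa [Polynomial.map_map, mapRingHom_comp, hτ] at hα'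
  · intro g hg hgD hg0
    have hτd : τ d ≠ 0 := by
      intro h0
      have := congrArg τ hW0
      rw [map_mul, h0, zero_mul, hτ'] at this
      exact (left_ne_zero_of_mul hρ) this.symm
    have := hspec K τ hτd (fun z => (g.coeff z.2).coeff z.1) (by
      intro n
      have h1 := congrArg (PowerSeries.coeff n) hg0
      rw [biv_as_sum g D _ hg hgD, biv_eval_sum, map_zero] at h1
      rw [← h1]
      refine Finset.sum_congr rfl fun z _ => ?_
      rw [← PowerSeries.coeff_map]
      simp)
    rw [biv_as_sum g D _ hg hgD]
    refine Finset.sum_eq_zero fun z _ => ?_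
    have := congrFun this z
    simp only [Pi.zero_apply] at this
    rw [this]; simp

end Spec

section Count

theorem sz_count {τ k : Type*} [Fintype τ] [Field k] (f : MvPolynomial τ k) (hf : f ≠ 0)
    (K : Type) [Field K] [Fintype K] [Algebra k K] :
    Nat.card {y : τ → K // MvPolynomial.aeval y f = 0} * Fintype.card K ≤
      f.totalDegree * Fintype.card K ^ Fintype.card τ := by
  classical
  let n := Fintype.card τ
  let eq := Fintype.equivFin τ
  let g : MvPolynomial (Fin n) K := MvPolynomial.map (algebraMap k K) (MvPolynomial.rename eq f)
  have hg : g ≠ 0 := by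
    refine (map_ne_zero_iff _ (MvPolynomial.map_injective _ (algebraMap k K).injective)).2 ?_
    exact (map_ne_zero_iff _ (MvPolynomial.rename_injective _ eq.injective)).2 hf
  have hdeg : g.totalDegree ≤ f.totalDegree :=
    (Finset.sup_mono (MvPolynomial.support_map_subset _ _)).trans (MvPolynomial.totalDegree_rename_le _ _)
  have h := MvPolynomial.schwartz_zippel_totalDegree hg (Finset.univ : Finset K)
  have hq : (0 : ℚ≥0) < (Fintype.card K : ℚ≥0) := by exact_mod_cast Fintype.card_pos
  rw [Finset.card_univ, div_le_div_iff₀ (pow_pos hq _) hq] at h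
  have h2 : (Finset.filter (fun x => MvPolynomial.eval x g = 0) (Fintype.piFinset fun _ : Fin n => (Finset.univ : Finset K))).card
      = Nat.card {y : τ → K // MvPolynomial.aeval y f = 0} := by
    rw [Nat.card_eq_fintype_card, ← Fintype.card_coe]
    refine Fintype.card_congr (Equiv.subtypeEquiv (Equiv.arrowCongr eq.symm (Equiv.refl K)) ?_)
    intro x
    simp [g, MvPolynomial.eval_map, MvPolynomial.aeval_def, MvPolynomial.eval₂_rename]
    rfl
  rw [h2] at h
  have h3 : Nat.card {y : τ → K // MvPolynomial.aeval y f = 0} * Fintype.card K ≤ g.totalDegree * Fintype.card K ^ n := by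
    exact_mod_cast h
  exact h3.trans (Nat.mul_le_mul_right _ hdeg)

variable {σ k : Type*} [Field k]

noncomputable def pt {K : Type*} [Field K] [Algebra k K] (y : σ ⊕ σ → K) (x : K) : LL σ k →+* K :=
  eval₂RingHom (MvPolynomial.aeval (R := k) y).toRingHom x

theorem bad_count [Fintype σ] (W : LL σ k) (hW : W ≠ 0) : ∃ d : ℕ,
    ∀ (K : Type) [Field K] [Fintype K] [Algebra k K],
    Nat.card {z : (σ ⊕ σ → K) × K // pt (k := k) z.1 z.2 W = 0} ≤
      d * Fintype.card K ^ Fintype.card (σ ⊕ σ) := by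
  classical
  set f := (MvPolynomial.optionEquivLeft k (σ ⊕ σ)).symm W with hf
  refine ⟨f.totalDegree, fun K _ _ _ => ?_⟩
  have hf0 : f ≠ 0 := by
    rw [hf]; exact (map_ne_zero_iff _ (MvPolynomial.optionEquivLeft k (σ ⊕ σ)).symm.injective).2 hW
  have h := sz_count f hf0 K
  have key : ∀ z : Option (σ ⊕ σ) → K, MvPolynomial.aeval z f = pt (k := k) (fun i => z (some i)) (z none) W := by
    intro z
    have : (MvPolynomial.aeval (R := k) z).toRingHom = (pt (k := k) (fun i => z (some i)) (z none)).comp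
        (MvPolynomial.optionEquivLeft k (σ ⊕ σ)).toRingEquiv.toRingHom := by
      apply MvPolynomial.ringHom_ext
      · intro r; simp [pt]
      · rintro (_ | i) <;> simp [pt]
    have h2 := congrArg (fun φ : MvPolynomial (Option (σ ⊕ σ)) k →+* K => φ f) this
    simp [hf] at h2
    rw [hf]; exact h2
  have h3 : Nat.card {y : Option (σ ⊕ σ) → K // MvPolynomial.aeval y f = 0} =
      Nat.card {z : (σ ⊕ σ → K) × K // pt (k := k) z.1 z.2 W = 0} := by
    refine Nat.card_congr (Equiv.subtypeEquiv ?_ ?_)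
    · exact { toFun := fun z => (fun i => z (some i), z none)
              invFun := fun z o => Option.elim o z.2 z.1
              left_inv := fun z => by ext (_ | i) <;> rfl
              right_inv := fun z => rfl }
    · intro z; rw [key]; rfl
  rw [h3, Fintype.card_option, pow_succ, ← mul_assoc] at h
  exact Nat.le_of_mul_le_mul_right h Fintype.card_pos

def scl {K : Type*} [Field K] (t : K) (y : σ ⊕ σ → K) : σ ⊕ σ → K :=
  Sum.elim (fun i => y (Sum.inl i)) (fun i => y (Sum.inl i) + t * (y (Sum.inr i) - y (Sum.inl i)))

theorem scl_inv {K : Type*} [Field K] (t : K) (ht : t ≠ 0) (y : σ ⊕ σ → K) : scl t (scl t⁻¹ y) = y := by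
  ext (i | i)
  · simp [scl]
  · simp [scl]; field_simp; ring

theorem slL_pt {K : Type*} [Field K] [Algebra k K] (y : σ ⊕ σ → K) (x t : K) :
    (evalRingHom t).comp ((mapRingHom (pt (k := k) y x)).comp slL) = pt (scl t y) x := by
  apply Polynomial.ringHom_ext'
  · apply MvPolynomial.ringHom_ext
    · intro r; simp [slL, slM, pt]
    · rintro (i | i) <;> simp [slL, slM, pt, scl]
  · simp [slL, pt]

theorem slL_eval_pt {K : Type*} [Field K] [Algebra k K] (P : (LL σ k)[X]) (y : σ ⊕ σ → K) (x t u : K) :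
    ((((P.map slL).map (mapRingHom (pt (k := k) y x)))).eval (C u)).eval t = (P.map (pt (k := k) (scl t y) x)).eval u := by
  rw [← slL_pt, ← coe_evalRingHom t, ← eval₂_at_apply, eval₂_map, eval₂_map, eval_map]
  simp [RingHom.comp_assoc]

end Count

section Count2

theorem sum_card_fib {A B : Type*} [Fintype A] [Fintype B] (R : A → B → Prop) :
    Nat.card {z : A × B // R z.1 z.2} = ∑ a, Nat.card {b // R a b} := by
  classical
  rw [Nat.card_congr (Equiv.subtypeProdEquivSigmaSubtype R), Nat.card_sigma]

theorem bad_curve {K : Type} [Field K] [Fintype K] (F : K → K[X]) (e : ℕ) (h0 : ∀ t, F t ≠ 0)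
    (hd : ∀ t, (F t).natDegree ≤ e) :
    Nat.card {z : K × K // (F z.2).eval z.1 = 0} ≤ e * Fintype.card K := by
  classical
  have h1 : Nat.card {z : K × K // (F z.2).eval z.1 = 0} = Nat.card {z : K × K // (F z.1).eval z.2 = 0} :=
    Nat.card_congr (Equiv.subtypeEquiv (Equiv.prodComm K K) (fun z => Iff.rfl))
  rw [h1, sum_card_fib (fun t u => (F t).eval u = 0)]
  refine (Finset.sum_le_card_nsmul _ _ e ?_).trans (by simp [mul_comm])
  intro t _
  have : Nat.card {u // (F t).eval u = 0} ≤ (F t).roots.toFinset.card := by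
    rw [Nat.card_eq_fintype_card, ← Fintype.card_coe]
    refine Fintype.card_le_of_injective (fun u => ⟨u.1, by simp [h0 t, u.2]⟩) ?_
    intro u v h; ext; simpa using h
  exact this.trans ((Multiset.toFinset_card_le _).trans ((card_roots' _).trans (hd t)))

theorem gen_count {σ : Type*} [Fintype σ] (p : ℕ) [Fact p.Prime] (P : (LL σ (ZMod p))[X]) (hm : P.Monic)
    (hirr : Irreducible P) (hP : Dg P = 0) (hP' : Dg (derivative P) ≠ 0) : ∃ C : ℕ,
    ∀ (K : Type) [Field K] [Fintype K] [Algebra (ZMod p) K] (a b : ℕ),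
    Fintype.card K = p^a * p^b → p^a ≤ p^b → C ≤ p^a →
    (Fintype.card K - 1) * Nat.card {z : ((σ ⊕ σ → K) × K) × K // (P.map (pt (k := ZMod p) z.1.1 z.1.2)).eval z.2 = 0}
      ≤ Fintype.card K ^ (Fintype.card (σ ⊕ σ) + 1) * (Fintype.card K + C * p^b) := by
  classical
  set D := (Finset.range (P.natDegree + 1)).sup (fun j => ((P.map slL).coeff j).natDegree) with hDdef
  obtain ⟨W, hW, hspec⟩ := gen_spec P hm hirr hP hP' D
  obtain ⟨d, hd⟩ := bad_count W hW
  set e := P.natDegree with he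
  have he1 : 1 ≤ e := by
    by_contra h
    have : P = 1 := eq_one_of_monic_natDegree_zero hm (by omega)
    exact hirr.not_isUnit (this ▸ isUnit_one)
  set E := 1 + e*(2*(D*e^2)+4) with hE
  refine ⟨(2*(D*e^2)+1)*(e*(2*(D*e^2)+4)) + (D*e^2) + e + 1 + E + d*e, ?_⟩
  intro K _ _ _ a b hq hab hC
  have hchar : CharP K p := charP_of_injective_algebraMap (algebraMap (ZMod p) K).injective p
  set q := Fintype.card K with hqdef
  let c : (σ ⊕ σ → K) × K → ℕ := fun z =>
    Nat.card {v : K × K // (P.map (pt (k := ZMod p) (scl v.2 z.1) z.2)).eval v.1 = 0}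
  have hgood : ∀ z : (σ ⊕ σ → K) × K, pt (k := ZMod p) z.1 z.2 W ≠ 0 → c z ≤ q + p^b * E := by
    intro z hz
    obtain ⟨α, hα, hind⟩ := hspec K (pt (k := ZMod p) z.1 z.2) hz
    set s := ((P.map slL).map (mapRingHom (pt (k := ZMod p) z.1 z.2))) with hs
    have hsm : s.Monic := (hm.map _).map _
    have hse : s.natDegree = e := by rw [hs, (hm.map _).natDegree_map, hm.natDegree_map]
    have hsD : ∀ j, (s.coeff j).natDegree ≤ D := by
      intro j
      by_cases hj : j ≤ e
      · rw [hs, coeff_map]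
        refine natDegree_map_le.trans ?_
        exact Finset.le_sup (f := fun j => ((P.map slL).coeff j).natDegree) (Finset.mem_range.2 (by omega))
      · rw [coeff_eq_zero_of_natDegree_lt (by omega)]; simp
    have := curve_bound (s := s) (D := D) hsm (by omega) hsD α hα (by rw [hse]; exact hind) p a b hq hab
      (by rw [hse]; omega)
    rw [hse] at this
    refine le_trans (le_of_eq ?_) this
    refine Nat.card_congr (Equiv.subtypeEquivRight ?_)
    intro v
    rw [hs, slL_eval_pt]
  have hbad : ∀ z : (σ ⊕ σ → K) × K, c z ≤ e * q := by
    intro z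
    refine bad_curve (fun t => P.map (pt (k := ZMod p) (scl t z.1) z.2)) e (fun t => (hm.map _).ne_zero) ?_
    intro t; exact natDegree_map_le
  have hS : (q - 1) * Nat.card {z : ((σ ⊕ σ → K) × K) × K // (P.map (pt (k := ZMod p) z.1.1 z.1.2)).eval z.2 = 0}
      ≤ ∑ z, c z := by
    rw [← sum_card_fib (fun (z : (σ ⊕ σ → K) × K) (v : K × K) => (P.map (pt (k := ZMod p) (scl v.2 z.1) z.2)).eval v.1 = 0)]
    have h1 : q - 1 = Nat.card {t : K // t ≠ 0} := by
      rw [Nat.card_eq_fintype_card, Fintype.card_subtype_compl, Fintype.card_subtype_eq]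
    rw [h1, ← Nat.card_prod]
    refine Nat.card_le_card_of_injective (fun x => ⟨((scl (x.1.1)⁻¹ x.2.1.1.1, x.2.1.1.2), (x.2.1.2, x.1.1)), ?_⟩) ?_
    · simp only [scl_inv _ x.1.2]; exact x.2.2
    · rintro ⟨⟨t, ht⟩, ⟨⟨⟨y, x⟩, u⟩, h⟩⟩ ⟨⟨t', ht'⟩, ⟨⟨⟨y', x'⟩, u'⟩, h'⟩⟩ hh
      simp only [Subtype.mk.injEq, Prod.mk.injEq] at hh
      obtain ⟨⟨h1, h2⟩, h3, h4⟩ := hh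
      subst h4
      have : y = y' := by rw [← scl_inv t ht y, h1, scl_inv t ht y']
      subst this; subst h2; subst h3; rfl
  refine hS.trans ?_
  have h2 : ∑ z, c z ≤ ∑ z : (σ ⊕ σ → K) × K, ((q + p^b*E) + if pt (k := ZMod p) z.1 z.2 W = 0 then e * q else 0) := by
    refine Finset.sum_le_sum fun z _ => ?_
    split_ifs with h
    · exact (hbad z).trans (by omega)
    · exact (hgood z h).trans (by omega)
  refine h2.trans ?_
  rw [Finset.sum_add_distrib, ← Finset.sum_filter, Finset.sum_const, Finset.sum_const]
  have h3 := hd K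
  rw [Nat.card_eq_fintype_card, Fintype.card_subtype] at h3
  simp only [Finset.card_univ, smul_eq_mul, Fintype.card_prod, Fintype.card_fun]
  rw [← hqdef] at h3 ⊢
  rw [← pow_succ]
  have hb : 1 ≤ p^b := Nat.one_le_pow _ _ (Fact.out : p.Prime).pos
  calc _ ≤ q ^ (Fintype.card (σ ⊕ σ) + 1) * (q + p ^ b * E) + d * q ^ (Fintype.card (σ ⊕ σ)) * (e * q) := by
        gcongr
    _ = q ^ (Fintype.card (σ ⊕ σ) + 1) * (q + p ^ b * E + d * e) := by ring
    _ ≤ _ := by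
      refine Nat.mul_le_mul_left _ ?_
      generalize (2*(D*e^2)+1)*(e*(2*(D*e^2)+4)) + (D*e^2) + e + 1 = Z
      nlinarith [Nat.zero_le (Z*p^b), Nat.mul_le_mul_left (d*e) hb]

end Count2

section ThmA

variable {σ k : Type*} [Field k]

noncomputable def ev {A : Type*} [CommRing A] (c : k →+* A) (y : σ ⊕ σ → A) (x x' : A) : (LL σ k)[X] →+* A :=
  eval₂RingHom (eval₂RingHom (MvPolynomial.eval₂Hom c y) x) x'

noncomputable def evB {A : Type*} [CommRing A] (c : k →+* A) (y : σ → A) (x : A) : (MvPolynomial σ k)[X] →+* A :=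
  eval₂RingHom (MvPolynomial.eval₂Hom c y) x

theorem ev_ext {A : Type*} [CommRing A] {f g : (LL σ k)[X] →+* A} (h1 : ∀ r, f (C (C (MvPolynomial.C r))) = g (C (C (MvPolynomial.C r))))
   (h2 : ∀ i, f (C (C (MvPolynomial.X i))) = g (C (C (MvPolynomial.X i)))) (h3 : f (C X) = g (C X)) (h4 : f X = g X) : f = g := by
  apply Polynomial.ringHom_ext'
  · apply Polynomial.ringHom_ext'
    · exact MvPolynomial.ringHom_ext h1 h2
    · exact h3
  · exact h4

theorem evB_ext {A : Type*} [CommRing A] {f g : (MvPolynomial σ k)[X] →+* A} (h1 : ∀ r, f (C (MvPolynomial.C r)) = g (C (MvPolynomial.C r)))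
   (h2 : ∀ i, f (C (MvPolynomial.X i)) = g (C (MvPolynomial.X i))) (h3 : f X = g X) : f = g := by
  apply Polynomial.ringHom_ext'
  · exact MvPolynomial.ringHom_ext h1 h2
  · exact h3

section
variable {A : Type*} [CommRing A] (c : k →+* A) (y : σ ⊕ σ → A) (y' : σ → A) (x x' : A)
@[simp] theorem ev_c (r) : ev c y x x' (C (C (MvPolynomial.C r))) = c r := by simp [ev]
@[simp] theorem ev_y (i) : ev c y x x' (C (C (MvPolynomial.X i))) = y i := by simp [ev]
@[simp] theorem ev_x : ev c y x x' (C X) = x := by simp [ev]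
@[simp] theorem ev_x' : ev c y x x' X = x' := by simp [ev]
@[simp] theorem evB_c (r) : evB c y' x (C (MvPolynomial.C r)) = c r := by simp [evB]
@[simp] theorem evB_y (i) : evB c y' x (C (MvPolynomial.X i)) = y' i := by simp [evB]
@[simp] theorem evB_x : evB c y' x X = x := by simp [evB]
theorem ev_nat {A' : Type*} [CommRing A'] (φ : A →+* A') : φ.comp (ev c y x x') = ev (φ.comp c) (φ ∘ y) (φ x) (φ x') := by
  apply ev_ext <;> simp
theorem evB_nat {A' : Type*} [CommRing A'] (φ : A →+* A') : φ.comp (evB c y' x) = evB (φ.comp c) (φ ∘ y') (φ x) := by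
  apply evB_ext <;> simp
end

noncomputable def j0 : (MvPolynomial σ k)[X] →+* (LL σ k)[X] :=
  (C : LL σ k →+* (LL σ k)[X]).comp (mapRingHom (MvPolynomial.rename Sum.inl).toRingHom)
noncomputable def j1 : (MvPolynomial σ k)[X] →+* (LL σ k)[X] :=
  mapRingHom ((C : MM σ k →+* LL σ k).comp (MvPolynomial.rename Sum.inr).toRingHom)

theorem ev_j0 {A : Type*} [CommRing A] (c : k →+* A) (y : σ ⊕ σ → A) (x x' : A) :
    (ev c y x x').comp j0 = evB c (y ∘ Sum.inl) x := by
  apply evB_ext <;> simp [j0]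
theorem ev_j1 {A : Type*} [CommRing A] (c : k →+* A) (y : σ ⊕ σ → A) (x x' : A) :
    (ev c y x x').comp j1 = evB c (y ∘ Sum.inr) x' := by
  apply evB_ext <;> simp [j1]

noncomputable def FF (Q : (MvPolynomial σ k)[X]) : (LL σ k)[X] := j1 Q - j0 Q

theorem ev_FF {A : Type*} [CommRing A] (c : k →+* A) (y : σ ⊕ σ → A) (x x' : A) (Q : (MvPolynomial σ k)[X]) :
    ev c y x x' (FF Q) = evB c (y ∘ Sum.inr) x' Q - evB c (y ∘ Sum.inl) x Q := by
  rw [← ev_j1 c y x x', ← ev_j0 c y x x']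
  exact map_sub (ev c y x x') (j1 Q) (j0 Q)

noncomputable def iC : k →+* (LL σ k)[X] :=
  (C : LL σ k →+* (LL σ k)[X]).comp ((C : MM σ k →+* LL σ k).comp MvPolynomial.C)

theorem iC_apply (r : k) : iC (σ := σ) r = C (C (MvPolynomial.C r)) := rfl

noncomputable def sw : (LL σ k)[X] →+* (LL σ k)[X] :=
  ev (σ := σ) (k := k) (A := (LL σ k)[X]) iC
    (fun i => C (C (MvPolynomial.X i.swap))) X (C X)

theorem sw_sw (P : (LL σ k)[X]) : sw (sw P) = P := by
  have : (sw (σ := σ) (k := k)).comp sw = RingHom.id _ := by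
    refine ev_ext (A := (LL σ k)[X]) ?_ ?_ ?_ ?_ <;> simp [sw, iC_apply]
  exact congrArg (fun φ : (LL σ k)[X] →+* (LL σ k)[X] => φ P) this

theorem ev_sw {A : Type*} [CommRing A] (c : k →+* A) (y : σ ⊕ σ → A) (x x' : A) :
    (ev c y x x').comp sw = ev c (y ∘ Sum.swap) x' x := by
  apply ev_ext <;> simp [sw, iC_apply]

theorem Dg_eq : (Dg : (LL σ k)[X] →+* LL σ k) = ev ((C : MM σ k →+* LL σ k).comp MvPolynomial.C)
    (Sum.elim (fun i => C (MvPolynomial.X (Sum.inl i))) (fun i => C (MvPolynomial.X (Sum.inl i)))) X X := by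
  apply ev_ext
  · simp [Dg, dgL, dgM]
  · rintro (i | i) <;> simp [Dg, dgL, dgM]
  · simp [Dg, dgL, dgM]
  · simp [Dg, dgL, dgM]

theorem Dg_sw (P : (LL σ k)[X]) : Dg (sw P) = Dg P := by
  rw [← RingHom.comp_apply, Dg_eq, ev_sw]
  congr 1
  congr 1
  ext (i | i) <;> rfl

theorem id_ev : RingHom.id ((LL σ k)[X]) = ev (σ := σ) (k := k) (A := (LL σ k)[X]) iC
    (fun i => C (C (MvPolynomial.X i))) (C X) X := by
  refine ev_ext (A := (LL σ k)[X]) ?_ ?_ ?_ ?_ <;> simp [iC_apply]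

theorem sw_FF (Q : (MvPolynomial σ k)[X]) : sw (FF Q) = - FF Q := by
  have h := ev_FF (σ := σ) (k := k) (A := (LL σ k)[X]) iC
    (fun i => C (C (MvPolynomial.X i))) (C X) X Q
  rw [← id_ev, RingHom.id_apply] at h
  have h2 := congrArg (fun φ : (LL σ k)[X] →+* (LL σ k)[X] => φ (FF Q))
    (ev_sw (σ := σ) (k := k) (A := (LL σ k)[X]) iC (fun i => C (C (MvPolynomial.X i))) (C X) X)
  simp only [RingHom.comp_apply] at h2
  rw [← id_ev, RingHom.id_apply, ev_FF] at h2
  rw [h2, h]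
  exact (neg_sub (α := (LL σ k)[X]) _ _).symm

theorem Dg_FF (Q : (MvPolynomial σ k)[X]) : Dg (FF Q) = 0 := by
  rw [Dg_eq, ev_FF]; exact sub_self _

theorem FF_eq (Q : (MvPolynomial σ k)[X]) : FF Q = Q.map ((C : MM σ k →+* LL σ k).comp (MvPolynomial.rename Sum.inr).toRingHom)
   - C (Q.map (MvPolynomial.rename Sum.inl).toRingHom) := rfl

theorem FF_monic (Q : (MvPolynomial σ k)[X]) (hQ : Q.Monic) (h1 : 1 ≤ Q.natDegree) :
    (FF Q).Monic ∧ (FF Q).natDegree = Q.natDegree := by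
  rw [FF_eq]
  have hm := hQ.map ((C : MM σ k →+* LL σ k).comp (MvPolynomial.rename Sum.inr).toRingHom)
  refine ⟨hm.sub_of_left ?_, ?_⟩
  · refine degree_C_le.trans_lt ?_
    rw [← natDegree_pos_iff_degree_pos, hQ.natDegree_map]; omega
  · rw [natDegree_sub_C, hQ.natDegree_map]

theorem Dg_derivative_FF (Q : (MvPolynomial σ k)[X]) :
    Dg (derivative (FF Q)) = (derivative Q).map (MvPolynomial.rename Sum.inl).toRingHom := by
  rw [FF_eq, derivative_sub, derivative_C, sub_zero, derivative_map]
  generalize derivative Q = R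
  have : (Dg (σ := σ) (k := k)).comp (mapRingHom ((C : MM σ k →+* LL σ k).comp (MvPolynomial.rename Sum.inr).toRingHom)) =
    mapRingHom (MvPolynomial.rename Sum.inl).toRingHom := by
    rw [Dg_eq]
    apply evB_ext <;> simp
  exact congrArg (fun φ : (MvPolynomial σ k)[X] →+* LL σ k => φ R) this

theorem ps_integral_const {E : Type*} [Field E] (a : PowerSeries E) (ha : IsIntegral E a) :
    a = PowerSeries.C (PowerSeries.constantCoeff a) := by
  set b := a - PowerSeries.C (PowerSeries.constantCoeff a) with hb
  have hbi : IsIntegral E b := ha.sub (isIntegral_algebraMap (R := E) (A := PowerSeries E) (x := PowerSeries.constantCoeff a))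
  have h0 : (minpoly E b).coeff 0 = 0 := by
    have h1 := minpoly.aeval E b
    have h2 := congrArg PowerSeries.constantCoeff h1
    rw [aeval_def, hom_eval₂] at h2
    have h3 : PowerSeries.constantCoeff b = 0 := by simp [hb]
    rw [h3, map_zero, eval₂_at_zero] at h2
    simpa using h2
  rw [minpoly.coeff_zero_eq_zero hbi] at h0
  rw [hb, sub_eq_zero] at h0; exact h0

theorem exists_P0 (Q : (MvPolynomial σ k)[X]) (hQ : Q.Monic) (hQ' : derivative Q ≠ 0) :
    ∃ P : (LL σ k)[X], P.Monic ∧ Irreducible P ∧ P ∣ FF Q ∧ Dg P = 0 ∧ Dg (derivative P) ≠ 0 ∧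
     ∃ u : k, u ≠ 0 ∧ sw P = C (C (MvPolynomial.C u)) * P := by
  classical
  have h1 : 1 ≤ Q.natDegree := by
    by_contra h
    rw [natDegree_eq_zero.1 (by omega : Q.natDegree = 0) |>.choose_spec.symm] at hQ'
    simp at hQ'
  have hex : ∃ n, ∃ P : (LL σ k)[X], P.natDegree = n ∧ P.Monic ∧ P ∣ FF Q ∧ Dg P = 0 :=
    ⟨_, FF Q, rfl, (FF_monic Q hQ h1).1, dvd_rfl, Dg_FF Q⟩
  obtain ⟨P, hPn, hPm, hPd, hP0⟩ := Nat.find_spec hex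
  have hmin : ∀ P' : (LL σ k)[X], P'.Monic → P' ∣ FF Q → Dg P' = 0 → P.natDegree ≤ P'.natDegree := by
    intro P' h1 h2 h3
    rw [hPn]; exact Nat.find_min' hex ⟨P', rfl, h1, h2, h3⟩
  have hP1 : P ≠ 1 := by rintro rfl; simp at hP0
  have hirr : Irreducible P := by
    rw [hPm.irreducible_iff_natDegree]
    refine ⟨hP1, ?_⟩
    intro f g hf hg hfg
    have hdeg : f.natDegree + g.natDegree = P.natDegree := by rw [← hfg, hf.natDegree_mul hg]
    have : Dg f * Dg g = 0 := by rw [← map_mul, hfg, hP0]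
    rcases mul_eq_zero.1 this with h | h
    · have := hmin f hf ((Dvd.intro _ hfg).trans hPd) h
      right; omega
    · have := hmin g hg ((Dvd.intro_left _ hfg).trans hPd) h
      left; omega
  obtain ⟨h, hh⟩ := hPd
  have hD : Dg (derivative P) * Dg h ≠ 0 := by
    have h2 : Dg (derivative (FF Q)) = Dg (derivative P) * Dg h := by
      rw [hh, derivative_mul, map_add, map_mul, map_mul, hP0, zero_mul, add_zero]
    rw [← h2, Dg_derivative_FF]
    exact (map_ne_zero_iff (mapRingHom _) (map_injective _ (MvPolynomial.rename_injective _ Sum.inl_injective))).2 hQ'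
  have hprime : Prime P := hirr.prime
  have hdvd : P ∣ sw P := by
    have h3 : P ∣ sw P * sw h := by
      rw [← map_mul, ← hh, sw_FF]
      exact (dvd_neg (α := (LL σ k)[X])).2 ⟨h, hh⟩
    rcases hprime.dvd_or_dvd h3 with h4 | h4
    · exact h4
    · obtain ⟨r, hr⟩ := h4
      have := congrArg Dg hr
      rw [Dg_sw, map_mul, hP0, zero_mul] at this
      exact absurd this (right_ne_zero_of_mul hD)
  have hdvd' : sw P ∣ P := by
    have := map_dvd sw hdvd
    rwa [sw_sw] at this
  obtain ⟨u, hu⟩ := associated_of_dvd_dvd hdvd hdvd'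
  obtain ⟨u1, hu1, hu2⟩ := Polynomial.isUnit_iff.1 u.isUnit
  obtain ⟨u3, hu3, hu4⟩ := Polynomial.isUnit_iff.1 hu1
  obtain ⟨u5, hu5, hu6⟩ := MvPolynomial.isUnit_iff_eq_C_of_isReduced.1 hu3
  refine ⟨P, hPm, hirr, ⟨h, hh⟩, hP0, left_ne_zero_of_mul hD, u5, hu5.ne_zero, ?_⟩
  rw [← hu, ← hu2, ← hu4, hu6]
  exact mul_comm (G := (LL σ k)[X]) _ _

end ThmA

section ThmA2

variable {σ k : Type*} [Field k]

noncomputable def evP {E : Type*} [Field E] (ρ : LL σ k →+* E) (α : PowerSeries E) : (LL σ k)[X] →+* PowerSeries E :=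
  ev ((PowerSeries.C (R := E)).comp (ρ.comp ((C : MM σ k →+* LL σ k).comp MvPolynomial.C)))
    (Sum.elim (fun i => PowerSeries.C (ρ (C (MvPolynomial.X (Sum.inl i)))))
      (fun i => PowerSeries.C (ρ (C (MvPolynomial.X (Sum.inl i)))) + PowerSeries.X *
        PowerSeries.C (ρ (C (MvPolynomial.X (Sum.inr i))) - ρ (C (MvPolynomial.X (Sum.inl i))))))
    (PowerSeries.C (ρ X)) α

theorem evP_eq {E : Type*} [Field E] (ρ : LL σ k →+* E) (α : PowerSeries E) (P : (LL σ k)[X]) :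
    eval₂ coeToPowerSeries.ringHom α ((P.map slL).map (mapRingHom ρ)) = evP ρ α P := by
  have : (eval₂RingHom (coeToPowerSeries.ringHom : E[X] →+* _) α).comp
     ((mapRingHom (mapRingHom ρ)).comp (mapRingHom slL)) = evP ρ α := by
    refine ev_ext (A := PowerSeries E) ?_ ?_ ?_ ?_
    · intro r; simp [evP, slL, slM]
    · rintro (i | i) <;> simp [evP, slL, slM]
    · simp [evP, slL]
    · simp [evP]
  exact congrArg (fun φ : (LL σ k)[X] →+* PowerSeries E => φ P) this

noncomputable def gmap : LL σ k →+* MvPolynomial σ k :=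
  eval₂RingHom (MvPolynomial.eval₂Hom MvPolynomial.C (Sum.elim 0 MvPolynomial.X)) 0

theorem evB_gmap {A : Type*} [CommRing A] (c : k →+* A) (y : σ → A) (x : A) (P : (LL σ k)[X]) :
    evB c y x (P.map gmap) = ev c (Sum.elim 0 y) 0 x P := by
  have : (evB c y x).comp (mapRingHom gmap) = ev c (Sum.elim 0 y) 0 x := by
    refine ev_ext (A := A) ?_ ?_ ?_ ?_
    · intro r; simp [gmap]
    · rintro (i | i) <;> simp [gmap]
    · simp [gmap]
    · simp
  exact congrArg (fun φ : (LL σ k)[X] →+* A => φ P) this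

theorem thmA (Q : (MvPolynomial σ k)[X]) (hQ : Q.Monic) (hQ' : derivative Q ≠ 0) :
    ∃ G : (MvPolynomial σ k)[X], (FF G).Monic ∧ Irreducible (FF G) ∧ FF G ∣ FF Q ∧
      Dg (derivative (FF G)) ≠ 0 := by
  classical
  have hQ1 : 1 ≤ Q.natDegree := by
    by_contra h
    rw [natDegree_eq_zero.1 (by omega : Q.natDegree = 0) |>.choose_spec.symm] at hQ'
    simp at hQ'
  obtain ⟨P, hm, hirr, hdvd, hP0, hP', u, hu, hsw⟩ := exists_P0 Q hQ hQ'
  suffices h : FF (P.map gmap) = P by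
    exact ⟨P.map gmap, by rw [h]; exact hm, by rw [h]; exact hirr, by rw [h]; exact hdvd, by rw [h]; exact hP'⟩
  set G := P.map gmap with hG
  have hP1 : 1 ≤ P.natDegree := by
    by_contra h
    have : P = 1 := eq_one_of_monic_natDegree_zero hm (by omega)
    exact hirr.not_isUnit (this ▸ isUnit_one)
  have hGm : G.Monic := hm.map _
  have hGd : G.natDegree = P.natDegree := hm.natDegree_map _
  obtain ⟨hFm, hFd⟩ := FF_monic G hGm (by omega)
  let E := FractionRing (LL σ k)
  let ρ : LL σ k →+* E := algebraMap (LL σ k) E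
  have hρ : Function.Injective ρ := IsFractionRing.injective (LL σ k) E
  obtain ⟨α, hα0, hα⟩ := gen_branch P hP0 ρ
    (IsUnit.mk0 _ ((map_ne_zero_iff ρ hρ).2 hP'))
  let cE : k →+* E := ρ.comp ((C : MM σ k →+* LL σ k).comp MvPolynomial.C)
  let y0 : σ → E := fun i => ρ (C (MvPolynomial.X (Sum.inl i)))
  let c : k →+* PowerSeries E := (PowerSeries.C (R := E)).comp cE
  let Y0 : σ → PowerSeries E := PowerSeries.C ∘ y0
  let Y1 : σ → PowerSeries E := (fun i => PowerSeries.C (ρ (C (MvPolynomial.X (Sum.inl i)))) + PowerSeries.X *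
        PowerSeries.C (ρ (C (MvPolynomial.X (Sum.inr i))) - ρ (C (MvPolynomial.X (Sum.inl i)))))
  have hevP : evP ρ α = ev c (Sum.elim Y0 Y1) (PowerSeries.C (ρ X)) α := rfl
  have hFFev : ∀ R, evP ρ α (FF R) = evB c Y1 α R - evB c Y0 (PowerSeries.C (ρ X)) R := by
    intro R; rw [hevP, ev_FF]; rfl
  have hconst : ∀ R : (MvPolynomial σ k)[X], evB c Y0 (PowerSeries.C (ρ X)) R = PowerSeries.C (evB cE y0 (ρ X) R) := by
    intro R
    exact (congrArg (fun φ : (MvPolynomial σ k)[X] →+* PowerSeries E => φ R) (evB_nat cE y0 (ρ X) (PowerSeries.C (R := E)))).symm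
  have hcc : ∀ R : (MvPolynomial σ k)[X], PowerSeries.constantCoeff (evB c Y1 α R) = evB cE y0 (ρ X) R := by
    intro R
    have h1 := congrArg (fun φ : (MvPolynomial σ k)[X] →+* E => φ R) (evB_nat c Y1 α (PowerSeries.constantCoeff (R := E)))
    simp only [RingHom.comp_apply] at h1
    rw [h1, hα0]
    congr 2
    ext i; simp [Y1, y0]
  have hPα : evP ρ α P = 0 := by rw [← evP_eq]; exact hα
  have hQα : evB c Y1 α Q = PowerSeries.C (evB cE y0 (ρ X) Q) := by
    rw [← hconst, ← sub_eq_zero, ← hFFev]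
    obtain ⟨h, hh⟩ := hdvd
    rw [hh, map_mul, hPα, zero_mul]
  let θ : LL σ k →+* PowerSeries E := eval₂RingHom (MvPolynomial.eval₂Hom c (Sum.elim Y1 0)) α
  let pE : E[X] := Q.map (MvPolynomial.eval₂Hom cE 0) - C (evB cE y0 (ρ X) Q)
  have hpE : pE.Monic := by
    refine (hQ.map _).sub_of_left ?_
    refine degree_C_le.trans_lt ?_
    rw [← natDegree_pos_iff_degree_pos, hQ.natDegree_map]; omega
  have hFθ : (FF Q).map θ = pE.map (algebraMap E (PowerSeries E)) := by
    have e1 : θ.comp ((C : MM σ k →+* LL σ k).comp (MvPolynomial.rename Sum.inr).toRingHom) =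
        (algebraMap E (PowerSeries E)).comp (MvPolynomial.eval₂Hom cE 0) := by
      apply MvPolynomial.ringHom_ext
      · intro r; simp [θ, c]
      · intro i; simp [θ]
    have e2 : θ (Q.map (MvPolynomial.rename Sum.inl).toRingHom) = evB c Y1 α Q := by
      have : θ.comp (mapRingHom (MvPolynomial.rename Sum.inl).toRingHom) = evB c Y1 α := by
        apply evB_ext <;> simp [θ]
      exact congrArg (fun φ : (MvPolynomial σ k)[X] →+* PowerSeries E => φ Q) this
    rw [FF_eq, Polynomial.map_sub, Polynomial.map_map, e1, map_C, e2, hQα]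
    simp only [pE]
    rw [Polynomial.map_sub, Polynomial.map_map, map_C]
    rfl
  have hint := isIntegral_coeff_of_dvd pE (P.map θ) hpE (hm.map _)
    (by rw [← hFθ]; exact Polynomial.map_dvd _ hdvd) 0
  have hco : (P.map θ).coeff 0 = c u * evB c Y1 α G := by
    have e1 : (P.map θ).coeff 0 = ev c (Sum.elim Y1 0) α 0 P := by
      rw [coeff_zero_eq_eval_zero, eval_map]; rfl
    have e2 := congrArg (fun φ : (LL σ k)[X] →+* PowerSeries E => φ P) (ev_sw c (Sum.elim 0 Y1) 0 α)
    simp only [RingHom.comp_apply] at e2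
    have e3 : (Sum.elim 0 Y1 : σ ⊕ σ → PowerSeries E) ∘ Sum.swap = Sum.elim Y1 0 := by
      ext1 (i | i) <;> rfl
    rw [e1, ← e3, ← e2, hsw, map_mul, ev_c, hG, evB_gmap]
  have hGi : IsIntegral E (evB c Y1 α G) := by
    rw [hco] at hint
    have h1 : evB c Y1 α G = c u⁻¹ * (c u * evB c Y1 α G) := by
      rw [← mul_assoc, ← map_mul, inv_mul_cancel₀ hu, map_one, one_mul]
    rw [h1]
    exact IsIntegral.mul (isIntegral_algebraMap (R := E) (A := PowerSeries E) (x := cE u⁻¹)) hint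
  have hGα : evP ρ α (FF G) = 0 := by
    rw [hFFev, hconst, ps_integral_const _ hGi, hcc, sub_self]
  have hd := gen_dvd P hm hirr (E := E) α hα ((FF G).map slL |>.map (mapRingHom ρ)) (by rw [evP_eq]; exact hGα)
  have hd1 := Polynomial.map_dvd (evalRingHom (1:E)) hd
  have hone : ∀ R : (LL σ k)[X], ((R.map slL).map (mapRingHom ρ)).map (evalRingHom 1) = R.map ρ := by
    intro R
    rw [Polynomial.map_map, Polynomial.map_map]
    congr 1
    have h2 : (evalRingHom (1:E)).comp (mapRingHom ρ) = ρ.comp (evalRingHom 1) := by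
      refine Polynomial.ringHom_ext' (RingHom.ext fun r => ?_) ?_ <;> simp
    rw [h2, RingHom.comp_assoc, slL_one, RingHom.comp_id]
  rw [hone, hone] at hd1
  have := eq_of_monic_of_dvd_of_natDegree_le (hm.map ρ) (hFm.map ρ) hd1 (by
    rw [hm.natDegree_map, hFm.natDegree_map, hFd, hGd])
  exact Polynomial.map_injective ρ hρ this

end ThmA2

section Comb

theorem sum_fib {V K : Type*} [Fintype V] [Fintype K] (f : V → K) :
    ∑ z, Nat.card {v // f v = z} = Fintype.card V := by
  classical
  rw [← Nat.card_sigma, Nat.card_congr (Equiv.sigmaFiberEquiv f), Nat.card_eq_fintype_card]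

theorem sum_fib_sq {V K : Type*} [Fintype V] [Fintype K] (f : V → K) :
    ∑ z, (Nat.card {v // f v = z})^2 = Nat.card {z : V × V // f z.1 = f z.2} := by
  classical
  have h1 : ∀ z, (Nat.card {v // f v = z})^2 = Nat.card {x : {z : V × V // f z.1 = f z.2} // f x.1.1 = z} := by
    intro z
    rw [sq, ← Nat.card_prod]
    refine Nat.card_congr
      { toFun := fun x => ⟨⟨(x.1.1, x.2.1), by simp [x.1.2, x.2.2]⟩, x.1.2⟩
        invFun := fun x => (⟨x.1.1.1, x.2⟩, ⟨x.1.1.2, by rw [← x.1.2]; exact x.2⟩)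
        left_inv := fun x => rfl
        right_inv := fun x => rfl }
  rw [Finset.sum_congr rfl fun z _ => h1 z, sum_fib (fun x : {z : V × V // f z.1 = f z.2} => f x.1.1),
    Nat.card_eq_fintype_card]

theorem fib_comp {V K : Type*} [Fintype V] [Fintype K] [DecidableEq K] (f g : V → K) (h : K → K) (hh : ∀ v, f v = h (g v)) (z : K) :
    Nat.card {v // f v = z} = ∑ b ∈ Finset.univ.filter (fun b => h b = z), Nat.card {v // g v = b} := by
  classical
  rw [Finset.sum_filter]
  have h1 := sum_fib (fun x : {v // f v = z} => g x.1)
  rw [Nat.card_eq_fintype_card, ← h1]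
  refine Finset.sum_congr rfl fun b _ => ?_
  split_ifs with hb
  · refine Nat.card_congr
      { toFun := fun x => ⟨x.1.1, x.2⟩
        invFun := fun x => ⟨⟨x.1, by rw [hh, x.2, hb]⟩, x.2⟩
        left_inv := fun x => rfl
        right_inv := fun x => rfl }
  · have : IsEmpty {x : {v // f v = z} // g x.1 = b} := ⟨fun x => hb (by rw [← x.2, ← hh, x.1.2])⟩
    simp

theorem comb {V K : Type*} [Fintype V] [Fintype K] [Nonempty K] (f g : V → K)
    (hfg : ∀ v v', g v = g v' → f v = f v') (η : ℝ) (hη : 0 ≤ η)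
    (hN : (Nat.card {z : V × V // g z.1 = g z.2} : ℝ) ≤ (Fintype.card V : ℝ)^2 / Fintype.card K * (1 + η))
    (himg : Fintype.card K ≤ Nat.card (Set.range f) + 2) :
    ∑ z, |(Nat.card {v // f v = z} : ℝ) - (Fintype.card V : ℝ) / Fintype.card K| ≤
      Fintype.card V * (√η + 4 / Fintype.card K) := by
  classical
  set q : ℝ := (Fintype.card K : ℝ) with hq
  set M : ℝ := (Fintype.card V : ℝ) with hM
  have hq0 : 0 < q := by rw [hq]; exact_mod_cast Fintype.card_pos
  have hM0 : 0 ≤ M := by rw [hM]; positivity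
  set N : K → ℝ := fun b => (Nat.card {v // g v = b} : ℝ) with hNdef
  have hs1 : ∑ b, N b = M := by
    rw [hM, ← sum_fib g]; push_cast; rfl
  have hs2 : ∑ b, (N b)^2 = (Nat.card {z : V × V // g z.1 = g z.2} : ℝ) := by
    rw [← sum_fib_sq g]; push_cast; rfl
  have hvar : ∑ b, |N b - M / q|^2 ≤ M^2 / q * η := by
    have : ∑ b, |N b - M / q|^2 = ∑ b, (N b)^2 - M^2/q := by
      simp only [sq_abs, sub_sq, Finset.sum_add_distrib, Finset.sum_sub_distrib]
      rw [← Finset.sum_mul, ← Finset.mul_sum, hs1, Finset.sum_const, Finset.card_univ, nsmul_eq_mul, ← hq]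
      field_simp; ring
    rw [this, hs2]; linarith
  have hA : ∑ b, |N b - M / q| ≤ M * √η := by
    apply abs_le_of_sq_le_sq' _ (by positivity) |>.2
    refine (sq_sum_le_card_mul_sum_sq).trans ?_
    rw [Finset.card_univ, ← hq, mul_pow, Real.sq_sqrt hη]
    calc _ ≤ q * (M^2/q*η) := by gcongr
      _ = _ := by field_simp
  obtain ⟨h, hh⟩ : ∃ h : K → K, ∀ v, f v = h (g v) := by
    refine ⟨fun b => if hb : ∃ v, g v = b then f hb.choose else Classical.arbitrary K, fun v => ?_⟩
    have hb : ∃ v', g v' = g v := ⟨v, rfl⟩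
    simp only [hb, dif_pos]
    exact (hfg _ _ hb.choose_spec).symm
  set c : K → ℕ := fun z => (Finset.univ.filter (fun b => h b = z)).card with hc
  have hcs : ∑ z, (c z : ℝ) = q := by
    have : ∑ z, c z = Fintype.card K := by
      rw [hc, ← Finset.card_univ]
      exact (Finset.card_eq_sum_card_fiberwise (fun _ _ => Finset.mem_univ _)).symm
    rw [hq, ← this]; push_cast; rfl
  have hzero : ((Finset.univ.filter (fun z => c z = 0)).card : ℝ) ≤ 2 := by
    have h1 : (Finset.univ.filter (fun z => c z = 0)) ⊆ (Finset.univ.filter (fun z => z ∈ Set.range f))ᶜ := by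
      intro z hz
      simp only [Finset.mem_filter, Finset.mem_univ, true_and, Finset.mem_compl, hc, Finset.card_eq_zero,
        Finset.filter_eq_empty_iff] at hz ⊢
      rintro ⟨v, hv⟩
      exact hz (x := g v) trivial (by rw [← hh, hv])
    have h2 := Finset.card_le_card h1
    rw [Finset.card_compl] at h2
    have h3 : Nat.card (Set.range f) = (Finset.univ.filter (fun z => z ∈ Set.range f)).card := by
      rw [Nat.card_eq_fintype_card, ← Fintype.card_subtype]
    rw [h3] at himg
    exact_mod_cast (show _ ≤ 2 by omega)
  have hB : ∑ z, |(c z : ℝ) - 1| ≤ 4 := by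
    have h1 : ∀ z, |(c z : ℝ) - 1| = ((c z : ℝ) - 1) + 2 * (if c z = 0 then 1 else 0) := by
      intro z
      split_ifs with hz
      · simp [hz]; norm_num
      · have : (1 : ℝ) ≤ c z := by exact_mod_cast Nat.one_le_iff_ne_zero.2 hz
        rw [abs_of_nonneg (by linarith)]; ring
    rw [Finset.sum_congr rfl fun z _ => h1 z, Finset.sum_add_distrib, Finset.sum_sub_distrib, hcs, ← Finset.mul_sum,
      Finset.sum_boole]
    simp only [Finset.sum_const, Finset.card_univ, nsmul_eq_mul, mul_one, ← hq]
    linarith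
  have hpt : ∀ z, |(Nat.card {v // f v = z} : ℝ) - M / q| ≤
      ∑ b ∈ Finset.univ.filter (fun b => h b = z), |N b - M / q| + M / q * |(c z : ℝ) - 1| := by
    intro z
    have h1 : (Nat.card {v // f v = z} : ℝ) - M / q =
        ∑ b ∈ Finset.univ.filter (fun b => h b = z), (N b - M / q) + M / q * ((c z : ℝ) - 1) := by
      rw [fib_comp f g h hh z, Finset.sum_sub_distrib, Finset.sum_const, nsmul_eq_mul]
      push_cast
      simp only [hc, hNdef]
      ring
    rw [h1]
    refine (abs_add_le _ _).trans (add_le_add (Finset.abs_sum_le_sum_abs _ _) ?_)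
    rw [abs_mul, abs_of_nonneg (by positivity)]
  calc _ ≤ ∑ z, (∑ b ∈ Finset.univ.filter (fun b => h b = z), |N b - M / q| + M / q * |(c z : ℝ) - 1|) :=
        Finset.sum_le_sum fun z _ => hpt z
    _ = ∑ b, |N b - M / q| + M / q * ∑ z, |(c z : ℝ) - 1| := by
        rw [Finset.sum_add_distrib, ← Finset.mul_sum]
        congr 1
        exact Finset.sum_fiberwise _ _ _
    _ ≤ M * √η + M / q * 4 := by gcongr
    _ = _ := by ring

end Comb

section Q

theorem Q_count {σ : Type*} [Fintype σ] (p : ℕ) [Fact p.Prime] (Q : (MvPolynomial σ (ZMod p))[X]) (hQ : Q.Monic)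
    (hQ' : derivative Q ≠ 0) : ∃ (G : (MvPolynomial σ (ZMod p))[X]) (C : ℕ),
    ∀ (K : Type) [Field K] [Fintype K] [Algebra (ZMod p) K],
     (∀ v v' : (σ → K) × K, evB (algebraMap (ZMod p) K) v.1 v.2 G = evB (algebraMap (ZMod p) K) v'.1 v'.2 G →
       evB (algebraMap (ZMod p) K) v.1 v.2 Q = evB (algebraMap (ZMod p) K) v'.1 v'.2 Q) ∧
     ∀ a b : ℕ, Fintype.card K = p^a * p^b → p^a ≤ p^b → C ≤ p^a →
      (Fintype.card K - 1) * Nat.card {z : ((σ → K) × K) × ((σ → K) × K) //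
        evB (algebraMap (ZMod p) K) z.1.1 z.1.2 G = evB (algebraMap (ZMod p) K) z.2.1 z.2.2 G}
      ≤ Fintype.card K ^ (2 * Fintype.card σ + 1) * (Fintype.card K + C * p^b) := by
  obtain ⟨G, hm, hirr, hdvd, hD⟩ := thmA Q hQ hQ'
  obtain ⟨C, hC⟩ := gen_count p (FF G) hm hirr (Dg_FF G) hD
  refine ⟨G, C, fun K _ _ _ => ⟨?_, ?_⟩⟩
  · intro v v' h
    obtain ⟨H, hH⟩ := hdvd
    have h1 := congrArg (ev (algebraMap (ZMod p) K) (Sum.elim v.1 v'.1) v.2 v'.2) hH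
    rw [map_mul, ev_FF, ev_FF] at h1
    simp only [Sum.elim_comp_inl, Sum.elim_comp_inr] at h1
    rw [h, sub_self, zero_mul, sub_eq_zero] at h1
    exact h1.symm
  · intro a b h1 h2 h3
    have := hC K a b h1 h2 h3
    have hcard : Fintype.card (σ ⊕ σ) = 2 * Fintype.card σ := by rw [Fintype.card_sum]; ring
    rw [hcard] at this
    refine le_trans (Nat.mul_le_mul_left _ (le_of_eq ?_)) this
    refine Nat.card_congr (Equiv.subtypeEquiv
      { toFun := fun z => ((Sum.elim z.1.1 z.2.1, z.1.2), z.2.2)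
        invFun := fun z => ((z.1.1 ∘ Sum.inl, z.1.2), (z.1.1 ∘ Sum.inr, z.2))
        left_inv := fun z => rfl
        right_inv := fun z => by
          ext1
          · ext1
            · exact Sum.elim_comp_inl_inr _
            · rfl
          · rfl } ?_)
    intro z
    have h4 : ((FF G).map (pt (k := ZMod p) (Sum.elim z.1.1 z.2.1) z.1.2)).eval z.2.2
      = ev (algebraMap (ZMod p) K) (Sum.elim z.1.1 z.2.1) z.1.2 z.2.2 (FF G) := by
      rw [eval_map]; rfl
    change _ ↔ ((FF G).map (pt (k := ZMod p) (Sum.elim z.1.1 z.2.1) z.1.2)).eval z.2.2 = 0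
    rw [h4, ev_FF]
    simp only [Sum.elim_comp_inl, Sum.elim_comp_inr]
    rw [sub_eq_zero, eq_comm]

end Q

section Nagata

theorem pth_root {m p : ℕ} [Fact p.Prime] (f : MvPolynomial (Fin m) (ZMod p)) (hf : ∀ i, MvPolynomial.pderiv i f = 0) :
    ∃ h, f = h ^ p := by
  classical
  have hdiv : ∀ d ∈ f.support, ∀ i, p ∣ d i := by
    intro d hd i
    by_contra hnd
    have hpos : d i ≠ 0 := fun h => hnd (h ▸ dvd_zero p)
    have h1 := MvPolynomial.coeff_pderiv (i := i) f (d - Finsupp.single i 1)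
    have h2 : d - Finsupp.single i 1 + Finsupp.single i 1 = d := by
      ext j
      by_cases hj : i = j
      · subst hj; simp; omega
      · simp [Finsupp.single_apply, hj]
    rw [hf i, h2, MvPolynomial.coeff_zero] at h1
    have h3 : (((d - Finsupp.single i 1 : Fin m →₀ ℕ) i : ℕ) : ZMod p) + 1 = (d i : ZMod p) := by
      have : (d - Finsupp.single i 1 : Fin m →₀ ℕ) i + 1 = d i := by simp; omega
      exact_mod_cast congrArg (Nat.cast : ℕ → ZMod p) this
    rw [h3] at h1
    rcases mul_eq_zero.1 h1.symm with h | h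
    · exact (MvPolynomial.mem_support_iff.1 hd) h
    · exact hnd ((ZMod.natCast_eq_zero_iff _ _).1 h)
  refine ⟨∑ d ∈ f.support, MvPolynomial.monomial (d.mapRange (· / p) (Nat.zero_div p)) (f.coeff d), ?_⟩
  rw [← MvPolynomial.expand_zmod, map_sum]
  conv_lhs => rw [MvPolynomial.as_sum f]
  refine Finset.sum_congr rfl fun d hd => ?_
  rw [MvPolynomial.expand_monomial]
  have : d = p • Finsupp.mapRange (fun x => x / p) (Nat.zero_div p) d := by
    ext i
    simp [Nat.mul_div_cancel' (hdiv d hd i)]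
  try rw [← MvPolynomial.monomial_eq]
  exact congrArg (fun e => MvPolynomial.monomial e (f.coeff d)) this

theorem root_reduction {m p : ℕ} [Fact p.Prime] : ∀ (n : ℕ) (f : MvPolynomial (Fin m) (ZMod p)), f.totalDegree ≤ n →
    f.totalDegree ≠ 0 → ∃ (g : MvPolynomial (Fin m) (ZMod p)) (j : ℕ) (i : Fin m), f = g ^ (p^j) ∧ MvPolynomial.pderiv i g ≠ 0 := by
  intro n
  induction n with
  | zero => intro f h1 h2; omega
  | succ n ih =>
    intro f h1 h2
    by_cases h : ∀ i, MvPolynomial.pderiv i f = 0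
    · obtain ⟨g, hg⟩ := pth_root f h
      have hd : f.totalDegree = g.totalDegree * p := by
        rw [hg, ← MvPolynomial.expand_zmod, MvPolynomial.totalDegree_expand]
      have hp := (Fact.out : p.Prime).two_le
      have hg0 : g.totalDegree ≠ 0 := by intro h0; rw [h0] at hd; omega
      obtain ⟨g', j, i, h3, h4⟩ := ih g (by nlinarith [Nat.pos_of_ne_zero hg0]) hg0
      refine ⟨g', j+1, i, ?_, h4⟩
      rw [hg, h3, ← pow_mul, pow_succ]
    · push Not at h
      obtain ⟨i, hi⟩ := h
      exact ⟨f, 0, i, by simp, hi⟩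

theorem sum_monic {R ι : Type*} [CommRing R] [Nontrivial R] [DecidableEq ι] (s : Finset ι) (hs : s.Nonempty) (c : ι → R) (M : ι → R[X])
    (w : ι → ℕ) (hM : ∀ d ∈ s, (M d).Monic) (hw : ∀ d ∈ s, (M d).natDegree = w d) (hinj : Set.InjOn w s) :
    ∃ d ∈ s, ∀ u, u * c d = 1 → (C u * ∑ d ∈ s, C (c d) * M d).Monic := by
  obtain ⟨d, hd, hmax⟩ := s.exists_max_image w hs
  refine ⟨d, hd, fun u hu => ?_⟩
  rw [← Finset.add_sum_erase _ _ hd, mul_add, ← mul_assoc, ← C_mul, hu, C_1, one_mul]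
  refine (hM d hd).add_of_left ?_
  rw [degree_eq_natDegree (hM d hd).ne_zero, hw d hd]
  refine lt_of_le_of_lt (b := (s.erase d).sup fun e => ((w e : ℕ) : WithBot ℕ)) ?_ ?_
  · rw [Finset.mul_sum]
    refine (degree_sum_le _ _).trans (Finset.sup_mono_fun fun e he => ?_)
    rw [← mul_assoc, ← C_mul]
    rw [← hw e (Finset.mem_of_mem_erase he)]
    exact degree_le_natDegree.trans (WithBot.coe_le_coe.2 (natDegree_C_mul_le _ _))
  · rw [Finset.sup_lt_iff (WithBot.bot_lt_coe _)]
    intro e he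
    have h1 := hmax e (Finset.mem_of_mem_erase he)
    have h2 : w e ≠ w d := fun h => (Finset.ne_of_mem_erase he) (hinj (Finset.mem_of_mem_erase he) hd h)
    exact_mod_cast lt_of_le_of_ne h1 h2

noncomputable def nag {m : ℕ} {k : Type*} [Field k] (N : Fin m → ℕ) (g : MvPolynomial (Fin m) k) : (MvPolynomial (Fin m) k)[X] :=
  MvPolynomial.eval₂Hom ((C : MvPolynomial (Fin m) k →+* _).comp MvPolynomial.C)
    (fun i => X ^ N i + C (MvPolynomial.X i)) g

theorem nag_evB {m : ℕ} {k : Type*} [Field k] (N : Fin m → ℕ) (g : MvPolynomial (Fin m) k)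
    {A : Type*} [CommRing A] [Algebra k A] (y : Fin m → A) (x : A) :
    evB (algebraMap k A) y x (nag N g) = MvPolynomial.aeval (fun i => x ^ N i + y i) g := by
  have : (evB (algebraMap k A) y x).comp (MvPolynomial.eval₂Hom ((C : MvPolynomial (Fin m) k →+* _).comp MvPolynomial.C)
    (fun i => X ^ N i + C (MvPolynomial.X i))) = (MvPolynomial.aeval (R := k) (fun i => x ^ N i + y i)).toRingHom := by
    apply MvPolynomial.ringHom_ext <;> simp
  exact congrArg (fun φ : MvPolynomial (Fin m) k →+* A => φ g) this

theorem nag_deriv {m : ℕ} {k : Type*} [Field k] (N : Fin m → ℕ) (hN : ∀ i, (N i : k) = 1) (g : MvPolynomial (Fin m) k) :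
    derivative (nag N g) = ∑ i, nag N (MvPolynomial.pderiv i g) * X ^ (N i - 1) := by
  classical
  unfold nag
  induction g using MvPolynomial.induction_on with
  | C a => simp
  | add f g hf hg => simp only [map_add, hf, hg, add_mul, Finset.sum_add_distrib]
  | mul_X f i hf =>
    have hNi : ((N i : ℕ) : (MvPolynomial (Fin m) k)) = 1 := by
      have := congrArg (MvPolynomial.C : k →+* MvPolynomial (Fin m) k) (hN i)
      simpa using this
    simp only [map_mul, derivative_mul, hf, MvPolynomial.pderiv_mul, map_add, add_mul, Finset.sum_add_distrib]
    congr 1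
    · rw [Finset.sum_mul]
      refine Finset.sum_congr rfl fun j _ => ?_
      ring
    · rw [Finset.sum_eq_single i]
      · simp [MvPolynomial.pderiv_X_self, derivative_X_pow, hNi]
      · intro j _ hj
        simp [MvPolynomial.pderiv_X_of_ne (Ne.symm hj)]
      · simp

theorem nagata {m p : ℕ} [Fact p.Prime] (g : MvPolynomial (Fin m) (ZMod p)) (i : Fin m) (hi : MvPolynomial.pderiv i g ≠ 0) :
    ∃ (N : Fin m → ℕ) (u : ZMod p), u ≠ 0 ∧ (C (MvPolynomial.C u) * nag N g).Monic ∧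
      derivative (C (MvPolynomial.C u) * nag N g) ≠ 0 := by
  classical
  set B := 1 + p * (g.totalDegree + 1) with hB
  have hp := (Fact.out : p.Prime).two_le
  have hB1 : 1 < B := by nlinarith
  have hBt : g.totalDegree < B := by nlinarith
  set N : Fin m → ℕ := fun i => B ^ (i : ℕ) with hNdef
  have hN : ∀ i, ((N i : ℕ) : ZMod p) = 1 := by intro i; simp [hNdef, hB]
  have hN1 : ∀ i, 1 ≤ N i := fun i => Nat.one_le_pow _ _ (by omega)
  have hNinj : ∀ i j, N i = N j → i = j := fun i j h => Fin.ext (Nat.pow_right_injective hB1 h)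
  have hg0 : g ≠ 0 := by rintro rfl; simp at hi
  have hsum : nag N g = ∑ d ∈ g.support, C (MvPolynomial.C (g.coeff d)) * ∏ i, (X ^ N i + C (MvPolynomial.X i)) ^ d i := by
    simp only [nag, MvPolynomial.coe_eval₂Hom]
    rw [MvPolynomial.eval₂_eq']; rfl
  have hmon : ∀ i, (X ^ N i + C (MvPolynomial.X i) : (MvPolynomial (Fin m) (ZMod p))[X]).Monic := fun i =>
    monic_X_pow_add_C _ (by have := hN1 i; omega)
  have hlt : ∀ d ∈ g.support, ∀ l ∈ List.ofFn (fun i => d i), l < B := by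
    intro d hd l hl
    rw [List.mem_ofFn] at hl
    obtain ⟨j, rfl⟩ := hl
    refine lt_of_le_of_lt ?_ hBt
    refine le_trans ?_ (MvPolynomial.le_totalDegree hd)
    rw [Finsupp.sum_fintype _ _ (by simp)]
    exact Finset.single_le_sum (f := fun j => d j) (fun _ _ => Nat.zero_le _) (Finset.mem_univ j)
  obtain ⟨d, hd, hdm⟩ := sum_monic g.support (by simpa using hg0) (fun d => MvPolynomial.C (g.coeff d))
    (fun d => ∏ i, (X ^ N i + C (MvPolynomial.X i)) ^ d i) (fun d => ∑ i, d i * N i)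
    (fun d _ => monic_prod_of_monic _ _ fun i _ => (hmon i).pow _)
    (by
      intro d _
      rw [natDegree_prod_of_monic _ _ fun i _ => (hmon i).pow _]
      refine Finset.sum_congr rfl fun i _ => ?_
      rw [(hmon i).natDegree_pow, natDegree_X_pow_add_C])
    (by
      intro d hd e he h
      refine Finsupp.ext (congrFun (List.ofFn_inj.mp ?_))
      apply Nat.ofDigits_inj_of_len_eq hB1 (by simp) (hlt d hd) (hlt e he)
      simpa only [Nat.ofDigits_eq_sum_mapIdx, List.mapIdx_eq_ofFn, List.get_ofFn, List.length_ofFn,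
        Fin.val_cast, List.sum_ofFn] using! h)
  have hc : g.coeff d ≠ 0 := MvPolynomial.mem_support_iff.1 hd
  refine ⟨N, (g.coeff d)⁻¹, inv_ne_zero hc, ?_, ?_⟩
  · rw [hsum]; apply hdm
    rw [← MvPolynomial.C_mul, inv_mul_cancel₀ hc, MvPolynomial.C_1]
  · rw [derivative_C_mul]
    refine mul_ne_zero (by simpa using hc) ?_
    rw [nag_deriv N hN]
    intro h0
    have h1 := congrArg (evB ((C : MvPolynomial (Fin m) (ZMod p) →+* _).comp MvPolynomial.C)
      (fun i => C (MvPolynomial.X i) - X ^ N i) X) h0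
    have h2 : ∀ f : MvPolynomial (Fin m) (ZMod p), evB ((C : MvPolynomial (Fin m) (ZMod p) →+* _).comp MvPolynomial.C)
      (fun i => C (MvPolynomial.X i) - X ^ N i) X (nag N f) = C f := by
      intro f
      have : (evB ((C : MvPolynomial (Fin m) (ZMod p) →+* _).comp MvPolynomial.C)
        (fun i => C (MvPolynomial.X i) - X ^ N i) X).comp (MvPolynomial.eval₂Hom ((C : MvPolynomial (Fin m) (ZMod p) →+* _).comp MvPolynomial.C)
        (fun i => X ^ N i + C (MvPolynomial.X i))) = C := by
        apply MvPolynomial.ringHom_ext <;> simp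
      exact congrArg (fun φ : MvPolynomial (Fin m) (ZMod p) →+* _ => φ f) this
    rw [map_sum, map_zero] at h1
    simp only [map_mul, h2, map_pow, evB_x] at h1
    have h3 := congrArg (fun P => P.coeff (N i - 1)) h1
    simp only [finsetSum_coeff, coeff_C_mul, coeff_X_pow, coeff_zero] at h3
    rw [Finset.sum_eq_single i] at h3
    · simp at h3; exact hi h3
    · intro j _ hj
      rw [if_neg, mul_zero]
      intro h4
      exact hj (hNinj j i (by have := hN1 i; have := hN1 j; omega))
    · simp

end Nagata

section Dev

noncomputable def dev {V K : Type*} [Fintype V] [Fintype K] (f : V → K) : ℝ :=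
  ∑ z, |(Nat.card {v // f v = z} : ℝ) - (Fintype.card V : ℝ) / Fintype.card K|

theorem dev_equiv {V K : Type*} [Fintype V] [Fintype K] (f : V → K) (e : K ≃ K) : dev (fun v => e (f v)) = dev f := by
  unfold dev
  rw [← Equiv.sum_comp e]
  refine Finset.sum_congr rfl fun z _ => ?_
  simp only [EmbeddingLike.apply_eq_iff_eq]

theorem range_equiv {V K : Type*} (f : V → K) (e : K ≃ K) :
    Nat.card (Set.range fun v => e (f v)) = Nat.card (Set.range f) := by
  rw [show (fun v => e (f v)) = e ∘ f from rfl, Set.range_comp]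
  exact Nat.card_image_of_injective e.injective _

theorem dev_prod {V W K : Type*} [Fintype V] [Fintype W] [Fintype K] (f : V → K) (e : W ≃ V × K) [Nonempty K] :
    dev (fun w => f (e w).1) = Fintype.card K * dev f := by
  unfold dev
  rw [Finset.mul_sum]
  refine Finset.sum_congr rfl fun z _ => ?_
  have h1 : Nat.card {w // f (e w).1 = z} = Nat.card {v // f v = z} * Fintype.card K := by
    rw [← Nat.card_eq_fintype_card (α := K), ← Nat.card_prod]
    refine Nat.card_congr ((Equiv.subtypeEquiv e (q := fun x : V × K => f x.1 = z) (fun w => Iff.rfl)).trans ?_)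
    exact { toFun := fun x => (⟨x.1.1, x.2⟩, x.1.2)
            invFun := fun x => ⟨(x.1.1, x.2), x.1.2⟩
            left_inv := fun x => rfl
            right_inv := fun x => rfl }
  have h2 : Fintype.card W = Fintype.card V * Fintype.card K := by rw [Fintype.card_congr e, Fintype.card_prod]
  have hq : (Fintype.card K : ℝ) ≠ 0 := by exact_mod_cast Fintype.card_ne_zero
  rw [h1, h2, ← abs_of_nonneg (Nat.cast_nonneg (α := ℝ) (Fintype.card K)), ← abs_mul, abs_of_nonneg (Nat.cast_nonneg (α := ℝ) (Fintype.card K))]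
  congr 1
  push_cast
  field_simp

theorem K_level {m p : ℕ} [Fact p.Prime] (g : MvPolynomial (Fin m) (ZMod p)) (j : ℕ) (N : Fin m → ℕ) (u : ZMod p) (hu : u ≠ 0)
    (K : Type) [Field K] [Fintype K] [Algebra (ZMod p) K] :
    Fintype.card K * dev (fun y : Fin m → K => MvPolynomial.aeval y (g ^ (p^j))) =
      dev (fun v : (Fin m → K) × K => evB (algebraMap (ZMod p) K) v.1 v.2 (C (MvPolynomial.C u) * nag N g)) ∧
    Nat.card (Set.range (fun y : Fin m → K => MvPolynomial.aeval y (g ^ (p^j)))) =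
      Nat.card (Set.range (fun v : (Fin m → K) × K => evB (algebraMap (ZMod p) K) v.1 v.2 (C (MvPolynomial.C u) * nag N g))) := by
  have hchar : CharP K p := charP_of_injective_algebraMap (algebraMap (ZMod p) K).injective p
  have hu' : algebraMap (ZMod p) K u ≠ 0 := (_root_.map_ne_zero _).2 hu
  let e1 : K ≃ K := Equiv.mulLeft₀ _ hu'
  let e2 : K ≃ K := Equiv.ofBijective (fun x => x ^ (p^j)) (Finite.injective_iff_bijective.1 (by
    intro x y h
    exact iterateFrobenius_inj K p j (by simpa [iterateFrobenius_def] using h)))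
  let sh : (Fin m → K) × K ≃ (Fin m → K) × K :=
    { toFun := fun v => (fun i => v.2 ^ N i + v.1 i, v.2)
      invFun := fun v => (fun i => v.1 i - v.2 ^ N i, v.2)
      left_inv := fun v => by ext <;> simp
      right_inv := fun v => by ext <;> simp }
  have h1 : (fun y : Fin m → K => MvPolynomial.aeval y (g ^ (p^j))) = fun y => e2 (MvPolynomial.aeval y g) := by
    ext y; simp [e2]
  have h2 : (fun v : (Fin m → K) × K => evB (algebraMap (ZMod p) K) v.1 v.2 (C (MvPolynomial.C u) * nag N g)) =
     fun v => e1 (MvPolynomial.aeval (sh v).1 g) := by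
    ext v; simp [e1, sh, nag_evB]
  rw [h1, h2]
  constructor
  · rw [dev_equiv (fun y : Fin m → K => MvPolynomial.aeval y g) e2,
      dev_equiv (fun v : (Fin m → K) × K => MvPolynomial.aeval (sh v).1 g) e1, dev_prod (fun y : Fin m → K => MvPolynomial.aeval y g) sh]
  · rw [range_equiv (fun y : Fin m → K => MvPolynomial.aeval y g) e2,
      range_equiv (fun v : (Fin m → K) × K => MvPolynomial.aeval (sh v).1 g) e1]
    congr 2
    ext z
    constructor
    · rintro ⟨y, rfl⟩; exact ⟨sh.symm (y, 0), by simp⟩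
    · rintro ⟨v, rfl⟩; exact ⟨(sh v).1, rfl⟩

theorem poly_equi_aux {m p : ℕ} [Fact p.Prime] (f : MvPolynomial (Fin m) (ZMod p)) (hf : f.totalDegree ≠ 0) : ∃ C : ℕ,
    ∀ (K : Type) [Field K] [Fintype K] [Algebra (ZMod p) K] (a b : ℕ), Fintype.card K = p^a * p^b → p^a ≤ p^b → C ≤ p^a →
    Fintype.card K ≤ Nat.card (Set.range (fun y : Fin m → K => MvPolynomial.aeval y f)) + 2 →
    dev (fun y : Fin m → K => MvPolynomial.aeval y f) ≤ (Fintype.card K : ℝ)^m * (√(2*(1+C)/p^a) + 4 / p^a) := by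
  obtain ⟨g, j, i, rfl, hi⟩ := root_reduction _ f le_rfl hf
  obtain ⟨N, u, hu, hmon, hder⟩ := nagata g i hi
  obtain ⟨G, C', hG⟩ := Q_count p _ hmon hder
  refine ⟨C', fun K _ _ _ a b hq hab hC himg => ?_⟩
  obtain ⟨h1, h2⟩ := K_level g j N u hu K
  obtain ⟨h3, h4⟩ := hG K
  have h5 := h4 a b hq hab hC
  rw [h2] at himg
  have hqr : (Fintype.card K : ℝ) = (p:ℝ)^a * (p:ℝ)^b := by exact_mod_cast hq
  have hp1 : (1:ℝ) ≤ (p:ℝ) := by exact_mod_cast (Fact.out : p.Prime).one_lt.le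
  have ha1 : (1:ℝ) ≤ (p:ℝ)^a := one_le_pow₀ hp1
  have hb1 : (1:ℝ) ≤ (p:ℝ)^b := one_le_pow₀ hp1
  have hq2 : (2:ℝ) ≤ Fintype.card K := by exact_mod_cast Fintype.one_lt_card (α := K)
  set q : ℝ := (Fintype.card K : ℝ) with hqdef
  have hcV : (Fintype.card ((Fin m → K) × K) : ℝ) = q^(m+1) := by
    rw [Fintype.card_prod, Fintype.card_fun, Fintype.card_fin]; push_cast; rw [pow_succ]
  have hN := comb (fun v : (Fin m → K) × K => evB (algebraMap (ZMod p) K) v.1 v.2 (C (MvPolynomial.C u) * nag N g))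
    (fun v => evB (algebraMap (ZMod p) K) v.1 v.2 G) h3 (2*(1+C')/p^a) (by positivity) (by
      rw [hcV, ← hqdef]
      set N2 := Nat.card {z : ((Fin m → K) × K) × ((Fin m → K) × K) //
        evB (algebraMap (ZMod p) K) z.1.1 z.1.2 G = evB (algebraMap (ZMod p) K) z.2.1 z.2.2 G}
      have h6 : (q - 1) * (N2 : ℝ) ≤ q^(2*m+1) * (q + C' * p^b) := by
        have h7 : ((Fintype.card K - 1 : ℕ) : ℝ) = q - 1 := by
          rw [Nat.cast_sub Fintype.card_pos]; simp [hqdef]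
        rw [← h7, hqdef]
        rw [Fintype.card_fin] at h5
        exact_mod_cast h5
      have h8 : (q^(m+1))^2/q = q^(2*m+1) := by field_simp; ring
      rw [h8]
      have hq1 : 0 < q - 1 := by linarith
      refine le_of_mul_le_mul_left (h6.trans ?_) hq1
      have h9 : q + C' * p^b ≤ (q-1) * (1 + 2*(1+C')/p^a) := by
        have : 1 + C' * (p:ℝ)^b ≤ (q-1) * (2*(1+C')/p^a) := by
          calc 1 + C' * (p:ℝ)^b ≤ (1 + C') * (p:ℝ)^b := by nlinarith
            _ = (q/2) * (2*(1+C')/p^a) := by rw [hqr]; field_simp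
            _ ≤ _ := by gcongr; linarith
        linarith
      calc _ ≤ q^(2*m+1) * ((q-1) * (1 + 2*(1+C')/p^a)) := by gcongr
        _ = _ := by ring) himg
  change dev _ ≤ _ at hN
  rw [← h1, hcV, ← hqdef] at hN
  have h10 : 4 / q ≤ 4 / (p:ℝ)^a := by
    gcongr; rw [hqr]; nlinarith
  have hq0 : 0 < q := by linarith
  refine le_of_mul_le_mul_left (hN.trans ?_) hq0
  calc _ ≤ q^(m+1) * (√(2*(1+C')/p^a) + 4 / p^a) := by gcongr
    _ = _ := by ring

theorem poly_equi {m p : ℕ} [Fact p.Prime] (f : MvPolynomial (Fin m) (ZMod p))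
    (hs : ∀ᶠ n in Filter.atTop, Nat.card (GaloisField p n) ≤
      Nat.card (Set.range (fun y : Fin m → GaloisField p n => MvPolynomial.aeval y f)) + 2) (ε : ℝ) (hε : 0 < ε) :
    ∀ᶠ n in Filter.atTop, ∀ [Fintype (GaloisField p n)],
      dev (fun y : Fin m → GaloisField p n => MvPolynomial.aeval y f) ≤ ε * (Fintype.card (GaloisField p n) : ℝ)^m := by
  have hp := (Fact.out : p.Prime)
  by_cases hf : f.totalDegree = 0
  · rw [MvPolynomial.totalDegree_eq_zero_iff_eq_C] at hf
    filter_upwards [hs, Filter.eventually_ge_atTop 2] with n hn hn2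
    exfalso
    rw [GaloisField.card p n (by omega)] at hn
    have h1 : (Set.range (fun y : Fin m → GaloisField p n => MvPolynomial.aeval y f)) ⊆ {algebraMap _ _ (f.coeff 0)} := by
      rintro _ ⟨y, rfl⟩
      simp only [Set.mem_singleton_iff]
      conv_lhs => rw [hf]
      simp
    have h2 : Nat.card (Set.range (fun y : Fin m → GaloisField p n => MvPolynomial.aeval y f)) ≤ 1 :=
      (Nat.card_mono (Set.finite_singleton _) h1).trans (by simp)
    have h3 : p^2 ≤ p^n := Nat.pow_le_pow_right hp.pos hn2
    have h4 := hp.two_le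
    nlinarith
  · obtain ⟨C, hC⟩ := poly_equi_aux f hf
    have hA : Filter.Tendsto (fun n : ℕ => (p:ℝ)^(n/2)) Filter.atTop Filter.atTop := by
      refine (tendsto_pow_atTop_atTop_of_one_lt (by exact_mod_cast hp.one_lt)).comp ?_
      exact Nat.tendsto_div_const_atTop (by norm_num)
    have hlim : Filter.Tendsto (fun n : ℕ => √(2*(1+(C:ℝ))/(p:ℝ)^(n/2)) + 4 / (p:ℝ)^(n/2)) Filter.atTop (nhds 0) := by
      have h1 : Filter.Tendsto (fun n : ℕ => 2*(1+(C:ℝ))/(p:ℝ)^(n/2)) Filter.atTop (nhds 0) := hA.const_div_atTop _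
      have h2 : Filter.Tendsto (fun n : ℕ => 4/(p:ℝ)^(n/2)) Filter.atTop (nhds 0) := hA.const_div_atTop _
      have h3 := (Real.continuous_sqrt.tendsto 0).comp h1
      rw [Real.sqrt_zero] at h3
      simpa using h3.add h2
    filter_upwards [hs, Filter.eventually_ge_atTop 2, hA.eventually_ge_atTop (C:ℝ), hlim.eventually_le_const hε] with n hn hn2 h3 h4
    intro _
    rw [Nat.card_eq_fintype_card] at hn
    have hcard : Fintype.card (GaloisField p n) = p^(n/2) * p^(n - n/2) := by
      rw [← Nat.card_eq_fintype_card, GaloisField.card p n (by omega), ← pow_add]; congr 1; omega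
    refine (hC (GaloisField p n) (n/2) (n - n/2) hcard (Nat.pow_le_pow_right hp.pos (by omega)) (by exact_mod_cast h3) hn).trans ?_
    rw [mul_comm]
    gcongr

end Dev

section Abs
open Classical

theorem fib_lower {V X K : Type*} [Finite V] [Finite X] (φ : V → X) (F : X → K) (c : ℕ)
    (h : ∀ x, c ≤ Nat.card {v // φ v = x}) (z : K) :
    c * Nat.card {x // F x = z} ≤ Nat.card {v // F (φ v) = z} := by
  have := Fintype.ofFinite X
  have e : {v // F (φ v) = z} ≃ Σ x : {x // F x = z}, {v // φ v = x.1} :=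
    { toFun := fun v => ⟨⟨φ v.1, v.2⟩, ⟨v.1, rfl⟩⟩
      invFun := fun s => ⟨s.2.1, by rw [s.2.2]; exact s.1.2⟩
      left_inv := fun v => rfl
      right_inv := by
        rintro ⟨⟨x, hx⟩, ⟨v, hv⟩⟩
        dsimp only at hv
        subst hv
        rfl }
  rw [Nat.card_congr e, Nat.card_sigma]
  calc c * Nat.card {x // F x = z} = ∑ x : {x // F x = z}, c := by
        simp [mul_comm]
    _ ≤ _ := Finset.sum_le_sum (fun x _ => h x.1)

theorem dev_transfer {K : Type*} [Fintype K] (N M : K → ℝ) (q ε : ℝ) (hq : q = Fintype.card K)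
    (hq2 : 2 ≤ q) (hM : ∀ z, (q-1)^2 * M z ≤ N z)
    (hN : ∑ z, |N z - q^7| ≤ ε * q^8) (hT : (q^3 - q^2)^2 ≤ ∑ z, M z) :
    ∑ z, |M z - q^5| ≤ (8 * ε + 18 / q) * q^6 := by
  have hq0 : 0 < q := by linarith
  have hε : 0 ≤ ε := by
    have : 0 ≤ ε * q^8 := le_trans (Finset.sum_nonneg fun _ _ => abs_nonneg _) hN
    exact nonneg_of_mul_nonneg_left this (by positivity)
  have h1 : ∀ z, |M z - q^5| = 2 * max (M z - q^5) 0 - (M z - q^5) := by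
    intro z
    rcases le_total 0 (M z - q^5) with h | h
    · rw [abs_of_nonneg h, max_eq_left h]; ring
    · rw [abs_of_nonpos h, max_eq_right h]; ring
  have h2 : ∀ z, (q-1)^2 * max (M z - q^5) 0 ≤ |N z - q^7| + 2 * q^6 := by
    intro z
    rw [mul_max_of_nonneg _ _ (by positivity)]
    apply max_le
    · have := le_abs_self (N z - q^7)
      have := hM z
      have : 0 ≤ q^5 := by positivity
      nlinarith
    · rw [mul_zero]; positivity
  have h3 : (q-1)^2 * ∑ z, max (M z - q^5) 0 ≤ ε * q^8 + 2 * q^7 := by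
    rw [Finset.mul_sum]
    refine (Finset.sum_le_sum fun z _ => h2 z).trans ?_
    rw [Finset.sum_add_distrib, Finset.sum_const, Finset.card_univ, nsmul_eq_mul, ← hq]
    linarith [show q * (2 * q^6) = 2 * q^7 by ring]
  set S := ∑ z, max (M z - q^5) 0 with hS
  have hS0 : 0 ≤ S := Finset.sum_nonneg fun _ _ => le_max_right _ _
  have h4 : S ≤ 4 * ε * q^6 + 8 * q^5 := by
    have : q^2 * S ≤ q^2 * (4 * ε * q^6 + 8 * q^5) := by
      have : q^2 ≤ 4 * (q-1)^2 := by nlinarith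
      calc q^2 * S ≤ 4 * (q-1)^2 * S := by gcongr
        _ ≤ 4 * (ε * q^8 + 2 * q^7) := by linarith
        _ = _ := by ring
    exact le_of_mul_le_mul_left this (by positivity)
  have h5 : ∑ z, |M z - q^5| = 2 * S - (∑ z, M z - q * q^5) := by
    simp_rw [h1]
    rw [Finset.sum_sub_distrib, ← Finset.mul_sum, Finset.sum_sub_distrib, Finset.sum_const, Finset.card_univ, nsmul_eq_mul, ← hq]
  rw [h5]
  have h6 : (8 * ε + 18 / q) * q^6 = 8 * ε * q^6 + 18 * q^5 := by field_simp
  rw [h6]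
  have : 0 ≤ q^4 := by positivity
  nlinarith

theorem equi_num {q δ c n D : ℝ} (hq2 : 2 ≤ q) (hδ : 0 < δ) (hδq : 64 ≤ δ * q) (hcl : q^2 - q ≤ c)
    (hcu : c ≤ q^2 + q) (hD1 : q^3 - q^2 ≤ D) (hD2 : D ≤ q^3 + q^2) (hD3 : q^3 ≤ 2 * D)
    (hgood : |c * n - q^5| < δ / 16 * q^5) : |n - D| < δ * D := by
  have hq0 : 0 < q := by linarith
  have hq3 : 0 < q^3 := by positivity
  have hq4 : 0 < q^4 := by positivity
  have hq2' : 0 < q^2 := by positivity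
  have hD0 : 0 < D := by linarith
  have hqq : 0 < q^2 - q := by nlinarith
  have hqq2 : 0 < q^3 - q^2 := by nlinarith
  have hc0 : 0 < c := by linarith
  have hA : |c * D - q^5| ≤ 3 * q^4 := by
    rw [abs_le]
    have l1 : (q^2 - q) * (q^3 - q^2) ≤ c * D := by
      apply mul_le_mul hcl hD1 hqq2.le hc0.le
    have l2 : c * D ≤ (q^2 + q) * (q^3 + q^2) := by
      apply mul_le_mul hcu hD2 hD0.le (by positivity)
    have e1 : (q^2 - q) * (q^3 - q^2) = q^5 - 2 * q^4 + q^3 := by ring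
    have e2 : (q^2 + q) * (q^3 + q^2) = q^5 + 2 * q^4 + q^3 := by ring
    have e3 : q^3 ≤ q^4 := by
      have : q^3 * 1 ≤ q^3 * q := mul_le_mul_of_nonneg_left (by linarith) hq3.le
      linarith [show q^3 * q = q^4 by ring]
    constructor <;> linarith
  have hB : |c * n - c * D| < δ / 16 * q^5 + 3 * q^4 := by
    have := abs_sub_le (c * n) (q^5) (c * D)
    rw [abs_sub_comm (q^5)] at this
    linarith
  rw [← mul_sub, abs_mul, abs_of_pos hc0] at hB
  have hC : δ / 16 * q^5 + 3 * q^4 ≤ c * (δ * D) := by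
    have l0 : q^2 / 2 ≤ c := by nlinarith
    have l1 : q^2 / 2 * (δ * (q^3/2)) ≤ c * (δ * D) := by
      apply mul_le_mul l0 _ (by positivity) hc0.le
      apply mul_le_mul_of_nonneg_left _ hδ.le
      linarith
    have l2 : q^4 * 64 ≤ q^4 * (δ * q) := mul_le_mul_of_nonneg_left hδq hq4.le
    have l3 : q^4 * (δ * q) = δ * q^5 := by ring
    have l4 : q^2 / 2 * (δ * (q^3/2)) = δ * q^5 / 4 := by ring
    linarith
  exact lt_of_mul_lt_mul_left (hB.trans_le hC) hc0.le

theorem equi_abstract {G K : Type} [Fintype G] [Fintype K] (tr : G → K) (W : G × G → G) (a b : K)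
    (q δ ε : ℝ) (hq : q = Fintype.card K) (hq2 : 2 ≤ q) (hδ : 0 < δ) (hδ1 : 64 / q ≤ δ)
    (hε0 : 0 ≤ ε) (hε : 416 * 16 * ε ≤ δ ^ 2)
    (hc1 : ∀ z, q^2 - q ≤ (Nat.card {g // tr g = z} : ℝ))
    (hc2 : ∀ z, (Nat.card {g // tr g = z} : ℝ) ≤ q^2 + q)
    (hconst : ∀ g h, tr g = tr h → tr g ≠ a → tr g ≠ b →
      Nat.card {x // W x = g} = Nat.card {x // W x = h})
    (hdev : ∑ z, |(Nat.card {x // tr (W x) = z} : ℝ) - q^5| ≤ 26 * ε * q^6) :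
    IsEquidistributed W δ := by
  have hq0 : 0 < q := by linarith
  set D : ℝ := (Fintype.card G : ℝ) with hD
  have hcs : ∑ z, (Nat.card {g // tr g = z} : ℝ) = D := by
    rw [hD, ← sum_fib tr]; push_cast; rfl
  have hD1 : q^3 - q^2 ≤ D := by
    have : ∑ z : K, (q^2 - q) ≤ D := by rw [← hcs]; exact Finset.sum_le_sum fun z _ => hc1 z
    rw [Finset.sum_const, Finset.card_univ, nsmul_eq_mul, ← hq] at this
    linarith
  have hD2 : D ≤ q^3 + q^2 := by
    have : D ≤ ∑ z : K, (q^2 + q) := by rw [← hcs]; exact Finset.sum_le_sum fun z _ => hc2 z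
    rw [Finset.sum_const, Finset.card_univ, nsmul_eq_mul, ← hq] at this
    linarith
  have hD3 : q^3 ≤ 2 * D := by nlinarith [sq_nonneg q]
  have hD0 : 0 < D := by have : 0 < q^3 := by positivity
                         linarith
  have hXY : (Nat.card (G × G) : ℝ) / (Nat.card G) = D := by
    rw [Nat.card_prod, Nat.card_eq_fintype_card]; push_cast; rw [← hD]; field_simp
  have hδq : 64 ≤ δ * q := by rwa [div_le_iff₀ hq0] at hδ1
  set M : K → ℝ := fun z => (Nat.card {x // tr (W x) = z} : ℝ) with hMdef
  let bad : Finset K := Finset.univ.filter (fun z => δ / 16 * q^5 ≤ |M z - q^5|)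
  have hbad : δ / 16 * (bad.card : ℝ) ≤ 26 * ε * q := by
    have h1 : (bad.card : ℝ) * (δ / 16 * q^5) ≤ 26 * ε * q^6 := by
      refine le_trans ?_ hdev
      calc (bad.card : ℝ) * (δ / 16 * q^5) = ∑ z ∈ bad, (δ / 16 * q^5) := by simp
        _ ≤ ∑ z ∈ bad, |M z - q^5| := Finset.sum_le_sum fun z hz => (Finset.mem_filter.1 hz).2
        _ ≤ _ := Finset.sum_le_sum_of_subset_of_nonneg (Finset.subset_univ _) (fun _ _ _ => abs_nonneg _)
    have h2 : q^5 * (δ / 16 * (bad.card : ℝ)) ≤ q^5 * (26 * ε * q) := by linarith [h1]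
    exact le_of_mul_le_mul_left h2 (by positivity)
  have hbad2 : (bad.card : ℝ) ≤ δ * q / 16 := by
    have : δ * (bad.card : ℝ) ≤ δ * (δ * q / 16) := by nlinarith
    exact le_of_mul_le_mul_left this hδ
  let ex : Finset K := insert a (insert b bad)
  have hex : (ex.card : ℝ) ≤ δ * q / 8 := by
    have h1 : ex.card ≤ bad.card + 2 := by
      have := Finset.card_insert_le a (insert b bad)
      have := Finset.card_insert_le b bad
      change (insert a (insert b bad)).card ≤ _
      omega
    have h2 : (ex.card : ℝ) ≤ bad.card + 2 := by exact_mod_cast h1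
    linarith
  refine ⟨{g | tr g ∉ ex}, ?_, ?_⟩
  · have h1 : (Nat.card G : ℝ) ≤ (Nat.card {g | tr g ∉ ex} : ℝ) + (Nat.card {g // tr g ∈ ex} : ℝ) := by
      rw [Nat.card_congr (Equiv.sumCompl (fun g => tr g ∈ ex)).symm, Nat.card_sum]
      push_cast
      rw [add_comm]; rfl
    have h2 : (Nat.card {g // tr g ∈ ex} : ℝ) = ∑ z ∈ ex, (Nat.card {g // tr g = z} : ℝ) := by
      have e : {g // tr g ∈ ex} ≃ Σ z : ex, {g // tr g = z.1} :=
        { toFun := fun g => ⟨⟨tr g.1, g.2⟩, ⟨g.1, rfl⟩⟩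
          invFun := fun s => ⟨s.2.1, by rw [s.2.2]; exact s.1.2⟩
          left_inv := fun v => rfl
          right_inv := by
            rintro ⟨⟨x, hx⟩, ⟨v, hv⟩⟩
            dsimp only at hv
            subst hv
            rfl }
      rw [Nat.card_congr e, Nat.card_sigma, ← Finset.sum_coe_sort ex]
      push_cast; rfl
    have h3 : (Nat.card {g // tr g ∈ ex} : ℝ) ≤ (ex.card : ℝ) * (q^2 + q) := by
      rw [h2]
      refine (Finset.sum_le_sum fun z _ => hc2 z).trans ?_
      rw [Finset.sum_const, nsmul_eq_mul]
    have h4 : (ex.card : ℝ) * (q^2 + q) ≤ δ * q / 8 * (q^2 + q) := by gcongr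
    have h5 : δ * q / 8 * (q^2 + q) < δ * D := by
      have : q / 8 * (q^2+q) < D := by nlinarith
      nlinarith
    have h6 : (Nat.card G : ℝ) = D := by rw [Nat.card_eq_fintype_card]
    rw [h6] at h1 ⊢
    linarith
  · intro g hg
    have hg' : tr g ∉ insert a (insert b bad) := hg
    simp only [Finset.mem_insert, not_or] at hg'
    obtain ⟨hga, hgb, hgbad⟩ := hg'
    rw [mul_div_assoc, hXY]
    set z := tr g with hz
    set n : ℝ := (Nat.card {x // W x = g} : ℝ) with hn
    set c : ℝ := (Nat.card {g // tr g = z} : ℝ) with hc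
    have hMz : M z = c * n := by
      have e : {x // tr (W x) = z} ≃ Σ h : {h // tr h = z}, {x // W x = h.1} :=
        { toFun := fun v => ⟨⟨W v.1, v.2⟩, ⟨v.1, rfl⟩⟩
          invFun := fun s => ⟨s.2.1, by rw [s.2.2]; exact s.1.2⟩
          left_inv := fun v => rfl
          right_inv := by
            rintro ⟨⟨x, hx⟩, ⟨v, hv⟩⟩
            dsimp only at hv
            subst hv
            rfl }
      change (Nat.card {x // tr (W x) = z} : ℝ) = _
      rw [Nat.card_congr e, Nat.card_sigma]
      rw [Finset.sum_congr rfl (fun h _ => (hconst g h.1 h.2.symm hga hgb).symm)]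
      simp [hc, hn]
    have hgood : |M z - q^5| < δ / 16 * q^5 := by
      by_contra hcon
      exact hgbad (Finset.mem_filter.2 ⟨Finset.mem_univ _, not_lt.1 hcon⟩)
    rw [hMz] at hgood
    have hcl := hc1 z
    have hcu := hc2 z
    rw [← hc] at hcl hcu
    exact equi_num hq2 hδ hδq hcl hcu hD1 hD2 hD3 hgood

end Abs

section SLc
open Classical

theorem card_mul_eq {K : Type} [Field K] [Fintype K] (t : K) :
    Fintype.card K - 1 ≤ Nat.card {s : K × K // s.1 * s.2 = t} ∧
    (t ≠ 0 → Nat.card {s : K × K // s.1 * s.2 = t} ≤ Fintype.card K - 1) ∧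
    Nat.card {s : K × K // s.1 * s.2 = t} ≤ 2 * Fintype.card K - 1 := by
  have hu : Nat.card Kˣ = Fintype.card K - 1 := by
    rw [Nat.card_units, Nat.card_eq_fintype_card]
  have hq : 1 ≤ Fintype.card K := Fintype.card_pos
  refine ⟨?_, ?_, ?_⟩
  · rw [← hu]
    apply Nat.card_le_card_of_injective (fun u : Kˣ => (⟨((u:K), (u:K)⁻¹ * t), by simp⟩ : {s : K × K // s.1 * s.2 = t}))
    intro u v h
    simp only [Subtype.mk.injEq, Prod.mk.injEq] at h
    exact Units.ext h.1
  · intro ht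
    rw [← hu]
    apply Nat.card_le_card_of_injective (fun s : {s : K × K // s.1 * s.2 = t} => Units.mk0 s.1.1 (by
      intro h; apply ht; rw [← s.2, h, zero_mul]))
    rintro ⟨⟨a, b⟩, h⟩ ⟨⟨a', b'⟩, h'⟩ hh
    have h1 : a = a' := congrArg Units.val hh
    subst h1
    have ha : a ≠ 0 := by rintro rfl; apply ht; rw [← h]; simp
    dsimp only at h h'
    have : b = b' := mul_left_cancel₀ ha (h.trans h'.symm)
    subst this; rfl
  · have : Nat.card {s : K × K // s.1 * s.2 = t} ≤ Nat.card (Kˣ ⊕ K) := by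
      apply Nat.card_le_card_of_injective (fun s : {s : K × K // s.1 * s.2 = t} =>
        if h : s.1.1 = 0 then Sum.inr s.1.2 else Sum.inl (Units.mk0 s.1.1 h))
      rintro ⟨⟨a, b⟩, h⟩ ⟨⟨a', b'⟩, h'⟩ hh
      dsimp only at hh h h'
      by_cases ha : a = 0 <;> by_cases ha' : a' = 0
      · simp [ha, ha'] at hh; simp [ha, ha', hh]
      · simp [ha, ha'] at hh
      · simp [ha, ha'] at hh
      · simp only [ha, ha', dite_false, Sum.inl.injEq] at hh
        have h1 : a = a' := congrArg Units.val hh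
        subst h1
        have : b = b' := mul_left_cancel₀ ha (h.trans h'.symm)
        subst this; rfl
    rw [Nat.card_sum, hu, Nat.card_eq_fintype_card (α := K)] at this
    omega

theorem card_quad {K : Type} [Field K] [Fintype K] (z : K) :
    Nat.card {a : K // a * (z - a) - 1 = 0} ≤ 2 := by
  let P : K[X] := X^2 - Polynomial.C z * X + 1
  have hP : P.natDegree = 2 := by dsimp only [P]; compute_degree!
  have hP0 : P ≠ 0 := by rintro h; rw [h] at hP; simp at hP
  have h1 : Nat.card {a : K // a * (z - a) - 1 = 0} ≤ Nat.card P.roots.toFinset := by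
    apply Nat.card_le_card_of_injective (fun a : {a : K // a * (z - a) - 1 = 0} => (⟨a.1, by
      rw [Multiset.mem_toFinset, mem_roots hP0, IsRoot.def]
      simp only [P, eval_add, eval_sub, eval_pow, eval_X, eval_mul, eval_C, eval_one]
      linear_combination - a.2⟩ : P.roots.toFinset))
    intro a b h
    simp only [Subtype.mk.injEq] at h
    exact Subtype.ext h
  refine h1.trans ?_
  rw [Nat.card_eq_fintype_card, Fintype.card_coe]
  exact (Multiset.toFinset_card_le _).trans ((card_roots' P).trans hP.le)

theorem card_trace {K : Type} [Field K] [Fintype K] (z : K) (q : ℝ) (hq : q = Fintype.card K) :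
    q^2 - q ≤ (Nat.card {g : SL2 K // Matrix.trace (g : Matrix (Fin 2) (Fin 2) K) = z} : ℝ) ∧
    (Nat.card {g : SL2 K // Matrix.trace (g : Matrix (Fin 2) (Fin 2) K) = z} : ℝ) ≤ q^2 + q := by
  have e : {g : SL2 K // Matrix.trace (g : Matrix (Fin 2) (Fin 2) K) = z} ≃
      {s : K × (K × K) // s.2.1 * s.2.2 = s.1 * (z - s.1) - 1} :=
    { toFun := fun g => ⟨(g.1 0 0, (g.1 0 1, g.1 1 0)), by
        have h1 := g.2
        have h2 := g.1.2
        rw [Matrix.trace_fin_two] at h1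
        rw [Matrix.det_fin_two] at h2
        dsimp only
        linear_combination -h2 + g.1 0 0 * h1⟩
      invFun := fun s => ⟨⟨!![s.1.1, s.1.2.1; s.1.2.2, z - s.1.1], by
        rw [Matrix.det_fin_two_of]; linear_combination -s.2⟩, by
        rw [Matrix.trace_fin_two]; simp⟩
      left_inv := by
        rintro ⟨g, hg⟩
        rw [Matrix.trace_fin_two] at hg
        ext i j
        fin_cases i <;> fin_cases j <;> simp
        linear_combination -hg
      right_inv := by
        rintro ⟨⟨a, b, c⟩, h⟩
        simp }
  have hq1 : (1:ℝ) ≤ q := by rw [hq]; exact_mod_cast Fintype.card_pos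
  have hsub : ((Fintype.card K - 1 : ℕ) : ℝ) = q - 1 := by
    rw [Nat.cast_sub Fintype.card_pos, hq]; simp
  have hsub2 : ((2 * Fintype.card K - 1 : ℕ) : ℝ) = 2 * q - 1 := by
    rw [Nat.cast_sub (by have := Fintype.card_pos (α := K); omega), hq]; simp
  rw [Nat.card_congr e, sum_card_fib (fun (a : K) (s : K × K) => s.1 * s.2 = a * (z - a) - 1)]
  push_cast
  constructor
  · calc q^2 - q = ∑ a : K, (q - 1) := by
          rw [Finset.sum_const, Finset.card_univ, nsmul_eq_mul, ← hq]; ring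
      _ ≤ _ := Finset.sum_le_sum fun a _ => by
          rw [← hsub]; exact_mod_cast (card_mul_eq _).1
  · calc _ ≤ ∑ a : K, ((q - 1) + (if a * (z - a) - 1 = 0 then q else 0)) := Finset.sum_le_sum fun a _ => by
          split_ifs with h
          · rw [show q - 1 + q = 2 * q - 1 by ring, ← hsub2]; exact_mod_cast (card_mul_eq _).2.2
          · rw [add_zero, ← hsub]; exact_mod_cast (card_mul_eq _).2.1 h
      _ = q * (q - 1) + (Nat.card {a : K // a * (z - a) - 1 = 0}) * q := by
          rw [Finset.sum_add_distrib, Finset.sum_const, Finset.card_univ, nsmul_eq_mul, ← hq,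
            ← Finset.sum_filter, Finset.sum_const, nsmul_eq_mul, Nat.card_eq_fintype_card, Fintype.card_subtype]
      _ ≤ q * (q - 1) + 2 * q := by
          gcongr; exact_mod_cast card_quad z
      _ = _ := by ring

def up {R : Type} [CommRing R] (a : R) : SL2 R := ⟨!![1, a; 0, 1], by simp [Matrix.det_fin_two_of]⟩
def lo {R : Type} [CommRing R] (a : R) : SL2 R := ⟨!![1, 0; a, 1], by simp [Matrix.det_fin_two_of]⟩
def par {R : Type} [CommRing R] (a b c e : R) : SL2 R := up a * lo b * up c * lo e

theorem up_coe {R : Type} [CommRing R] (a : R) : ((up a : SL2 R) : Matrix (Fin 2) (Fin 2) R) = !![1, a; 0, 1] := rfl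
theorem lo_coe {R : Type} [CommRing R] (a : R) : ((lo a : SL2 R) : Matrix (Fin 2) (Fin 2) R) = !![1, 0; a, 1] := rfl

theorem map_par {R S : Type} [CommRing R] [CommRing S] (f : R →+* S) (a b c e : R) :
    Matrix.SpecialLinearGroup.map f (par a b c e) = par (f a) (f b) (f c) (f e) := by
  have hu : ∀ a, Matrix.SpecialLinearGroup.map f (up a) = up (f a) := by
    intro a
    apply Subtype.ext
    rw [Matrix.SpecialLinearGroup.map_apply_coe, RingHom.mapMatrix_apply, up_coe, up_coe]
    ext i j; fin_cases i <;> fin_cases j <;> simp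
  have hl : ∀ a, Matrix.SpecialLinearGroup.map f (lo a) = lo (f a) := by
    intro a
    apply Subtype.ext
    rw [Matrix.SpecialLinearGroup.map_apply_coe, RingHom.mapMatrix_apply, lo_coe, lo_coe]
    ext i j; fin_cases i <;> fin_cases j <;> simp
  simp only [par, map_mul, hu, hl]

theorem par_eq {K : Type} [Field K] (g : SL2 K) (e : K) (he : g 1 0 - e * g 1 1 ≠ 0) :
    par ((g 0 0 - e * g 0 1 - 1) / (g 1 0 - e * g 1 1)) (g 1 0 - e * g 1 1)
      ((g 1 1 - 1) / (g 1 0 - e * g 1 1)) e = g := by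
  have hd := g.2
  rw [Matrix.det_fin_two] at hd
  apply Subtype.ext
  simp only [par, Matrix.SpecialLinearGroup.coe_mul, up_coe, lo_coe]
  ext i j
  fin_cases i <;> fin_cases j <;> simp [Matrix.mul_apply, Fin.sum_univ_two] <;> field_simp
  · linear_combination e * hd
  · linear_combination hd
  · ring
  · ring

theorem card_good {K : Type} [Field K] [Fintype K] (g : SL2 K) :
    Fintype.card K - 1 ≤ Nat.card {e : K // g 1 0 - e * g 1 1 ≠ 0} := by
  have hd := g.2
  rw [Matrix.det_fin_two] at hd
  have h1 : Nat.card {e : K // g 1 0 - e * g 1 1 = 0} ≤ 1 := by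
    rw [Finite.card_le_one_iff_subsingleton]
    constructor
    rintro ⟨a, ha⟩ ⟨b, hb⟩
    by_cases h : g 1 1 = 0
    · rw [h] at ha hd
      simp only [mul_zero, sub_zero] at ha
      rw [ha] at hd
      simp at hd
    · apply Subtype.ext
      apply mul_right_cancel₀ h
      linear_combination hb - ha
  have h2 : Fintype.card K = Nat.card {e : K // g 1 0 - e * g 1 1 = 0} + Nat.card {e : K // g 1 0 - e * g 1 1 ≠ 0} := by
    rw [← Nat.card_eq_fintype_card, Nat.card_congr (Equiv.sumCompl (fun e => g 1 0 - e * g 1 1 = 0)).symm, Nat.card_sum]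
  omega

def par8 {R : Type} [CommRing R] (v : Fin 8 → R) : SL2 R × SL2 R :=
  (par (v 0) (v 1) (v 2) (v 3), par (v 4) (v 5) (v 6) (v 7))

theorem par8_fib {K : Type} [Field K] [Fintype K] (x : SL2 K × SL2 K) :
    (Fintype.card K - 1)^2 ≤ Nat.card {v : Fin 8 → K // par8 v = x} := by
  obtain ⟨g, h⟩ := x
  rw [sq]
  refine (Nat.mul_le_mul (card_good g) (card_good h)).trans ?_
  rw [← Nat.card_prod]
  apply Nat.card_le_card_of_injective (fun s : {e : K // g 1 0 - e * g 1 1 ≠ 0} × {e : K // h 1 0 - e * h 1 1 ≠ 0} =>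
    (⟨![(g 0 0 - s.1.1 * g 0 1 - 1) / (g 1 0 - s.1.1 * g 1 1), (g 1 0 - s.1.1 * g 1 1),
      ((g 1 1 - 1) / (g 1 0 - s.1.1 * g 1 1)), s.1.1,
      (h 0 0 - s.2.1 * h 0 1 - 1) / (h 1 0 - s.2.1 * h 1 1), (h 1 0 - s.2.1 * h 1 1),
      ((h 1 1 - 1) / (h 1 0 - s.2.1 * h 1 1)), s.2.1], 
      Prod.ext (par_eq g s.1.1 s.1.2) (par_eq h s.2.1 s.2.2)⟩ : {v : Fin 8 → K // par8 v = (g, h)}))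
  rintro ⟨⟨a, ha⟩, ⟨b, hb⟩⟩ ⟨⟨a', ha'⟩, ⟨b', hb'⟩⟩ hh
  have h1 := congrArg Subtype.val hh
  have h3 : a = a' := congrFun h1 3
  have h7 : b = b' := congrFun h1 7
  subst h3; subst h7; rfl

end SLc

section Wd
open Classical

theorem wordEval_map {G H : Type*} [Group G] [Group H] (σ : G →* H) (w : FreeGroup (Fin 2)) (x y : G) :
    wordEval w (σ x) (σ y) = σ (wordEval w x y) := by
  unfold wordEval
  rw [← MonoidHom.comp_apply]
  congr 1
  apply FreeGroup.ext_hom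
  intro i
  fin_cases i <;> simp

noncomputable def conjHom {K : Type} [Field K] (P : Matrix (Fin 2) (Fin 2) K) (hP : IsUnit P.det) : SL2 K →* SL2 K where
  toFun x := ⟨P * x.1 * P⁻¹, by
    rw [Matrix.det_mul, Matrix.det_mul, x.2, mul_one, ← Matrix.det_mul, Matrix.mul_nonsing_inv _ hP, Matrix.det_one]⟩
  map_one' := by
    apply Subtype.ext
    simp [Matrix.mul_nonsing_inv _ hP]
  map_mul' x y := by
    apply Subtype.ext
    change P * (x.1 * y.1) * P⁻¹ = (P * x.1 * P⁻¹) * (P * y.1 * P⁻¹)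
    calc P * (x.1 * y.1) * P⁻¹ = P * x.1 * (1 : Matrix (Fin 2) (Fin 2) K) * y.1 * P⁻¹ := by
          simp only [mul_assoc, one_mul]
      _ = P * x.1 * (P⁻¹ * P) * y.1 * P⁻¹ := by rw [Matrix.nonsing_inv_mul _ hP]
      _ = (P * x.1 * P⁻¹) * (P * y.1 * P⁻¹) := by simp only [mul_assoc]

theorem conjHom_coe {K : Type} [Field K] (P : Matrix (Fin 2) (Fin 2) K) (hP : IsUnit P.det) (x : SL2 K) :
    ((conjHom P hP x : SL2 K) : Matrix (Fin 2) (Fin 2) K) = P * x.1 * P⁻¹ := rfl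

theorem conj_inj {K : Type} [Field K] (P : Matrix (Fin 2) (Fin 2) K) (hP : IsUnit P.det) :
    Function.Injective (conjHom P hP) := by
  intro x y h
  have h1 := congrArg Subtype.val h
  rw [conjHom_coe, conjHom_coe] at h1
  apply Subtype.ext
  have h2 : P⁻¹ * (P * x.1 * P⁻¹) * P = P⁻¹ * (P * y.1 * P⁻¹) * P := by rw [h1]
  have h3 : ∀ A : Matrix (Fin 2) (Fin 2) K, P⁻¹ * (P * A * P⁻¹) * P = A := by
    intro A
    calc P⁻¹ * (P * A * P⁻¹) * P = (P⁻¹ * P) * A * (P⁻¹ * P) := by simp only [mul_assoc]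
      _ = A := by rw [Matrix.nonsing_inv_mul _ hP, one_mul, mul_one]
  rwa [h3, h3] at h2

theorem fib_conj_le {K : Type} [Field K] [Finite K] (w : FreeGroup (Fin 2)) (P : Matrix (Fin 2) (Fin 2) K)
    (hP : IsUnit P.det) (g : SL2 K) :
    Nat.card {x // wordMap w K x = g} ≤ Nat.card {x // wordMap w K x = conjHom P hP g} := by
  apply Nat.card_le_card_of_injective (fun x : {x // wordMap w K x = g} =>
    (⟨(conjHom P hP x.1.1, conjHom P hP x.1.2), by
      change wordEval w _ _ = _
      rw [wordEval_map]
      exact congrArg _ x.2⟩ : {x // wordMap w K x = conjHom P hP g}))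
  rintro ⟨⟨a, b⟩, h⟩ ⟨⟨a', b'⟩, h'⟩ hh
  simp only [Subtype.mk.injEq, Prod.mk.injEq] at hh ⊢
  exact ⟨conj_inj P hP hh.1, conj_inj P hP hh.2⟩

def comp2 {K : Type} [Field K] (z : K) : SL2 K := ⟨!![0, -1; 1, z], by simp [Matrix.det_fin_two_of]⟩

theorem comp2_coe {K : Type} [Field K] (z : K) : ((comp2 z : SL2 K) : Matrix (Fin 2) (Fin 2) K) = !![0, -1; 1, z] := rfl

theorem exists_cyc {K : Type} [Field K] (g : SL2 K)
    (h2 : Matrix.trace (g : Matrix (Fin 2) (Fin 2) K) ≠ 2)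
    (h2' : Matrix.trace (g : Matrix (Fin 2) (Fin 2) K) ≠ -2) :
    ∃ P : Matrix (Fin 2) (Fin 2) K, IsUnit P.det ∧
      g.1 * P = P * (comp2 (Matrix.trace (g : Matrix (Fin 2) (Fin 2) K)) : SL2 K).1 := by
  have hd := g.2
  rw [Matrix.trace_fin_two] at *
  rw [Matrix.det_fin_two] at hd
  obtain ⟨a, ha⟩ : ∃ a, a = g 0 0 := ⟨_, rfl⟩
  obtain ⟨b, hb⟩ : ∃ a, a = g 0 1 := ⟨_, rfl⟩
  obtain ⟨c, hc⟩ : ∃ a, a = g 1 0 := ⟨_, rfl⟩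
  obtain ⟨d, hdd⟩ : ∃ a, a = g 1 1 := ⟨_, rfl⟩
  have hg : g.1 = !![a, b; c, d] := by
    rw [ha, hb, hc, hdd]; exact Matrix.eta_fin_two g.1
  rw [← ha, ← hdd] at h2 h2' ⊢
  rw [← ha, ← hdd, ← hb, ← hc] at hd
  rw [hg, comp2_coe]
  by_cases hc0 : c = 0
  · by_cases hb0 : b = 0
    · have had : a ≠ d := by
        rintro rfl
        have : (a - 1) * (a + 1) = 0 := by rw [hb0] at hd; linear_combination hd
        rcases mul_eq_zero.1 this with h | h
        · apply h2; linear_combination 2 * h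
        · apply h2'; linear_combination 2 * h
      refine ⟨!![1, a; 1, d], ?_, ?_⟩
      · rw [Matrix.det_fin_two_of, isUnit_iff_ne_zero]
        intro h; apply had; linear_combination -h
      · subst hb0; subst hc0
        ext i j
        fin_cases i <;> fin_cases j <;> simp [Matrix.mul_apply, Fin.sum_univ_two] <;> linear_combination -hd
    · refine ⟨!![0, b; 1, d], ?_, ?_⟩
      · rw [Matrix.det_fin_two_of, isUnit_iff_ne_zero]
        simpa using hb0
      · ext i j
        fin_cases i <;> fin_cases j <;> simp [Matrix.mul_apply, Fin.sum_univ_two]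
        · ring
        · linear_combination -hd
  · refine ⟨!![1, a; 0, c], ?_, ?_⟩
    · rw [Matrix.det_fin_two_of, isUnit_iff_ne_zero]
      simpa using hc0
    · ext i j
      fin_cases i <;> fin_cases j <;> simp [Matrix.mul_apply, Fin.sum_univ_two]
      · linear_combination -hd
      · ring

theorem fib_eq_comp {K : Type} [Field K] [Finite K] (w : FreeGroup (Fin 2)) (g : SL2 K)
    (h2 : Matrix.trace (g : Matrix (Fin 2) (Fin 2) K) ≠ 2)
    (h2' : Matrix.trace (g : Matrix (Fin 2) (Fin 2) K) ≠ -2) :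
    Nat.card {x // wordMap w K x = g} =
      Nat.card {x // wordMap w K x = comp2 (Matrix.trace (g : Matrix (Fin 2) (Fin 2) K))} := by
  obtain ⟨P, hP, h⟩ := exists_cyc g h2 h2'
  generalize comp2 (Matrix.trace (g : Matrix (Fin 2) (Fin 2) K)) = k at *
  have hP' : IsUnit (P⁻¹).det := Matrix.isUnit_nonsing_inv_det _ hP
  have e1 : conjHom P hP k = g := by
    apply Subtype.ext
    rw [conjHom_coe, ← h, mul_assoc, Matrix.mul_nonsing_inv _ hP, mul_one]
  have e2 : conjHom P⁻¹ hP' g = k := by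
    apply Subtype.ext
    rw [conjHom_coe, Matrix.nonsing_inv_nonsing_inv _ hP, mul_assoc, h, ← mul_assoc, Matrix.nonsing_inv_mul _ hP, one_mul]
  apply le_antisymm
  · have := fib_conj_le w P⁻¹ hP' g
    rwa [e2] at this
  · have := fib_conj_le w P hP k
    rwa [e1] at this

noncomputable def genPoly (p : ℕ) (w : FreeGroup (Fin 2)) : MvPolynomial (Fin 8) (ZMod p) :=
  Matrix.trace ((wordMap w (MvPolynomial (Fin 8) (ZMod p)) (par8 MvPolynomial.X) : SL2 _) : Matrix (Fin 2) (Fin 2) _)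

theorem genPoly_eval {p : ℕ} {K : Type} [Field K] [Algebra (ZMod p) K] (w : FreeGroup (Fin 2)) (v : Fin 8 → K) :
    MvPolynomial.aeval v (genPoly p w) = Matrix.trace ((wordMap w K (par8 v) : SL2 K) : Matrix (Fin 2) (Fin 2) K) := by
  have h : wordMap w K (par8 v) = Matrix.SpecialLinearGroup.map
      ((MvPolynomial.aeval v : MvPolynomial (Fin 8) (ZMod p) →ₐ[ZMod p] K) : MvPolynomial (Fin 8) (ZMod p) →+* K)
      (wordMap w (MvPolynomial (Fin 8) (ZMod p)) (par8 MvPolynomial.X)) := by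
    unfold wordMap
    rw [← wordEval_map]
    simp only [par8, map_par]
    simp
  rw [h, genPoly, Matrix.SpecialLinearGroup.map_apply_coe, RingHom.mapMatrix_apply, Matrix.trace_fin_two, Matrix.trace_fin_two]
  simp

theorem word_equi_K {p : ℕ} {K : Type} [Field K] [Fintype K] [Algebra (ZMod p) K] (w : FreeGroup (Fin 2))
    (f : MvPolynomial (Fin 8) (ZMod p))
    (hf : ∀ v : Fin 8 → K, MvPolynomial.aeval v f = Matrix.trace ((wordMap w K (par8 v) : SL2 K) : Matrix (Fin 2) (Fin 2) K))
    (q δ ε : ℝ) (hqdef : q = (Fintype.card K : ℝ)) (h2 : 2 ≤ q) (hδ : 0 < δ) (h64 : 64 / δ ≤ q)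
    (hε : 0 < ε) (hεdef : ε = δ^2 / (416 * 16)) (hqε : 1 / ε ≤ q)
    (hdev : dev (fun v : Fin 8 → K => MvPolynomial.aeval v f) ≤ ε * (Fintype.card K : ℝ)^8) :
    IsEquidistributed (wordMap w K) δ := by
  have hq0 : 0 < q := by linarith
  unfold dev at hdev
  have hV : (Fintype.card (Fin 8 → K) : ℝ) / Fintype.card K = q^7 := by
    rw [Fintype.card_fun, Fintype.card_fin]; push_cast; rw [← hqdef]; field_simp
  rw [hV, ← hqdef] at hdev
  simp only [hf] at hdev
  let tr : SL2 K → K := fun g => Matrix.trace (g : Matrix (Fin 2) (Fin 2) K)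
  have hc := fun z : K => card_trace z q hqdef
  have hG : q^3 - q^2 ≤ (Fintype.card (SL2 K) : ℝ) := by
    rw [← sum_fib tr]; push_cast
    have : ∑ z : K, (q^2 - q) ≤ ∑ z : K, (Nat.card {g // tr g = z} : ℝ) := Finset.sum_le_sum fun z _ => (hc z).1
    rw [Finset.sum_const, Finset.card_univ, nsmul_eq_mul, ← hqdef] at this
    linarith
  have hT : (q^3 - q^2)^2 ≤ ∑ z : K, (Nat.card {x // tr (wordMap w K x) = z} : ℝ) := by
    have := sum_fib (fun x => tr (wordMap w K x))
    rw [← Nat.cast_sum, this, Fintype.card_prod]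
    push_cast
    rw [← sq]
    have : 0 ≤ q^3 - q^2 := by nlinarith [sq_nonneg q]
    gcongr
  have hM : ∀ z : K, (q-1)^2 * (Nat.card {x // tr (wordMap w K x) = z} : ℝ) ≤
      (Nat.card {v : Fin 8 → K // tr (wordMap w K (par8 v)) = z} : ℝ) := by
    intro z
    have h1 := fib_lower (par8 : (Fin 8 → K) → _) (fun x => tr (wordMap w K x)) _ par8_fib z
    have h3 : ((Fintype.card K - 1 : ℕ) : ℝ) = q - 1 := by
      rw [Nat.cast_sub Fintype.card_pos]; simp [hqdef]
    rw [← h3]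
    exact_mod_cast h1
  have hfin := dev_transfer _ _ q ε hqdef h2 hM hdev hT
  refine equi_abstract tr (wordMap w K) 2 (-2) q δ ε hqdef h2 hδ ?_ hε.le ?_ (fun z => (hc z).1) (fun z => (hc z).2) ?_ ?_
  · rw [div_le_iff₀ hδ] at h64
    rw [div_le_iff₀ hq0]; linarith
  · rw [hεdef]; apply le_of_eq; field_simp
  · intro g h hgh h2 h2'
    rw [fib_eq_comp w g h2 h2', fib_eq_comp w h (fun hh => h2 (hgh.trans hh)) (fun hh => h2' (hgh.trans hh))]
    change Nat.card {x // wordMap w K x = comp2 (tr g)} = Nat.card {x // wordMap w K x = comp2 (tr h)}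
    rw [hgh]
  · refine hfin.trans ?_
    have : 18 / q ≤ 18 * ε := by
      rw [div_le_iff₀ hε] at hqε
      rw [div_le_iff₀ hq0]; linarith
    have : 0 ≤ q^6 := by positivity
    gcongr
    linarith

theorem word_equi (w : FreeGroup (Fin 2)) (p : ℕ) [hp : Fact p.Prime]
    (hsurj : ∃ n₀ : ℕ, ∀ n ≥ n₀, ∀ g : SL2 (GaloisField p n),
        (Matrix.trace (g : Matrix (Fin 2) (Fin 2) (GaloisField p n)) ≠ 2 ∧
         Matrix.trace (g : Matrix (Fin 2) (Fin 2) (GaloisField p n)) ≠ -2) →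
        g ∈ Set.range (wordMap w (GaloisField p n))) (δ : ℝ) (hδ : 0 < δ) :
    ∀ᶠ n : ℕ in Filter.atTop, IsEquidistributed (wordMap w (GaloisField p n)) δ := by
  obtain ⟨n₀, hs⟩ := hsurj
  set ε : ℝ := δ^2 / (416 * 16) with hεdef
  have hε : 0 < ε := by positivity
  have hrange : ∀ᶠ n in Filter.atTop, Nat.card (GaloisField p n) ≤
      Nat.card (Set.range (fun y : Fin 8 → GaloisField p n => MvPolynomial.aeval y (genPoly p w))) + 2 := by
    filter_upwards [Filter.eventually_ge_atTop n₀] with n hn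
    have := Fintype.ofFinite (GaloisField p n)
    have hsub : (Finset.univ \ {2, -2} : Finset (GaloisField p n)) ⊆
        (Set.range (fun y : Fin 8 → GaloisField p n => MvPolynomial.aeval y (genPoly p w))).toFinset := by
      intro z hz
      simp only [Finset.mem_sdiff, Finset.mem_univ, true_and, Finset.mem_insert, Finset.mem_singleton, not_or] at hz
      rw [Set.mem_toFinset]
      have htr : Matrix.trace ((comp2 z : SL2 (GaloisField p n)) : Matrix (Fin 2) (Fin 2) (GaloisField p n)) = z := by
        rw [comp2_coe, Matrix.trace_fin_two]; simp
      obtain ⟨x, hx⟩ := hs n hn (comp2 z) (by rw [htr]; exact hz)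
      have h1 := par8_fib x
      have h2 : 0 < Nat.card {v : Fin 8 → GaloisField p n // par8 v = x} := by
        refine lt_of_lt_of_le ?_ h1
        have : 1 < Fintype.card (GaloisField p n) := Fintype.one_lt_card
        have : 0 < Fintype.card (GaloisField p n) - 1 := by omega
        positivity
      rw [Nat.card_pos_iff] at h2
      obtain ⟨⟨v, hv⟩⟩ := h2.1
      refine ⟨v, ?_⟩
      dsimp only
      rw [genPoly_eval, hv, hx, htr]
    have h1 := Finset.card_le_card hsub
    have h2 := Finset.le_card_sdiff ({2, -2} : Finset (GaloisField p n)) Finset.univ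
    have h3 := Finset.card_insert_le (2 : GaloisField p n) {-2}
    rw [Finset.card_singleton] at h3
    rw [Set.toFinset_card, ← Nat.card_eq_fintype_card] at h1
    rw [Nat.card_eq_fintype_card, ← Finset.card_univ]
    omega
  have hq : Filter.Tendsto (fun n : ℕ => (p:ℝ)^n) Filter.atTop Filter.atTop :=
    tendsto_pow_atTop_atTop_of_one_lt (by exact_mod_cast hp.out.one_lt)
  filter_upwards [poly_equi (genPoly p w) hrange ε hε, Filter.eventually_ge_atTop 1,
    hq.eventually_ge_atTop 2, hq.eventually_ge_atTop (64 / δ), hq.eventually_ge_atTop (1 / ε)] with n hn hn1 h2 h64 hqε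
  have := Fintype.ofFinite (GaloisField p n)
  have hcard : (p:ℝ)^n = (Fintype.card (GaloisField p n) : ℝ) := by
    rw [← Nat.card_eq_fintype_card, GaloisField.card p n (by omega)]; push_cast; rfl
  rw [hcard] at h2 h64 hqε
  set q : ℝ := (Fintype.card (GaloisField p n) : ℝ) with hqdef
  exact word_equi_K w (genPoly p w) (fun v => genPoly_eval w v) q δ ε hqdef h2 hδ h64 hε hεdef hqε hn

end Wd

section Diag
open Classical

/-- Sequence version for one predicate. -/
theorem diag_one (E : ℕ → ℝ → Prop) (h : ∀ δ : ℝ, 0 < δ → ∀ᶠ n in Filter.atTop, E n δ) :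
    ∃ e : ℕ → ℝ, Filter.Tendsto e Filter.atTop (nhds 0) ∧ (∀ n, 0 ≤ e n) ∧ ∀ᶠ n in Filter.atTop, E n (e n) := by
  have h' : ∀ k : ℕ, ∃ a, ∀ n ≥ a, E n (1 / ((k:ℝ) + 1)) := fun k =>
    Filter.eventually_atTop.1 (h _ (by positivity))
  choose a ha using h'
  let k : ℕ → ℕ := fun n => Nat.findGreatest (fun j => a j ≤ n) n
  refine ⟨fun n => 1 / ((k n : ℝ) + 1), ?_, fun n => by positivity, ?_⟩
  · apply tendsto_one_div_add_atTop_nhds_zero_nat.comp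
    rw [Filter.tendsto_atTop]
    intro j
    filter_upwards [Filter.eventually_ge_atTop (max j (a j))] with n hn
    exact Nat.le_findGreatest (le_trans (le_max_left _ _) hn) (le_trans (le_max_right _ _) hn)
  · filter_upwards [Filter.eventually_ge_atTop (a 0)] with n hn
    apply ha
    exact Nat.findGreatest_spec (P := fun j => a j ≤ n) (Nat.zero_le n) hn

theorem diag_all (E : ℕ → ℕ → ℝ → Prop)
    (h : ∀ p, p.Prime → ∀ δ : ℝ, 0 < δ → ∀ᶠ n in Filter.atTop, E p n δ) :
    ∃ ε : ℕ → ℝ, Filter.Tendsto ε Filter.atTop (nhds 0) ∧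
      ∀ p, p.Prime → ∀ᶠ n in Filter.atTop, E p n (ε (p^n)) := by
  have h1 : ∀ p, ∃ e : ℕ → ℝ, Filter.Tendsto e Filter.atTop (nhds 0) ∧ (∀ n, 0 ≤ e n) ∧
      (p.Prime → ∀ᶠ n in Filter.atTop, E p n (e n)) := by
    intro p
    by_cases hp : p.Prime
    · obtain ⟨e, a, b, c⟩ := diag_one (E p) (h p hp)
      exact ⟨e, a, b, fun _ => c⟩
    · exact ⟨fun _ => 0, tendsto_const_nhds, fun _ => le_rfl, fun hh => absurd hh hp⟩
  choose e he0 hepos heE using h1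
  have h2 : ∀ p : ℕ, ∃ T, ∀ n ≥ T, e p n ≤ 1 / ((p:ℝ) + 1) := fun p =>
    Filter.eventually_atTop.1 ((he0 p).eventually_le_const (by positivity))
  choose T hT using h2
  let ε : ℕ → ℝ := fun q => if q = q.minFac ^ (q.factorization q.minFac) ∧ T q.minFac ≤ q.factorization q.minFac
    then e q.minFac (q.factorization q.minFac) else 0
  have hval : ∀ p n, p.Prime → n ≠ 0 → ε (p^n) = if T p ≤ n then e p n else 0 := by
    intro p n hp hn
    have a1 : (p^n).minFac = p := by rw [hp.pow_minFac hn]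
    have a2 : (p^n).factorization p = n := by simp [hp.factorization_self]
    simp only [ε, a1, a2, true_and]
  refine ⟨ε, ?_, ?_⟩
  · rw [Metric.tendsto_atTop]
    intro η hη
    obtain ⟨B, hB⟩ := exists_nat_one_div_lt hη
    have h3 : ∀ p : ℕ, ∃ S, ∀ n ≥ S, e p n < η := fun p =>
      Filter.eventually_atTop.1 ((he0 p).eventually_lt_const hη)
    choose S hS using h3
    let m := (Finset.range (B+1)).sup S
    refine ⟨(B + 1)^(m+1) + 1, fun q hq => ?_⟩
    rw [Real.dist_eq, sub_zero]
    have key : ∀ q, q = q.minFac ^ (q.factorization q.minFac) → (B + 1)^(m+1) + 1 ≤ q → T q.minFac ≤ q.factorization q.minFac →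
        e q.minFac (q.factorization q.minFac) < η := by
      intro q hq1 hq hq2
      by_cases hp : q.minFac ≤ B
      · apply hS
        have hm : S q.minFac ≤ m := Finset.le_sup (f := S) (Finset.mem_range.2 (by omega))
        refine hm.trans ?_
        by_contra hcon
        push Not at hcon
        have : q ≤ (B+1)^(m+1) := by
          rw [hq1]
          calc _ ≤ (B+1)^(q.factorization q.minFac) := Nat.pow_le_pow_left (by omega) _
            _ ≤ _ := Nat.pow_le_pow_right (by omega) (by omega)
        omega
      · push Not at hp
        refine (hT _ _ hq2).trans_lt (lt_of_le_of_lt ?_ hB)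
        have : (B:ℝ) ≤ (q.minFac : ℝ) := by exact_mod_cast hp.le
        gcongr
    by_cases hc : q = q.minFac ^ (q.factorization q.minFac) ∧ T q.minFac ≤ q.factorization q.minFac
    · simp only [ε]
      rw [if_pos hc, abs_of_nonneg (hepos _ _)]
      exact key q hc.1 hq hc.2
    · simp only [ε]
      rw [if_neg hc, abs_zero]; exact hη
  · intro p hp
    filter_upwards [heE p hp, Filter.eventually_ge_atTop (T p), Filter.eventually_ge_atTop 1] with n h1 h2 h3
    rw [hval p n hp (by omega), if_pos h2]
    exact h1

end Diag

theorem equidistributed_of_image_contains_noncentral_semisimple (w : FreeGroup (Fin 2))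
    (hsurj : ∀ (p : ℕ) (hp : p.Prime),
      letI : Fact p.Prime := ⟨hp⟩
      ∃ n₀ : ℕ, ∀ n ≥ n₀, ∀ g : SL2 (GaloisField p n),
        (Matrix.trace (g : Matrix (Fin 2) (Fin 2) (GaloisField p n)) ≠ 2 ∧
         Matrix.trace (g : Matrix (Fin 2) (Fin 2) (GaloisField p n)) ≠ -2) →
        g ∈ Set.range (wordMap w (GaloisField p n))) :
    IsEquidistributedFamily w := by
  have h := diag_all (fun p n δ => ∃ hp : p.Prime,
    letI : Fact p.Prime := ⟨hp⟩
    IsEquidistributed (wordMap w (GaloisField p n)) δ) (by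
      intro p hp δ hδ
      haveI : Fact p.Prime := ⟨hp⟩
      filter_upwards [word_equi w p (hsurj p hp) δ hδ] with n hn
      exact ⟨hp, hn⟩)
  obtain ⟨ε, h0, h1⟩ := h
  refine ⟨ε, h0, fun p hp => ?_⟩
  filter_upwards [h1 p hp] with n hn
  exact hn.2
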